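/- arXiv:2507.14026 — 2 statements merged into one kernel-verified Lean document; each statement's English description precedes it below -/
import Mathlib

section
/- Let T ∈ B_{(1^r)}(n,m) be a single-column lexicographic bitableau, and let (P,Q') = bRSK(T) (so P is semistandard of some shape λ ⊢ r with entries in [m] and Q' is semistandard of shape λ' with entries in [n]). For 1 ≤ i ≤ m−1, define F_i^b(T): apply the i-bracketing rule to w(T); if some letter i is unmatched, change the second coordinate of the box corresponding to the rightmost unmatched i from i to i+1 and re-sort the multiset of pairs into a strictly increasing column; otherwise undefined. For 1 ≤ j ≤ n−1, define F_j^t(T) analogously via the j-bracketing of u'(T), changing the first coordinate of the selected box from j to j+1 and re-sorting. Let f_i denote the standard tableau lowering operator on semistandard Young tableaux (i-bracketing of the row reading word, rows bottom to top, left to right within rows; change the rightmost unmatched i to i+1). Then F_i^b(T) is defined iff f_i(P) is defined, in which case F_i^b(T) ∈ B_{(1^r)}(n,m) and bRSK(F_i^b(T)) = (f_i(P), Q'); and F_j^t(T) is defined iff f_j(Q') is defined, in which case bRSK(F_j^t(T)) = (P, f_j(Q')). (Thus bRSK is an isomorphism of gl_n×gl_m-crystals on single-column bitableaux.) -/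
/-- Lexicographic (weak) order on pairs: `(a,b) ≤ (a',b')` iff `a < a'`, or `a = a'` and `b ≤ b'`. -/
def lexLe (p q : ℕ × ℕ) : Prop := p.1 < q.1 ∨ (p.1 = q.1 ∧ p.2 ≤ q.2)

/-- Lexicographic strict order on pairs. -/
def lexLt (p q : ℕ × ℕ) : Prop := p.1 < q.1 ∨ (p.1 = q.1 ∧ p.2 < q.2)

instance : DecidableRel lexLe := fun p q =>
  inferInstanceAs (Decidable (p.1 < q.1 ∨ (p.1 = q.1 ∧ p.2 ≤ q.2)))

instance : DecidableRel lexLt := fun p q =>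
  inferInstanceAs (Decidable (p.1 < q.1 ∨ (p.1 = q.1 ∧ p.2 < q.2)))

/-- Row-insert the value `v` into the tableau `P` (a list of rows): `v` is appended at the end
of the first row if it is at least as large as every entry there; otherwise it replaces the
leftmost entry strictly larger than `v`, which is then inserted into the next row. -/
def insRow (v : ℕ) : List (List ℕ) → List (List ℕ)
  | [] => [[v]]
  | r :: rest =>
    match r.findIdx? (fun x => decide (v < x)) with
    | none => (r ++ [v]) :: rest
    | some idx => (r.set idx v) :: insRow (r.getD idx 0) rest

/-- The insertion tableau `P(w)` of a word: successively row-insert the letters of `w`,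
starting from the empty tableau. -/
def Pword (w : List ℕ) : List (List ℕ) :=
  w.foldl (fun t v => insRow v t) []

/-- The index of the row in which `p'` (the result of a row insertion into `p`) has one more
box than `p`. -/
def growIdx (p p' : List (List ℕ)) : ℕ :=
  (List.range p'.length).findIdx fun r => decide ((p.getD r []).length ≠ (p'.getD r []).length)

/-- Append the value `a` at the end of row `r` of the tableau `q`. -/
def addBox (q : List (List ℕ)) (r a : ℕ) : List (List ℕ) :=
  if r < q.length then q.set r (q.getD r [] ++ [a]) else q ++ [[a]]

/-- The RSK correspondence applied to a biword, given as a list of (top, bottom) pairs: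
the bottom entries are row-inserted in order to form the insertion tableau `P`, and the top
entries are recorded in the newly created boxes to form the recording tableau `Q`. -/
def rsk (w : List (ℕ × ℕ)) : List (List ℕ) × List (List ℕ) :=
  w.foldl (fun PQ ab =>
    let P' := insRow ab.2 PQ.1
    (P', addBox PQ.2 (growIdx PQ.1 P') ab.1)) ([], [])

/-- A word is Yamanouchi if for every `i ≥ 1`, every suffix contains at least as many letters
`i` as letters `i+1`. -/
def Yamanouchi (w : List ℕ) : Prop :=
  ∀ i : ℕ, 1 ≤ i → ∀ s ∈ w.tails, s.count (i + 1) ≤ s.count i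

/-- A one-row lexicographic bitableau in `B_{(r)}(n,m)`, encoded as its list of entries read
left to right: pairs in `{1,…,n} × {1,…,m}`, weakly increasing in lexicographic order. -/
def IsRowBitab (n m r : ℕ) (L : List (ℕ × ℕ)) : Prop :=
  L.length = r ∧ (∀ p ∈ L, (1 ≤ p.1 ∧ p.1 ≤ n) ∧ (1 ≤ p.2 ∧ p.2 ≤ m)) ∧ L.Chain' lexLe

/-- The sort-by-top reading word `w(T)` of a one-row bitableau: for `k = 1, …, n` in increasing
order, the second coordinates of the boxes with first coordinate `k`, read left to right. -/
def wRow (n : ℕ) (L : List (ℕ × ℕ)) : List ℕ :=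
  (List.range n).flatMap fun k => (L.filter fun p => decide (p.1 = k + 1)).map Prod.snd

/-- The reading word `u(T)` of a one-row bitableau: for `k = 1, …, m` in increasing order,
the first coordinates of the boxes with second coordinate `k`, read left to right. -/
def uRow (m : ℕ) (L : List (ℕ × ℕ)) : List ℕ :=
  (List.range m).flatMap fun k => (L.filter fun p => decide (p.2 = k + 1)).map Prod.fst

/-- A single-column lexicographic bitableau in `B_{(1^r)}(n,m)`, encoded as its list of entries
read top to bottom: pairs in `{1,…,n} × {1,…,m}`, strictly increasing in lexicographic order. -/
def IsColBitab (n m r : ℕ) (L : List (ℕ × ℕ)) : Prop :=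
  L.length = r ∧ (∀ p ∈ L, (1 ≤ p.1 ∧ p.1 ≤ n) ∧ (1 ≤ p.2 ∧ p.2 ≤ m)) ∧ L.Chain' lexLt

/-- The sort-by-top reading word `w(T)` of a single-column bitableau: for `k = 1, …, n` in
increasing order, the second coordinates of the boxes with first coordinate `k`, each group
read from the bottom of the column to the top. -/
def wCol (n : ℕ) (L : List (ℕ × ℕ)) : List ℕ :=
  (List.range n).flatMap fun k => ((L.filter fun p => decide (p.1 = k + 1)).reverse).map Prod.snd

/-- The reading word `u'(T)` of a single-column bitableau: for `k = m, m−1, …, 1` in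
decreasing order, the first coordinates of the boxes with second coordinate `k`, each group
read from the bottom of the column to the top. -/
def uCol' (m : ℕ) (L : List (ℕ × ℕ)) : List ℕ :=
  ((List.range m).reverse).flatMap fun k =>
    ((L.filter fun p => decide (p.2 = k + 1)).reverse).map Prod.fst

/-- The Burge word of a single-column bitableau: list the boxes grouped by first coordinate
`k = 1, …, n` in increasing order, within each group from the bottom of the column to the
top (so second coordinates strictly decrease within each group). -/
def burge (n : ℕ) (L : List (ℕ × ℕ)) : List (ℕ × ℕ) :=
  (List.range n).flatMap fun k => (L.filter fun p => decide (p.1 = k + 1)).reverse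

/-- The transpose of a tableau given as a list of rows: column `c` becomes row `c`. -/
def transposeT (q : List (List ℕ)) : List (List ℕ) :=
  (List.range (q.getD 0 []).length).map fun c => q.filterMap fun row => row[c]?

/-- The Burge insertion correspondence `bRSK` on a single-column bitableau: row-insert the
second coordinates of the Burge word in order to form `P`, record the first coordinates to
form the (row-strict) recording tableau `Q`, and output `(P, Qᵗ)`. -/
def bRSK (n : ℕ) (L : List (ℕ × ℕ)) : List (List ℕ) × List (List ℕ) :=
  ((rsk (burge n L)).1, transposeT (rsk (burge n L)).2)

/-- Under the `i`-bracketing rule (letter `i` becomes `)`, letter `i+1` becomes `(`, others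
ignored), the letter at position `p` of `w` is an unmatched `)` (letter `i`); equivalently,
every window of `w` ending at `p` contains strictly more letters `i` than letters `i+1`. -/
def unmatchedClose (w : List ℕ) (i p : ℕ) : Bool :=
  decide (p < w.length) && decide (w.getD p 0 = i) &&
    (List.range (p + 1)).all fun q =>
      decide (((w.drop q).take (p + 1 - q)).count (i + 1) < ((w.drop q).take (p + 1 - q)).count i)

/-- The position of the rightmost unmatched letter `i` of `w` under the `i`-bracketing rule,
if there is one. -/
def rightUnmatched (w : List ℕ) (i : ℕ) : Option ℕ :=
  (List.range w.length).reverse.find? (unmatchedClose w i)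

/-- Sort a list of pairs into lexicographically weakly increasing order. -/
def sortLex (L : List (ℕ × ℕ)) : List (ℕ × ℕ) := L.insertionSort lexLe

/-- The row reading word of a tableau (a list of rows): rows are read bottom to top, left to
right within each row. -/
def rowWord (P : List (List ℕ)) : List ℕ := P.reverse.flatMap id

/-- The boxes `(row, column)` of a tableau in row reading order (bottom to top, left to right
within each row). -/
def rowWordBoxes (P : List (List ℕ)) : List (ℕ × ℕ) :=
  (List.range P.length).reverse.flatMap fun r =>
    (List.range (P.getD r []).length).map fun c => (r, c)

/-- The standard lowering operator `f_i` on semistandard Young tableaux: apply the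
`i`-bracketing rule to the row reading word; if some letter `i` is unmatched, change the
rightmost unmatched `i` into `i+1` (in its box); otherwise undefined. -/
def fLower (i : ℕ) (P : List (List ℕ)) : Option (List (List ℕ)) :=
  match rightUnmatched (rowWord P) i with
  | none => none
  | some p =>
    let rc := (rowWordBoxes P).getD p (0, 0)
    some (P.set rc.1 ((P.getD rc.1 []).set rc.2 (i + 1)))

/-- Positions (indices into `L`) of the boxes of a single-column bitableau in the reading
order of `w(T)`. -/
def wColIdx (n : ℕ) (L : List (ℕ × ℕ)) : List ℕ :=
  (List.range n).flatMap fun k =>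
    ((List.range L.length).filter fun t => decide ((L.getD t (0, 0)).1 = k + 1)).reverse

/-- Positions (indices into `L`) of the boxes of a single-column bitableau in the reading
order of `u'(T)`. -/
def uColIdx' (m : ℕ) (L : List (ℕ × ℕ)) : List ℕ :=
  ((List.range m).reverse).flatMap fun k =>
    ((List.range L.length).filter fun t => decide ((L.getD t (0, 0)).2 = k + 1)).reverse

/-- The bottom lowering operator `F_i^b` on single-column bitableaux: apply the `i`-bracketing
rule to `w(T)`; if some letter `i` is unmatched, change the second coordinate of the box
corresponding to the rightmost unmatched `i` from `i` to `i+1` and re-sort the entries into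
a (strictly increasing) column; otherwise undefined. -/
def FbotCol (n i : ℕ) (L : List (ℕ × ℕ)) : Option (List (ℕ × ℕ)) :=
  match rightUnmatched (wCol n L) i with
  | none => none
  | some p =>
    let t := (wColIdx n L).getD p 0
    some (sortLex (L.set t ((L.getD t (0, 0)).1, i + 1)))

/-- The top lowering operator `F_j^t` on single-column bitableaux: apply the `j`-bracketing
rule to `u'(T)`; if some letter `j` is unmatched, change the first coordinate of the box
corresponding to the rightmost unmatched `j` from `j` to `j+1` and re-sort the entries into
a (strictly increasing) column; otherwise undefined. -/
def FtopCol (m j : ℕ) (L : List (ℕ × ℕ)) : Option (List (ℕ × ℕ)) :=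
  match rightUnmatched (uCol' m L) j with
  | none => none
  | some p =>
    let t := (uColIdx' m L).getD p 0
    some (sortLex (L.set t (j + 1, (L.getD t (0, 0)).2)))


namespace Crys

/-- number of unmatched `i+1` (open brackets), starting from `e` of them -/
def st (i : ℕ) : ℕ → List ℕ → ℕ
  | e, [] => e
  | e, x :: w => st i (if x = i + 1 then e + 1 else if x = i then e - 1 else e) w

/-- lowering operator on words, in the context of `e` open brackets on the left -/
def fw (i : ℕ) : ℕ → List ℕ → Option (List ℕ)
  | _, [] => none
  | e, x :: w =>
    match fw i (if x = i + 1 then e + 1 else if x = i then e - 1 else e) w with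
    | some w' => some (x :: w')
    | none => if x = i ∧ e = 0 then some ((i + 1) :: w) else none

theorem st_append (i e : ℕ) (u v : List ℕ) : st i e (u ++ v) = st i (st i e u) v := by
  induction u generalizing e with
  | nil => rfl
  | cons x u ih => simp [st, ih]

theorem fw_append (i e : ℕ) (u v : List ℕ) : fw i e (u ++ v) =
    match fw i (st i e u) v with
    | some v' => some (u ++ v')
    | none => (fw i e u).map (· ++ v) := by
  induction u generalizing e with
  | nil => simp [st, fw]; cases fw i e v <;> rfl
  | cons x u ih =>
    simp only [List.cons_append, fw, ih, st]
    generalize hs : (if x = i + 1 then e + 1 else if x = i then e - 1 else e) = s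
    cases fw i (st i s u) v with
    | some v' => simp
    | none =>
      cases fw i s u with
      | some u' => simp
      | none => simp

theorem fw_append_some {i e : ℕ} {u v v' : List ℕ} (h : fw i (st i e u) v = some v') :
    fw i e (u ++ v) = some (u ++ v') := by rw [fw_append, h]

theorem fw_append_none {i e : ℕ} {u v : List ℕ} (h : fw i (st i e u) v = none) :
    fw i e (u ++ v) = (fw i e u).map (· ++ v) := by rw [fw_append, h]

theorem fw_length {i e : ℕ} {w w' : List ℕ} (h : fw i e w = some w') : w'.length = w.length := by
  induction w generalizing e w' with
  | nil => simp [fw] at h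
  | cons x w ih =>
    simp only [fw] at h
    split at h
    · rename_i v hv
      simp at h; subst h; simp [ih hv]
    · split at h
      · simp at h; subst h; simp
      · simp at h

/-- decomposition at the changed letter -/
theorem fw_decomp {i e : ℕ} {w w' : List ℕ} (h : fw i e w = some w') :
    ∃ w1 w2, w = w1 ++ i :: w2 ∧ w' = w1 ++ (i + 1) :: w2 ∧ st i e w1 = 0 ∧ fw i 0 w2 = none := by
  induction w generalizing e w' with
  | nil => simp [fw] at h
  | cons x w ih =>
    simp only [fw] at h
    split at h
    · rename_i v hv
      simp at h; subst h
      obtain ⟨w1, w2, h1, h2, h3, h4⟩ := ih hv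
      exact ⟨x :: w1, w2, by simp [h1], by simp [h2], by simpa [st] using h3, h4⟩
    · rename_i hn
      split at h
      · rename_i hx
        simp at h; subst h
        obtain ⟨rfl, rfl⟩ := hx
        refine ⟨[], w, rfl, rfl, rfl, ?_⟩
        simpa using hn
      · simp at h

theorem fw_comp {i e : ℕ} {w1 w2 : List ℕ} (h1 : st i e w1 = 0) (h2 : fw i 0 w2 = none) :
    fw i e (w1 ++ i :: w2) = some (w1 ++ (i + 1) :: w2) := by
  apply fw_append_some
  simp [h1, fw, h2]

theorem le_st (i : ℕ) (w : List ℕ) : ∀ e, e + w.count (i + 1) ≤ st i e w + w.count i := by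
  induction w with
  | nil => intro e; simp [st]
  | cons x w ih =>
    intro e
    simp only [st, List.count_cons]
    have := ih (if x = i + 1 then e + 1 else if x = i then e - 1 else e)
    by_cases h1 : x = i + 1
    · subst h1
      simp at this ⊢; omega
    · by_cases h2 : x = i
      · subst h2
        simp at this ⊢; omega
      · simp [h1, h2] at this ⊢; omega

/-- if nothing is left open then every suffix has at least as many `i` as `i+1` -/
theorem st_zero_suffix {i e : ℕ} {u v : List ℕ} (h : st i e (u ++ v) = 0) :
    v.count (i + 1) ≤ v.count i := by
  rw [st_append] at h
  have := le_st i v (st i e u)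
  omega

theorem st_le (i : ℕ) (w : List ℕ) : ∀ e, fw i e w = none → st i e w + w.count i = e + w.count (i + 1) := by
  induction w with
  | nil => intro e; simp [st]
  | cons x w ih =>
    intro e h
    simp only [fw] at h
    split at h
    · simp at h
    · rename_i hn
      have := ih _ hn
      simp only [st, List.count_cons]
      by_cases h1 : x = i + 1
      · subst h1
        simp at this ⊢; omega
      · by_cases h2 : x = i
        · subst h2
          simp at this h ⊢; omega
        · simp [h1, h2] at this ⊢; omega

theorem fw_none_left {i e : ℕ} {u v : List ℕ} (h : fw i e (u ++ v) = none) : fw i e u = none := by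
  rw [fw_append] at h
  split at h
  · simp at h
  · simpa using h

theorem fw_none_right {i e : ℕ} {u v : List ℕ} (h : fw i e (u ++ v) = none) :
    fw i (st i e u) v = none := by
  rw [fw_append] at h
  split at h
  · simp at h
  · assumption

/-- if no `i` is unmatched then each initial segment has at least as many `i+1` as `i` -/
theorem fw_none_prefix {i : ℕ} {u v : List ℕ} (h : fw i 0 (u ++ v) = none) :
    u.count i ≤ u.count (i + 1) := by
  have := st_le i u 0 (fw_none_left h)
  omega

/-! ### connection with `rightUnmatched` -/

theorem st_le_iff (i k : ℕ) (w : List ℕ) :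
    st i 0 w ≤ k ↔ ∀ q, (w.drop q).count (i + 1) ≤ (w.drop q).count i + k := by
  induction w using List.reverseRecOn generalizing k with
  | nil => simp [st]
  | append_singleton w x ih =>
    have key : ∀ q, q ≤ w.length → (w ++ [x]).drop q = w.drop q ++ [x] := by
      intro q hq; rw [List.drop_append_of_le_length hq]
    have key2 : ∀ q, w.length < q → (w ++ [x]).drop q = [] := by
      intro q hq; apply List.drop_eq_nil_of_le; simp; omega
    have key3 : ∀ q, w.length < q → w.drop q = [] := by
      intro q hq; apply List.drop_eq_nil_of_le;  omega
    rw [st_append]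
    simp only [st]
    by_cases h1 : x = i + 1
    · subst h1
      simp only [if_true]
      constructor
      · intro h q
        have h2 : st i 0 w ≤ k - 1 := by omega
        rw [ih] at h2
        rcases Nat.lt_or_ge w.length q with hq | hq
        · simp [key2 q hq]
        · rw [key q hq]; have := h2 q; simp; omega
      · intro h
        have h0 := h w.length
        rw [key _ le_rfl] at h0
        simp at h0
        have : st i 0 w ≤ k - 1 := by
          rw [ih]; intro q
          rcases Nat.lt_or_ge w.length q with hq | hq
          · simp [key3 q hq]
          · have := h q; rw [key q hq] at this; simp at this; omega
        omega
    · by_cases h2 : x = i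
      · subst h2
        simp only [h1, if_false, if_true]
        rw [Nat.sub_le_iff_le_add, ih]
        constructor
        · intro h q
          rcases Nat.lt_or_ge w.length q with hq | hq
          · simp [key2 q hq]
          · rw [key q hq]; have := h q; simp; omega
        · intro h q
          rcases Nat.lt_or_ge w.length q with hq | hq
          · simp [key3 q hq]
          · have := h q; rw [key q hq] at this; simp at this; omega
      · simp only [h1, h2, if_false]
        rw [ih]
        apply forall_congr'
        intro q
        rcases Nat.lt_or_ge w.length q with hq | hq
        · simp [key2 q hq, key3 q hq]
        · rw [key q hq]; simp [List.count_cons, h1, h2]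

theorem unmatchedClose_append {w : List ℕ} {i p x : ℕ} (hp : p < w.length) :
    unmatchedClose (w ++ [x]) i p = unmatchedClose w i p := by
  unfold unmatchedClose
  have h1 : (w ++ [x]).getD p 0 = w.getD p 0 := by
    simp [List.getElem?_append_left hp]
  rw [h1]
  congr 1
  · congr 1
    simp; omega
  · rw [Bool.eq_iff_iff]
    simp only [List.all_eq_true, List.mem_range]
    apply forall_congr'; intro q
    apply imp_congr_right
    intro hq
    have : ((w ++ [x]).drop q).take (p + 1 - q) = (w.drop q).take (p + 1 - q) := by
      rw [List.drop_append_of_le_length (by omega), List.take_append_of_le_length]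
      simp; omega
    rw [this]

theorem unmatchedClose_last (w : List ℕ) (i x : ℕ) :
    unmatchedClose (w ++ [x]) i w.length = true ↔ x = i ∧ st i 0 w = 0 := by
  unfold unmatchedClose
  simp only [Bool.and_eq_true, decide_eq_true_eq, List.all_eq_true, List.mem_range]
  have h1 : (w ++ [x]).getD w.length 0 = x := by simp
  rw [h1, ← Nat.le_zero, st_le_iff]
  constructor
  · rintro ⟨⟨_, rfl⟩, h⟩
    refine ⟨rfl, fun q => ?_⟩
    rcases Nat.lt_or_ge w.length q with hq | hq
    · rw [List.drop_eq_nil_of_le (by omega)]; simp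
    · have := h q (by omega)
      rw [List.drop_append_of_le_length hq, List.take_of_length_le (by simp; omega)] at this
      simp at this; omega
  · rintro ⟨rfl, h⟩
    refine ⟨⟨by simp, rfl⟩, fun q hq => ?_⟩
    rw [List.drop_append_of_le_length (by omega), List.take_of_length_le (by simp; omega)]
    have := h q
    simp; omega

theorem rightUnmatched_append (w : List ℕ) (i x : ℕ) :
    rightUnmatched (w ++ [x]) i =
      if x = i ∧ st i 0 w = 0 then some w.length else rightUnmatched w i := by
  unfold rightUnmatched
  rw [List.length_append, List.length_singleton, List.range_succ, List.reverse_append]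
  simp only [List.reverse_singleton, List.singleton_append, List.find?_cons]
  split
  · rename_i h
    rw [unmatchedClose_last] at h
    simp [h]
  · rename_i h
    have h' : ¬ (x = i ∧ st i 0 w = 0) := by
      rw [← unmatchedClose_last]; simp [h]
    rw [if_neg h']
    have : ∀ l : List ℕ, (∀ p ∈ l, p < w.length) →
        l.find? (unmatchedClose (w ++ [x]) i) = l.find? (unmatchedClose w i) := by
      intro l hl
      induction l with
      | nil => rfl
      | cons p l ih =>
        simp only [List.find?_cons]
        rw [unmatchedClose_append (hl p (by simp)), ih (fun q hq => hl q (by simp [hq]))]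
    apply this
    intro p hp
    simpa using hp

/-- `rightUnmatched` computes the lowering operator on words. -/
theorem fw_eq_rightUnmatched (w : List ℕ) (i : ℕ) :
    fw i 0 w = (rightUnmatched w i).map (fun p => w.set p (i + 1)) ∧
    ∀ p, rightUnmatched w i = some p → p < w.length ∧ w[p]? = some i ∧
      st i 0 (w.take p) = 0 ∧ fw i 0 (w.drop (p + 1)) = none := by
  induction w using List.reverseRecOn with
  | nil => simp [fw, rightUnmatched]
  | append_singleton w x ih =>
    rw [rightUnmatched_append]
    split_ifs with h
    · obtain ⟨rfl, h⟩ := h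
      constructor
      · rw [fw_append_some (v' := [x + 1])]
        · simp
        · simp [fw, h]
      · intro p hp
        simp at hp; subst hp
        simp [h, fw]
    · have hfn : fw i (st i 0 w) [x] = none := by simpa [fw] using h
      constructor
      · rw [fw_append_none hfn, ih.1]
        cases hr : rightUnmatched w i with
        | none => simp
        | some p =>
          have := (ih.2 p hr).1
          simp [List.set_append_left _ _ this]
      · intro p hp
        obtain ⟨h1, h2, h3, h4⟩ := ih.2 p hp
        refine ⟨by simp; omega, by rw [List.getElem?_append_left h1]; exact h2, ?_, ?_⟩
        · rwa [List.take_append_of_le_length h1.le]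
        · rw [List.drop_append_of_le_length h1]
          have hw : w = w.take p ++ i :: w.drop (p + 1) := by
            conv_lhs => rw [← List.take_append_drop p w]
            congr 1
            rw [List.drop_eq_getElem_cons h1]
            congr 1
            rw [List.getElem?_eq_getElem h1] at h2
            simpa using h2
          have hst : st i 0 (w.drop (p + 1)) = st i 0 w := by
            conv_rhs => rw [hw, st_append, h3]
            simp [st]
          rw [fw_append, hst, hfn, h4]
          rfl

end Crys


namespace Crys

/-- insertion into one row: new row and bumped letters (at most one) -/
def rins : List ℕ → ℕ → List ℕ × List ℕ
  | [], v => ([v], [])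
  | r :: R, v => if v < r then (v :: R, [r]) else (r :: (rins R v).1, (rins R v).2)

/-- insertion of a word into one row: new row and bumped word -/
def wins : List ℕ → List ℕ → List ℕ × List ℕ
  | R, [] => (R, [])
  | R, v :: w => ((wins (rins R v).1 w).1, (rins R v).2 ++ (wins (rins R v).1 w).2)

theorem insRow_cons (v : ℕ) (R : List ℕ) (rest : List (List ℕ)) :
    insRow v (R :: rest) = (rins R v).1 :: ((rins R v).2.foldl (fun t v => insRow v t) rest) := by
  have key : ∀ R : List ℕ, (match R.findIdx? (fun x => decide (v < x)) with
      | none => rins R v = (R ++ [v], [])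
      | some idx => rins R v = (R.set idx v, [R.getD idx 0])) := by
    intro R
    induction R with
    | nil => simp [rins]
    | cons r R ih =>
      rw [List.findIdx?_cons]
      by_cases h : v < r
      · simp [h, rins]
      · simp only [h, decide_false, Bool.false_eq_true, if_false, rins]
        cases hh : R.findIdx? (fun x => decide (v < x)) with
        | none => rw [hh] at ih; simp only at ih; simp [ih]
        | some k => rw [hh] at ih; simp only at ih; simp [ih]
  have := key R
  simp only [insRow]
  cases hh : R.findIdx? (fun x => decide (v < x)) with
  | none => rw [hh] at this; simp only at this; simp [this]
  | some k => rw [hh] at this; simp only at this; simp [this]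

theorem foldl_insRow (w : List ℕ) : ∀ (R : List ℕ) (rest : List (List ℕ)),
    w.foldl (fun t v => insRow v t) (R :: rest) =
      (wins R w).1 :: ((wins R w).2.foldl (fun t v => insRow v t) rest) := by
  induction w with
  | nil => intro R rest; simp [wins]
  | cons v w ih =>
    intro R rest
    simp only [List.foldl_cons, insRow_cons, ih, wins, List.foldl_append]

theorem Pword_nil : Pword [] = [] := rfl

theorem Pword_cons (v : ℕ) (w : List ℕ) :
    Pword (v :: w) = (wins [] (v :: w)).1 :: Pword (wins [] (v :: w)).2 := by
  unfold Pword
  rw [← foldl_insRow]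
  simp only [List.foldl_cons]
  congr 1

theorem Pword_ne {w : List ℕ} (h : w ≠ []) :
    Pword w = (wins [] w).1 :: Pword (wins [] w).2 := by
  cases w with
  | nil => exact absurd rfl h
  | cons v w => exact Pword_cons v w

theorem rins_length (R : List ℕ) (v : ℕ) :
    (rins R v).1.length + (rins R v).2.length = R.length + 1 := by
  induction R with
  | nil => simp [rins]
  | cons r R ih => simp only [rins]; split_ifs <;> simp <;> omega

theorem wins_length (w : List ℕ) : ∀ R : List ℕ,
    (wins R w).1.length + (wins R w).2.length = R.length + w.length := by
  induction w with
  | nil => intro R; simp [wins]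
  | cons v w ih =>
    intro R
    have := ih (rins R v).1
    have := rins_length R v
    simp [wins]; omega

theorem rins_pos (R : List ℕ) (v : ℕ) : 1 ≤ (rins R v).1.length ∧ R.length ≤ (rins R v).1.length := by
  induction R with
  | nil => simp [rins]
  | cons r R ih => simp only [rins]; split_ifs <;> simp; omega

theorem wins_mono (w : List ℕ) : ∀ R : List ℕ, R.length ≤ (wins R w).1.length := by
  induction w with
  | nil => intro R; simp [wins]
  | cons v w ih =>
    intro R
    have := ih (rins R v).1
    have := rins_pos R v
    simp [wins]; omega

theorem wins_lt {w : List ℕ} (h : w ≠ []) : (wins [] w).2.length < w.length := by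
  cases w with
  | nil => exact absurd rfl h
  | cons v w =>
    have h1 := wins_length w [v]
    have h2 := wins_mono w [v]
    simp [wins, rins] at *; omega

theorem wins_append (u v : List ℕ) : ∀ R : List ℕ,
    wins R (u ++ v) = ((wins (wins R u).1 v).1, (wins R u).2 ++ (wins (wins R u).1 v).2) := by
  induction u with
  | nil => intro R; simp [wins]
  | cons x u ih => intro R; simp [wins, ih]

theorem mem_rins {R : List ℕ} {v x : ℕ} (h : x ∈ (rins R v).1) : x = v ∨ x ∈ R := by
  induction R with
  | nil => simp [rins] at h; simp [h]
  | cons r R ih =>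
    simp only [rins] at h
    split_ifs at h <;> simp at h <;> grind

theorem mem_rins_bump {R : List ℕ} {v x : ℕ} (h : x ∈ (rins R v).2) : v < x ∧ x ∈ R := by
  induction R with
  | nil => simp [rins] at h
  | cons r R ih =>
    simp only [rins] at h
    split_ifs at h <;> simp at h <;> grind

theorem self_mem_rins (R : List ℕ) (v : ℕ) : v ∈ (rins R v).1 := by
  induction R with
  | nil => simp [rins]
  | cons r R ih => simp only [rins]; split_ifs <;> simp [ih]

theorem rins_sorted {R : List ℕ} (h : R.Pairwise (· ≤ ·)) (v : ℕ) :
    (rins R v).1.Pairwise (· ≤ ·) := by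
  induction R with
  | nil => simp [rins]
  | cons r R ih =>
    simp only [rins]
    rw [List.pairwise_cons] at h
    split_ifs with hv
    · simp only [List.pairwise_cons]; exact ⟨fun a ha => (hv.le.trans (h.1 a ha)), h.2⟩
    · simp only [List.pairwise_cons]
      refine ⟨fun a ha => ?_, ih h.2⟩
      rcases mem_rins ha with rfl | ha
      · omega
      · exact h.1 a ha

theorem wins_sorted {w : List ℕ} : ∀ {R : List ℕ}, R.Pairwise (· ≤ ·) →
    (wins R w).1.Pairwise (· ≤ ·) := by
  induction w with
  | nil => intro R h; simpa [wins] using h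
  | cons v w ih => intro R h; exact ih (rins_sorted h v)

theorem rins_bump (R : List ℕ) (v : ℕ) : (rins R v).2 = [] ∨ ∃ b, (rins R v).2 = [b] := by
  induction R with
  | nil => simp [rins]
  | cons r R ih => simp only [rins]; split_ifs <;> simp [ih]

theorem rins_bump_le {R : List ℕ} (h : R.Pairwise (· ≤ ·)) {v z : ℕ} (hz : z ∈ R) (hv : v < z) :
    ∃ b, (rins R v).2 = [b] ∧ b ≤ z := by
  induction R with
  | nil => simp at hz
  | cons r R ih =>
    rw [List.pairwise_cons] at h
    simp only [rins]
    split_ifs with h1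
    · refine ⟨r, rfl, ?_⟩
      simp at hz
      rcases hz with rfl | hz
      · rfl
      · exact h.1 z hz
    · simp at hz
      rcases hz with rfl | hz
      · omega
      · exact ih h.2 hz

theorem rins_rins_le {R : List ℕ} (h : R.Pairwise (· ≤ ·)) {y z : ℕ} (hyz : y ≤ z) :
    (rins (rins R y).1 z).2 = [] ∨ ∃ y' z', (rins R y).2 = [y'] ∧
      (rins (rins R y).1 z).2 = [z'] ∧ y' ≤ z' := by
  induction R with
  | nil => left; simp [rins, not_lt.mpr hyz]
  | cons r R ih =>
    rw [List.pairwise_cons] at h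
    simp only [rins]
    split_ifs with h1
    · simp only [rins, not_lt.mpr hyz, if_false]
      rcases rins_bump R z with hb | ⟨b, hb⟩
      · left; exact hb
      · right
        refine ⟨r, b, rfl, hb, h.1 b ?_⟩
        exact (mem_rins_bump (v := z) (by rw [hb]; simp)).2
    · have : ¬ z < r := by omega
      simp only [rins, this, if_false]
      exact ih h.2

/-- elementary Knuth relations -/
inductive K3 : List ℕ → List ℕ → Prop
  | a {x y z : ℕ} : x < y → y ≤ z → K3 [y, x, z] [y, z, x]
  | b {x y z : ℕ} : x ≤ y → y < z → K3 [x, z, y] [z, x, y]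

theorem wins_K3 {a b : List ℕ} (hab : K3 a b) {R : List ℕ} (hR : R.Pairwise (· ≤ ·)) :
    (wins R a).1 = (wins R b).1 ∧
      ((wins R a).2 = (wins R b).2 ∨ K3 (wins R a).2 (wins R b).2 ∨
        K3 (wins R b).2 (wins R a).2) := by
  cases hab with
  | @a x y z hxy hyz =>
    simp only [wins, List.append_nil]
    induction R with
    | nil =>
      simp [rins, hxy, not_lt.mpr hyz, not_lt.mpr (hxy.le.trans hyz)]
    | cons r R ih =>
      rw [List.pairwise_cons] at hR
      by_cases hx : x < r
      · by_cases hy : y < r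
        · -- y < r
          have e1 : rins (r :: R) y = (y :: R, [r]) := by simp [rins, hy]
          have e2 : rins (y :: R) x = (x :: R, [y]) := by simp [rins, hxy]
          have e3 : rins (x :: R) z = (x :: (rins R z).1, (rins R z).2) := by
            simp [rins]; omega
          have e4 : rins (y :: R) z = (y :: (rins R z).1, (rins R z).2) := by
            simp [rins]; omega
          have e5 : rins (y :: (rins R z).1) x = (x :: (rins R z).1, [y]) := by simp [rins, hxy]
          simp only [e1, e2, e3, e4, e5, true_and]
          rcases rins_bump R z with hb | ⟨b, hb⟩
          · left; simp [hb]
          · right; left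
            rw [hb]
            have := (mem_rins_bump (v := z) (x := b) (R := R) (by rw [hb]; simp)).2
            exact K3.a hy (hR.1 b this)
        · have e1 : rins (r :: R) y = (r :: (rins R y).1, (rins R y).2) := by simp [rins, hy]
          have e2 : ∀ R', rins (r :: R') x = (x :: R', [r]) := by intro R'; simp [rins, hx]
          have e3 : ∀ R', rins (x :: R') z = (x :: (rins R' z).1, (rins R' z).2) := by
            intro R'; simp [rins]; omega
          have e4 : ∀ R', rins (r :: R') z = (r :: (rins R' z).1, (rins R' z).2) := by
            intro R'; simp [rins]; omega
          simp only [e1, e2, e3, e4, true_and]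
          rcases rins_rins_le hR.2 hyz with hb | ⟨y', z', h1, h2, h3⟩
          · left; simp [hb]
          · right; left
            rw [h1, h2]
            have := (mem_rins_bump (v := y) (x := y') (R := R) (by rw [h1]; simp)).1
            exact K3.a (by omega) h3
      · have e : ∀ R' t, x ≤ t → rins (r :: R') t = (r :: (rins R' t).1, (rins R' t).2) := by
          intro R' t ht; simp [rins]; omega
        have ey := fun R' => e R' y (by omega)
        have ez := fun R' => e R' z (by omega)
        have ex := fun R' => e R' x (by omega)
        simp only [ex, ey, ez]
        obtain ⟨i1, i2⟩ := ih hR.2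
        exact ⟨by simp only [i1], i2⟩
  | @b x y z hxy hyz =>
    simp only [wins, List.append_nil]
    induction R with
    | nil =>
      simp [rins, hyz, not_lt.mpr hxy, (hxy.trans_lt hyz), not_lt.mpr (hxy.trans hyz.le)]
    | cons r R ih =>
      rw [List.pairwise_cons] at hR
      by_cases hx : x < r
      · have e1 : ∀ R', rins (r :: R') x = (x :: R', [r]) := by intro R'; simp [rins, hx]
        have e2 : ∀ R', rins (x :: R') z = (x :: (rins R' z).1, (rins R' z).2) := by
          intro R'; simp [rins]; omega
        have e3 : ∀ R', rins (x :: R') y = (x :: (rins R' y).1, (rins R' y).2) := by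
          intro R'; simp [rins]; omega
        by_cases hz : z < r
        · have e4 : rins (r :: R) z = (z :: R, [r]) := by simp [rins, hz]
          have e5 : rins (z :: R) x = (x :: R, [z]) := by simp [rins]; omega
          simp only [e1, e2, e3, e4, e5]
          cases R with
          | nil => simp [rins, hyz]
          | cons h R =>
            have hh : r ≤ h := hR.1 h (by simp)
            have e6 : rins (h :: R) z = (z :: R, [h]) := by simp [rins]; omega
            have e7 : rins (h :: R) y = (y :: R, [h]) := by simp [rins]; omega
            have e8 : rins (z :: R) y = (y :: R, [z]) := by simp [rins]; omega
            simp only [e6, e7, e8, true_and]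
            right; right
            exact K3.a hz hh
        · have e4 : rins (r :: R) z = (r :: (rins R z).1, (rins R z).2) := by simp [rins, hz]
          simp only [e1, e2, e3, e4, true_and]
          rcases rins_bump R z with hb | ⟨b, hb⟩
          · left; simp [hb]
          · right; left
            obtain ⟨c, hc, hcz⟩ := rins_bump_le (rins_sorted hR.2 z) (self_mem_rins R z) hyz
            rw [hb, hc]
            have h1 := (mem_rins_bump (v := z) (x := b) (R := R) (by rw [hb]; simp)).1
            have h2 := (mem_rins_bump (v := y) (x := c) (R := (rins R z).1) (by rw [hc]; simp)).2
            have h3 : r ≤ c := by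
              rcases mem_rins h2 with rfl | h2
              · omega
              · exact hR.1 c h2
            exact K3.b h3 (by omega)
      · have e : ∀ R' t, x ≤ t → rins (r :: R') t = (r :: (rins R' t).1, (rins R' t).2) := by
          intro R' t ht; simp [rins]; omega
        have ey := fun R' => e R' y (by omega)
        have ez := fun R' => e R' z (by omega)
        have ex := fun R' => e R' x (by omega)
        simp only [ex, ey, ez]
        obtain ⟨i1, i2⟩ := ih hR.2
        exact ⟨by simp only [i1], i2⟩

/-- one Knuth step in a word -/
inductive KS : List ℕ → List ℕ → Prop
  | mk (u v : List ℕ) {a b : List ℕ} : K3 a b → KS (u ++ a ++ v) (u ++ b ++ v)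

/-- Knuth equivalence -/
def Keq : List ℕ → List ℕ → Prop := Relation.EqvGen KS

theorem Keq.refl (a : List ℕ) : Keq a a := Relation.EqvGen.refl a
theorem Keq.symm {a b : List ℕ} (h : Keq a b) : Keq b a := Relation.EqvGen.symm _ _ h
theorem Keq.trans {a b c : List ℕ} (h : Keq a b) (h' : Keq b c) : Keq a c :=
  Relation.EqvGen.trans _ _ _ h h'

theorem Keq.congr {a b : List ℕ} (h : Keq a b) (u v : List ℕ) :
    Keq (u ++ a ++ v) (u ++ b ++ v) := by
  induction h with
  | rel a b h =>
    cases h with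
    | mk u' v' h =>
      have := KS.mk (u ++ u') (v' ++ v) h
      apply Relation.EqvGen.rel
      simpa using this
  | refl a => exact Keq.refl _
  | symm a b _ ih => exact ih.symm
  | trans a b c _ _ ih1 ih2 => exact ih1.trans ih2

theorem Keq.left {a b : List ℕ} (h : Keq a b) (u : List ℕ) : Keq (u ++ a) (u ++ b) := by
  simpa using h.congr u []

theorem Keq.right {a b : List ℕ} (h : Keq a b) (v : List ℕ) : Keq (a ++ v) (b ++ v) := by
  simpa using h.congr [] v

theorem K3.keq {a b : List ℕ} (h : K3 a b) : Keq a b :=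
  Relation.EqvGen.rel _ _ (by simpa using KS.mk [] [] h)

theorem K3.ne {a b : List ℕ} (h : K3 a b) : a ≠ [] ∧ b ≠ [] := by cases h <;> simp

theorem Pword_KS (N : ℕ) : ∀ {a b : List ℕ}, a.length ≤ N → KS a b → Pword a = Pword b := by
  induction N with
  | zero =>
    intro a b ha h
    cases h with
    | mk u v h => have := h.ne.1; simp at ha; grind
  | succ N ih =>
    intro a b ha h
    cases h with
    | @mk u v a b h =>
      have h1 : u ++ a ++ v ≠ [] := by have := h.ne.1; simp [this]
      have h2 : u ++ b ++ v ≠ [] := by have := h.ne.2; simp [this]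
      have h3 := wins_lt h1
      rw [Pword_ne h1, Pword_ne h2]
      have hs : (wins [] u).1.Pairwise (· ≤ ·) := wins_sorted (by simp)
      obtain ⟨i1, i2⟩ := wins_K3 h hs
      have ea : (wins [] (u ++ a ++ v)).1 = (wins [] (u ++ b ++ v)).1 := by
        simp only [wins_append, i1]
      rw [ea]
      congr 1
      have e2 : (wins [] (u ++ a ++ v)).2 =
        (wins [] u).2 ++ (wins (wins [] u).1 a).2 ++ (wins (wins (wins [] u).1 b).1 v).2 := by
        simp only [wins_append, i1]
      have e3 : (wins [] (u ++ b ++ v)).2 =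
        (wins [] u).2 ++ (wins (wins [] u).1 b).2 ++ (wins (wins (wins [] u).1 b).1 v).2 := by
        simp only [wins_append]
      have hlen : (wins [] (u ++ a ++ v)).2.length = (wins [] (u ++ b ++ v)).2.length := by
        have l1 := wins_length (u ++ a ++ v) []
        have l2 := wins_length (u ++ b ++ v) []
        rw [ea] at l1
        have : (u ++ a ++ v).length = (u ++ b ++ v).length := by cases h <;> simp
        omega
      rcases i2 with i2 | i2 | i2
      · rw [e2, e3, i2]
      · apply ih (by omega)
        rw [e2, e3]
        exact KS.mk _ _ i2
      · symm
        apply ih (by omega)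
        rw [e2, e3]
        exact KS.mk _ _ i2

theorem Pword_Keq {a b : List ℕ} (h : Keq a b) : Pword a = Pword b := by
  induction h with
  | rel a b h => exact Pword_KS a.length le_rfl h
  | refl => rfl
  | symm _ _ _ ih => exact ih.symm
  | trans _ _ _ _ _ ih1 ih2 => exact ih1.trans ih2

end Crys


namespace Crys

theorem st_neutral {i : ℕ} {A : List ℕ} (h : ∀ x ∈ A, x ≠ i ∧ x ≠ i + 1) (e : ℕ) :
    st i e A = e := by
  induction A with
  | nil => rfl
  | cons x A ih =>
    have := h x (by simp)
    simp only [st, this.1, this.2, if_false]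
    exact ih (fun y hy => h y (by simp [hy]))

theorem fw_no {i : ℕ} {A : List ℕ} (h : ∀ x ∈ A, x ≠ i) (e : ℕ) : fw i e A = none := by
  induction A generalizing e with
  | nil => rfl
  | cons x A ih =>
    have := h x (by simp)
    simp [fw, ih (fun y hy => h y (by simp [hy])), this]

theorem st_no {i : ℕ} {A : List ℕ} (h : ∀ x ∈ A, x ≠ i) (e : ℕ) :
    st i e A = e + A.count (i + 1) := by
  have := st_le i A e (fw_no h e)
  have h2 : A.count i = 0 := by
    rw [List.count_eq_zero]; intro hi; exact h i hi rfl
  omega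

theorem fw_none_mono {i : ℕ} {A : List ℕ} {e : ℕ} (h : fw i e A = none) : fw i (e + 1) A = none := by
  induction A generalizing e with
  | nil => rfl
  | cons x A ih =>
    simp only [fw] at h ⊢
    split at h
    · simp at h
    rename_i hn
    have h2 : ¬ (x = i ∧ e = 0) := by
      intro hh; simp [hh] at h
    have h3 := ih hn
    have : (if x = i + 1 then e + 1 + 1 else if x = i then e + 1 - 1 else e + 1) =
        (if x = i + 1 then e + 1 else if x = i then e - 1 else e) + 1 := by
      split_ifs <;> first | rfl | (have : e ≠ 0 := fun h' => h2 ⟨by assumption, h'⟩; omega)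
    rw [this, h3]
    simp

theorem st_succ_le (i : ℕ) (A : List ℕ) : ∀ e e', e' ≤ e + 1 → st i e' A ≤ st i e A + 1 := by
  induction A with
  | nil => intro e e' h; simpa [st] using h
  | cons x A ih =>
    intro e e' h
    simp only [st]
    apply ih
    split_ifs <;> omega

theorem fw_zero_ge {i : ℕ} {w : List ℕ} (hs : w.Pairwise (· ≤ ·)) (hge : ∀ x ∈ w, i ≤ x)
    (h : fw i 0 w = none) : ∀ x ∈ w, i + 1 ≤ x := by
  cases w with
  | nil => simp
  | cons y w =>
    have hy : y ≠ i := by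
      rintro rfl
      simp only [fw] at h
      split at h <;> simp at h
    rw [List.pairwise_cons] at hs
    intro x hx
    have h1 := hge y (by simp)
    simp at hx
    rcases hx with rfl | hx
    · omega
    · have := hs.1 x hx; omega

theorem fw_sorted_decomp {i e : ℕ} {R R1 : List ℕ} (hs : R.Pairwise (· ≤ ·))
    (h : fw i e R = some R1) :
    ∃ w1 w2, R = w1 ++ i :: w2 ∧ R1 = w1 ++ (i + 1) :: w2 ∧ st i e w1 = 0 ∧ fw i 0 w2 = none ∧
      (∀ x ∈ w1, x ≤ i) ∧ (∀ x ∈ w2, i + 1 ≤ x) ∧ R1.Pairwise (· ≤ ·) := by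
  obtain ⟨w1, w2, rfl, rfl, h3, h4⟩ := fw_decomp h
  have hs' := hs
  rw [List.pairwise_append, List.pairwise_cons] at hs'
  obtain ⟨p1, ⟨p2, p3⟩, p4⟩ := hs'
  have hge := fw_zero_ge p3 p2 h4
  have hle : ∀ x ∈ w1, x ≤ i := fun x hx => p4 x hx i (by simp)
  refine ⟨w1, w2, rfl, rfl, h3, h4, hle, hge, ?_⟩
  rw [List.pairwise_append, List.pairwise_cons]
  refine ⟨p1, ⟨hge, p3⟩, ?_⟩
  intro a ha b hb
  simp at hb
  rcases hb with rfl | hb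
  · have := hle a ha; omega
  · exact p4 a ha b (by simp [hb])

theorem rins_append_le {R : List ℕ} {v : ℕ} (h : ∀ x ∈ R, x ≤ v) : rins R v = (R ++ [v], []) := by
  induction R with
  | nil => rfl
  | cons r R ih =>
    have h1 : ¬ v < r := not_lt.mpr (h r (by simp))
    simp [rins, h1, ih (fun x hx => h x (by simp [hx]))]

theorem rins_bump_form {A B : List ℕ} {r v : ℕ} (h : ∀ x ∈ A, x ≤ v) (hv : v < r) :
    rins (A ++ r :: B) v = (A ++ v :: B, [r]) := by
  induction A with
  | nil => simp [rins, hv]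
  | cons a A ih =>
    have h1 : ¬ v < a := not_lt.mpr (h a (by simp))
    simp [rins, h1, ih (fun x hx => h x (by simp [hx]))]

theorem rins_cases (R : List ℕ) (v : ℕ) : (∀ x ∈ R, x ≤ v) ∨
    ∃ A r B, R = A ++ r :: B ∧ (∀ x ∈ A, x ≤ v) ∧ v < r := by
  induction R with
  | nil => simp
  | cons r R ih =>
    by_cases h : v < r
    · right; exact ⟨[], r, R, rfl, by simp, h⟩
    · rcases ih with ih | ⟨A, r', B, rfl, h2, h3⟩
      · left; intro x hx; simp at hx; rcases hx with rfl | hx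
        · omega
        · exact ih x hx
      · right
        refine ⟨r :: A, r', B, rfl, ?_, h3⟩
        intro x hx; simp at hx; rcases hx with rfl | hx
        · omega
        · exact h2 x hx

/-- the lowering operator commutes with one row insertion of one letter -/
theorem rins_crystal (i e : ℕ) {R : List ℕ} (hR : R.Pairwise (· ≤ ·)) (v : ℕ) :
    st i e (R ++ [v]) = st i e ((rins R v).2 ++ (rins R v).1) ∧
    ((fw i e (R ++ [v]) = none ∧ fw i e ((rins R v).2 ++ (rins R v).1) = none) ∨
      ∃ R1 v1, R1.Pairwise (· ≤ ·) ∧ R1.length = R.length ∧ fw i e (R ++ [v]) = some (R1 ++ [v1]) ∧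
        fw i e ((rins R v).2 ++ (rins R v).1) = some ((rins R1 v1).2 ++ (rins R1 v1).1) ∧
        (rins R1 v1).2.length = (rins R v).2.length) := by
  rcases rins_cases R v with hle | ⟨A, r, B, rfl, hA, hvr⟩
  · rw [rins_append_le hle]
    refine ⟨rfl, ?_⟩
    simp only [List.nil_append, and_self]
    cases hf : fw i e (R ++ [v]) with
    | none => left; rfl
    | some X =>
      right
      have hs : (R ++ [v]).Pairwise (· ≤ ·) := by
        rw [List.pairwise_append]; simp; exact ⟨hR, hle⟩
      obtain ⟨w1, w2, -, -, -, -, -, -, hX⟩ := fw_sorted_decomp hs hf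
      have hlen := fw_length hf
      rcases List.eq_nil_or_concat X with rfl | ⟨R1, v1, rfl⟩
      · simp at hlen
      · rw [List.concat_eq_append] at hX hlen
        rw [List.pairwise_append] at hX
        have hr : rins R1 v1 = (R1 ++ [v1], []) := by
          apply rins_append_le
          intro x hx; exact hX.2.2 x hx v1 (by simp)
        rw [List.concat_eq_append]
        refine ⟨R1, v1, hX.1, ?_, rfl, ?_, ?_⟩
        · simpa using hlen
        · simp [hr]
        · simp [hr]
  · rw [rins_bump_form hA hvr]
    have hR' := hR
    rw [List.pairwise_append, List.pairwise_cons] at hR'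
    obtain ⟨sA, ⟨hB, sB⟩, hAB⟩ := hR'
    have srB : (r :: B).Pairwise (· ≤ ·) := by rw [List.pairwise_cons]; exact ⟨hB, sB⟩
    rcases lt_trichotomy v i with hvi | hvi | hvi
    · -- v < i
      have nA : ∀ x ∈ A, x ≠ i ∧ x ≠ i + 1 := by intro x hx; have := hA x hx; omega
      have nAv : ∀ x ∈ A ++ [v], x ≠ i ∧ x ≠ i + 1 := by
        intro x hx; simp at hx; rcases hx with hx | rfl
        · exact nA x hx
        · omega
      have fX : fw i e (A ++ r :: B ++ [v]) = (fw i e (r :: B)).map (fun t => A ++ t ++ [v]) := by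
        rw [fw_append_none (fw_no (by simp; omega) _), fw_append, st_neutral nA]
        cases fw i e (r :: B) with
        | none => simp [fw_no (fun x hx => (nA x hx).1)]
        | some t => simp
      have fY : ∀ s, fw i s (A ++ v :: B) = (fw i s B).map (fun t => A ++ v :: t) := by
        intro s
        have : A ++ v :: B = (A ++ [v]) ++ B := by simp
        rw [this, fw_append, st_neutral nAv]
        cases fw i s B with
        | none => simp [fw_no (fun x hx => (nAv x hx).1)]
        | some t => simp
      constructor
      · have e1 : A ++ r :: B ++ [v] = A ++ ((r :: B) ++ [v]) := by simp
        have e2 : [r] ++ (A ++ v :: B) = [r] ++ ((A ++ [v]) ++ B) := by simp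
        rw [e1, e2, st_append, st_append, st_append, st_append, st_neutral nA, st_neutral nAv,
          st_neutral (A := [v])]
        · rfl
        · simp; omega
      · rw [fX]
        simp only [List.singleton_append, fw, fY]
        generalize hs : (if r = i + 1 then e + 1 else if r = i then e - 1 else e) = s
        have key : ∀ r1 B1, r ≤ r1 → (r1 :: B1).Pairwise (· ≤ ·) →
            (A ++ r1 :: B1).Pairwise (· ≤ ·) := by
          intro r1 B1 h1 h2
          rw [List.pairwise_append]
          refine ⟨sA, h2, ?_⟩
          intro a ha b hb
          have := hA a ha
          simp at hb
          rw [List.pairwise_cons] at h2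
          rcases hb with rfl | hb
          · omega
          · have := h2.1 b hb; omega
        cases hB1 : fw i s B with
        | some B1 =>
          right
          obtain ⟨w1, w2, h1, h2, -, -, h5, h6, hX⟩ := fw_sorted_decomp sB hB1
          refine ⟨A ++ r :: B1, v, key r B1 le_rfl ?_, by simp [fw_length hB1], by simp, ?_, ?_⟩
          · rw [List.pairwise_cons]
            refine ⟨?_, hX⟩
            intro b hb
            rw [h2] at hb
            rw [h1] at hB
            simp at hb hB
            rcases hb with hb | rfl | hb
            · exact hB b (Or.inl hb)
            · have := hB i (by simp); omega
            · exact hB b (by simp [hb])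
          · simp [rins_bump_form hA hvr]
          · simp [rins_bump_form hA hvr]
        | none =>
          by_cases hc : r = i ∧ e = 0
          · right
            obtain ⟨rfl, rfl⟩ := hc
            have hfw : fw r 0 (r :: B) = some ((r + 1) :: B) := by
              have h00 : fw r 0 B = none := by rw [← hs] at hB1; simpa using hB1
              simp [fw, h00]
            obtain ⟨w1, w2, -, -, -, -, h5, h6, hX⟩ := fw_sorted_decomp srB hfw
            refine ⟨A ++ (r + 1) :: B, v, key _ _ (by omega) hX, by simp, by simp, ?_, ?_⟩
            · simp [rins_bump_form hA (show v < r + 1 by omega)]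
            · simp [rins_bump_form hA (show v < r + 1 by omega)]
          · left
            simp [hc]
    · -- v = i
      subst hvi
      have nB : ∀ x ∈ B, x ≠ v := by intro x hx; have := hB x hx; omega
      rcases Nat.lt_or_ge (v + 1) r with hr | hr
      · -- r > v + 1
        have nrB : ∀ x ∈ r :: B, x ≠ v ∧ x ≠ v + 1 := by
          intro x hx; simp at hx; rcases hx with rfl | hx
          · omega
          · have := hB x hx; omega
        have nB : ∀ x ∈ B, x ≠ v ∧ x ≠ v + 1 := fun x hx => nrB x (by simp [hx])
        have nr : ∀ x ∈ [r], x ≠ v ∧ x ≠ v + 1 := by simp; omega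
        have fY : ∀ s, fw v s (v :: B) = if s = 0 then some ((v + 1) :: B) else none := by
          intro s; simp [fw, fw_no (fun x hx => (nB x hx).1)]
        constructor
        · have e1 : A ++ r :: B ++ [v] = A ++ ((r :: B) ++ [v]) := by simp
          have e2 : [r] ++ (A ++ v :: B) = [r] ++ (A ++ ([v] ++ B)) := by simp
          rw [e1, e2, st_append, st_append, st_append, st_append, st_append, st_neutral nrB,
            st_neutral nr, st_neutral nB]
        · by_cases h0 : st v e A = 0
          · right
            refine ⟨A ++ r :: B, v + 1, hR, rfl, ?_, ?_, ?_⟩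
            · apply fw_append_some
              rw [st_append, st_neutral nrB, h0]; simp [fw]
            · rw [rins_bump_form (fun x hx => (hA x hx).trans (by omega)) hr]
              apply fw_append_some
              rw [st_neutral nr]
              apply fw_append_some
              rw [fY, if_pos h0]
            · rw [rins_bump_form (fun x hx => (hA x hx).trans (by omega)) hr]
          · left
            have hA0 : fw v e A = none := by
              by_contra hne
              obtain ⟨A1, hA1⟩ := Option.ne_none_iff_exists'.mp hne
              obtain ⟨w1, w2, h1, h2, h3, -, h5, h6, hX⟩ := fw_sorted_decomp sA hA1
              have : w2 = [] := by
                cases w2 with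
                | nil => rfl
                | cons y w2 =>
                  have := h6 y (by simp)
                  have := hA y (by rw [h1]; simp)
                  omega
              subst this
              apply h0
              rw [h1, st_append, h3]; simp [st]
            constructor
            · rw [fw_append_none, fw_append_none (fw_no (fun x hx => (nrB x hx).1) _), hA0]
              · rfl
              · rw [st_append, st_neutral nrB]; simp [fw, h0]
            · have hY : fw v e (A ++ v :: B) = none := by
                rw [fw_append_none, hA0]
                · rfl
                · rw [fY, if_neg h0]
              rw [fw_append_none, fw_no (fun x hx => (nr x hx).1)]
              · rfl
              · rw [st_neutral nr]; exact hY
      · -- r = v + 1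
        obtain rfl : r = v + 1 := by omega
        have nrB : ∀ x ∈ (v + 1) :: B, x ≠ v := by
          intro x hx; simp at hx; rcases hx with rfl | hx
          · omega
          · exact nB x hx
        have fX : fw v e (A ++ (v + 1) :: B ++ [v]) =
            (fw v e A).map (fun t => t ++ (v + 1) :: B ++ [v]) := by
          rw [fw_append_none, fw_append_none (fw_no nrB _)]
          · cases fw v e A <;> simp
          · rw [st_append, st_no nrB]; simp [fw]
        have e1 : A ++ (v + 1) :: B ++ [v] = A ++ (((v + 1) :: B) ++ [v]) := by simp
        have e2 : [v + 1] ++ (A ++ v :: B) = [v + 1] ++ (A ++ ([v] ++ B)) := by simp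
        have e3 : st v e [v + 1] = e + 1 := by simp [st]
        have e4 : ∀ s, st v s [v] = s - 1 := by simp [st]
        have hfY : ∀ s, fw v s (v :: B) = if s = 0 then some ((v + 1) :: B) else none := by
          intro s; simp [fw, fw_no nB]
        cases hA1 : fw v e A with
        | some A1 =>
          obtain ⟨w1, w2, h1, h2, h3, -, h5, h6, hX⟩ := fw_sorted_decomp sA hA1
          have : w2 = [] := by
            cases w2 with
            | nil => rfl
            | cons y w2 =>
              have := h6 y (by simp)
              have := hA y (by rw [h1]; simp)
              omega
          subst this
          have hst : st v e A = 0 := by rw [h1, st_append, h3]; simp [st]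
          have hst1 : st v (e + 1) A = 0 := by
            have := st_succ_le v w1 e (e + 1) le_rfl
            rw [h1, st_append, e4]; omega
          constructor
          · rw [e1, e2, st_append, st_append, st_append, st_append, st_append, e3, hst, hst1,
              e4, e4, st_no nrB, st_no nB]
            simp
          · right
            have hb : rins (A1 ++ (v + 1) :: B) v = (w1 ++ v :: (v + 1) :: B, [v + 1]) := by
              rw [h2]
              simpa using rins_bump_form (A := w1) (B := (v + 1) :: B) h5 (Nat.lt_succ_self v)
            refine ⟨A1 ++ (v + 1) :: B, v, ?_, by simp [fw_length hA1], ?_, ?_, ?_⟩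
            · rw [List.pairwise_append]
              refine ⟨hX, srB, ?_⟩
              intro a ha b hb
              have hbb : v + 1 ≤ b := by
                simp at hb; rcases hb with rfl | hb
                · rfl
                · exact hB b hb
              rw [h2] at ha
              simp at ha
              rcases ha with ha | rfl
              · have := h5 a ha; omega
              · exact hbb
            · rw [fX, hA1]; rfl
            · rw [hb]
              have : fw v e ([v + 1] ++ (A ++ v :: B)) = some ([v + 1] ++ (A ++ (v + 1) :: B)) := by
                apply fw_append_some
                rw [e3]
                apply fw_append_some
                rw [hfY, if_pos hst1]
              simp only
              rw [this, h1]
              simp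
            · rw [hb]
        | none =>
          have hn := fw_none_mono hA1
          have q1 := st_le v A e hA1
          have q2 := st_le v A (e + 1) hn
          constructor
          · rw [e1, e2, st_append, st_append, st_append, st_append, st_append, e3,
              e4, e4, st_no nrB, st_no nB]
            simp; omega
          · left
            constructor
            · rw [fX, hA1]; rfl
            · rw [fw_append_none (fw_append_none (u := A) (v := v :: B) (e := st v e [v + 1]) ?_ |>.trans ?_)]
              · simp [fw]
              · rw [e3, hfY, if_neg]; omega
              · rw [e3, hn]; rfl
    · -- v > i
      have nrB : ∀ x ∈ r :: B ++ [v], x ≠ i := by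
        intro x hx; simp at hx; rcases hx with rfl | hx | rfl
        · omega
        · have := hB x hx; omega
        · omega
      have nrB2 : ∀ x ∈ r :: B, x ≠ i ∧ x ≠ i + 1 := by
        intro x hx; simp at hx; rcases hx with rfl | hx
        · omega
        · have := hB x hx; omega
      have nr : ∀ x ∈ [r], x ≠ i ∧ x ≠ i + 1 := by simp; omega
      have nB : ∀ x ∈ B, x ≠ i ∧ x ≠ i + 1 := fun x hx => nrB2 x (by simp [hx])
      have nvB : ∀ x ∈ v :: B, x ≠ i := by
        intro x hx; simp at hx; rcases hx with rfl | hx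
        · omega
        · exact (nB x hx).1
      have fX : fw i e (A ++ r :: B ++ [v]) = (fw i e A).map (fun t => t ++ r :: B ++ [v]) := by
        have e1 : A ++ r :: B ++ [v] = A ++ ((r :: B) ++ [v]) := by simp
        rw [e1, fw_append_none (fw_no nrB _)]
        cases fw i e A <;> simp
      have fY : fw i e ([r] ++ (A ++ v :: B)) = (fw i e A).map (fun t => [r] ++ (t ++ v :: B)) := by
        rw [fw_append, st_neutral nr, fw_append_none (fw_no nvB _)]
        cases fw i e A with
        | none => simp [fw_no (fun x hx => (nr x hx).1)]
        | some t => simp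
      constructor
      · have e1 : A ++ r :: B ++ [v] = A ++ ((r :: B) ++ [v]) := by simp
        have e2 : [r] ++ (A ++ v :: B) = [r] ++ (A ++ ([v] ++ B)) := by simp
        rw [e1, e2, st_append, st_append, st_append, st_append, st_append, st_neutral nrB2,
            st_neutral nr, st_neutral nB]
      · simp only [fX, fY]
        cases hA1 : fw i e A with
        | none => left; simp
        | some A1 =>
          right
          obtain ⟨w1, w2, h1, h2, h3, -, h5, h6, hX⟩ := fw_sorted_decomp sA hA1
          have hA1v : ∀ x ∈ A1, x ≤ v := by
            intro x hx
            rw [h2] at hx; rw [h1] at hA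
            simp at hx hA
            rcases hx with hx | rfl | hx
            · exact hA x (Or.inl hx)
            · omega
            · exact hA x (by simp [hx])
          have hb := rins_bump_form (B := B) hA1v hvr
          refine ⟨A1 ++ r :: B, v, ?_, by simp [fw_length hA1], rfl, ?_, ?_⟩
          · rw [List.pairwise_append]
            refine ⟨hX, srB, ?_⟩
            intro a ha b hb
            have := hA1v a ha
            simp at hb; rcases hb with rfl | hb
            · omega
            · have := hB b hb; omega
          · rw [hb]; rfl
          · rw [hb]

theorem wins_crystal (i : ℕ) (w : List ℕ) : ∀ (e : ℕ) (R : List ℕ), R.Pairwise (· ≤ ·) →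
    st i e (R ++ w) = st i e ((wins R w).2 ++ (wins R w).1) ∧
    ((fw i e (R ++ w) = none ∧ fw i e ((wins R w).2 ++ (wins R w).1) = none) ∨
      ∃ R1 w1, R1.length = R.length ∧ fw i e (R ++ w) = some (R1 ++ w1) ∧
        fw i e ((wins R w).2 ++ (wins R w).1) = some ((wins R1 w1).2 ++ (wins R1 w1).1) ∧
        (wins R1 w1).2.length = (wins R w).2.length) := by
  induction w with
  | nil =>
    intro e R hR
    refine ⟨by simp [wins], ?_⟩
    simp only [wins, List.append_nil, List.nil_append]
    cases hf : fw i e R with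
    | none => left; simp
    | some R1 => right; exact ⟨R1, [], fw_length hf, by simp, by simp [wins], by simp [wins]⟩
  | cons v w ih =>
    intro e R hR
    obtain ⟨S1, S2⟩ := rins_crystal i e hR v
    simp only [wins]
    have hlenS : ∀ R1 v1 o R', (rins R1 v1).2 ++ (rins R1 v1).1 = o ++ R' →
        (rins R1 v1).2.length = o.length → rins R1 v1 = (R', o) := by
      intro R1 v1 o R' h1 h2
      obtain ⟨h3, h4⟩ := List.append_inj h1 h2
      exact Prod.ext h4 h3
    have hs' := rins_sorted hR v
    generalize ho : (rins R v).2 = o at *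
    generalize hR'' : (rins R v).1 = R' at *
    obtain ⟨I1, I2⟩ := ih (st i e o) R' hs'
    generalize hw2 : (wins R' w).2 = w2 at *
    generalize hR2 : (wins R' w).1 = R2 at *
    have e1 : R ++ v :: w = (R ++ [v]) ++ w := by simp
    have e2 : o ++ w2 ++ R2 = o ++ (w2 ++ R2) := by simp
    constructor
    · rw [e1, e2, st_append, S1, ← st_append, List.append_assoc, st_append, I1, ← st_append]
    · have t1 : st i e (R ++ [v]) = st i (st i e o) R' := by rw [S1, st_append]
      cases hfw : fw i (st i e (R ++ [v])) w with
      | some wa =>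
        right
        have h3 : fw i (st i e o) (R' ++ w) = some (R' ++ wa) := by
          apply fw_append_some; rw [← t1]; exact hfw
        rw [h3] at I2
        rcases I2 with ⟨I2, -⟩ | ⟨R1, w1, l1, l2, l3, l4⟩
        · simp at I2
        · simp only [Option.some.injEq] at l2
          obtain ⟨rfl, rfl⟩ := List.append_inj l2 l1.symm
          refine ⟨R, v :: wa, rfl, ?_, ?_, ?_⟩
          · rw [e1, fw_append_some hfw]; simp
          · rw [e2, fw_append_some l3]; simp [wins, ho, hR'']
          · simp [wins, ho, hR'', l4]
      | none =>
        have h2 : fw i e (R ++ v :: w) = (fw i e (R ++ [v])).map (· ++ w) := by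
          rw [e1, fw_append_none hfw]
        have h3 : fw i (st i e o) (R' ++ w) = (fw i (st i e o) R').map (· ++ w) := by
          apply fw_append_none; rw [← t1]; exact hfw
        cases hR' : fw i (st i e o) R' with
        | some Ra =>
          right
          rw [hR'] at h3
          rw [fw_append_some hR'] at S2
          rcases S2 with ⟨-, S2⟩ | ⟨R1, v1, -, s1, s2, s3, s4⟩
          · simp at S2
          rcases I2 with ⟨I2, -⟩ | ⟨R1', w1, l1, l2, l3, l4⟩
          · rw [I2] at h3; simp at h3
          · rw [l2] at h3
            simp only [Option.map_some, Option.some.injEq] at h3 s3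
            obtain ⟨rfl, rfl⟩ := List.append_inj h3 (by rw [l1, fw_length hR'])
            have hr := hlenS R1 v1 o R1' s3.symm s4
            refine ⟨R1, v1 :: w1, s1, ?_, ?_, ?_⟩
            · rw [h2, s2]; simp
            · rw [e2, fw_append_some l3]; simp [wins, hr]
            · simp [wins, hr, l4]
        | none =>
          rw [hR'] at h3
          have l3 : fw i (st i e o) (w2 ++ R2) = none := by
            rcases I2 with ⟨-, I2⟩ | ⟨R1', w1, l1, l2, l3, l4⟩
            · exact I2
            · rw [l2] at h3; simp at h3
          rw [fw_append_none hR'] at S2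
          rw [e2, fw_append_none l3, h2]
          rcases S2 with ⟨S2, S3⟩ | ⟨R1, v1, -, s1, s2, s3, s4⟩
          · left
            rw [S2]
            simp at S3
            simp [S3]
          · right
            cases hfo : fw i e o with
            | none => rw [hfo] at s3; simp at s3
            | some oa =>
              rw [hfo] at s3
              simp only [Option.map_some, Option.some.injEq] at s3
              have hr := hlenS R1 v1 oa R' s3.symm (by rw [s4, fw_length hfo])
              refine ⟨R1, v1 :: w, s1, ?_, ?_, ?_⟩
              · rw [s2]; simp
              · simp [wins, hr, hw2, hR2]
              · simp [wins, hr, hw2, fw_length hfo]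

theorem rowWord_cons (R : List ℕ) (P : List (List ℕ)) : rowWord (R :: P) = rowWord P ++ R := by
  simp [rowWord]

theorem rowWord_nil : rowWord [] = [] := rfl

/-- the lowering operator commutes with Schensted insertion -/
theorem Pword_crystal (i N : ℕ) : ∀ (w : List ℕ) (e : ℕ), w.length ≤ N →
    st i e w = st i e (rowWord (Pword w)) ∧
    ((fw i e w = none ∧ fw i e (rowWord (Pword w)) = none) ∨
      ∃ w1, fw i e w = some w1 ∧ fw i e (rowWord (Pword w)) = some (rowWord (Pword w1)) ∧
        (Pword w1).map List.length = (Pword w).map List.length) := by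
  induction N with
  | zero =>
    intro w e hw
    have : w = [] := by simpa using hw
    subst this
    simp [Pword_nil, rowWord_nil, fw]
  | succ N ih =>
    intro w e hw
    by_cases hne : w = []
    · subst hne
      simp [Pword_nil, rowWord_nil, fw]
    have hlt := wins_lt hne
    rw [Pword_ne hne, rowWord_cons]
    obtain ⟨W1, W2⟩ := wins_crystal i w e [] (by simp)
    simp only [List.nil_append] at W1 W2
    generalize hw' : (wins [] w).2 = w' at *
    generalize hR' : (wins [] w).1 = R' at *
    obtain ⟨I1, I2⟩ := ih w' e (by omega)
    constructor
    · rw [W1, st_append, st_append, I1]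
    · cases hf : fw i (st i e w') R' with
      | some Ra =>
        right
        rw [fw_append_some hf] at W2
        rcases W2 with ⟨-, W2⟩ | ⟨R1, w1, l1, l2, l3, l4⟩
        · simp at W2
        have : R1 = [] := by simpa using l1
        subst this
        simp only [Option.some.injEq] at l3
        obtain ⟨q1, q2⟩ := List.append_inj l3 l4.symm
        have hne1 : w1 ≠ [] := by
          have := fw_length l2
          intro h; subst h; exact hne (List.length_eq_zero_iff.mp (by simpa using this.symm))
        refine ⟨w1, by simpa using l2, ?_, ?_⟩
        · rw [Pword_ne hne1, rowWord_cons, ← q1, ← q2]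
          apply fw_append_some
          rw [← I1]; exact hf
        · rw [Pword_ne hne1, ← q1, ← q2]
          simp [fw_length hf]
      | none =>
        rw [fw_append_none hf] at W2
        rw [I1] at hf
        rw [fw_append_none hf]
        rcases I2 with ⟨I2, I3⟩ | ⟨wa, I2, I3, I4⟩
        · left
          rw [I2] at W2
          rw [I3]
          rcases W2 with ⟨W2, -⟩ | ⟨R1, w1, l1, l2, l3, l4⟩
          · exact ⟨W2, rfl⟩
          · simp at l3
        · right
          rw [I2] at W2
          rcases W2 with ⟨-, W2⟩ | ⟨R1, w1, l1, l2, l3, l4⟩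
          · simp at W2
          have : R1 = [] := by simpa using l1
          subst this
          simp only [Option.map_some, Option.some.injEq] at l3
          obtain ⟨q1, q2⟩ := List.append_inj l3 (by rw [l4, fw_length I2])
          have hne1 : w1 ≠ [] := by
            have := fw_length l2
            intro h; subst h; exact hne (List.length_eq_zero_iff.mp (by simpa using this.symm))
          refine ⟨w1, by simpa using l2, ?_, ?_⟩
          · rw [Pword_ne hne1, rowWord_cons, ← q1, ← q2, I3]
            rfl
          · rw [Pword_ne hne1, ← q1, ← q2]
            simp [I4]

theorem Pword_fw_none {i : ℕ} {w : List ℕ} (h : fw i 0 w = none) :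
    fw i 0 (rowWord (Pword w)) = none := by
  rcases (Pword_crystal i w.length w 0 le_rfl).2 with h' | ⟨w1, h1, -⟩
  · exact h'.2
  · rw [h] at h1; simp at h1

theorem Pword_fw_some {i : ℕ} {w w1 : List ℕ} (h : fw i 0 w = some w1) :
    fw i 0 (rowWord (Pword w)) = some (rowWord (Pword w1)) ∧
        (Pword w1).map List.length = (Pword w).map List.length := by
  rcases (Pword_crystal i w.length w 0 le_rfl).2 with h' | ⟨w1', h1, h2⟩
  · rw [h] at h'; simp at h'
  · rw [h] at h1; simp at h1; subst h1; exact h2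

/-! ### the tableau operator `fLower` -/

theorem rowWord_inj : ∀ {P P' : List (List ℕ)}, P.map List.length = P'.map List.length →
    rowWord P = rowWord P' → P = P' := by
  intro P
  induction P with
  | nil => intro P' h _; cases P' <;> simp_all
  | cons R P ih =>
    intro P' h h2
    cases P' with
    | nil => simp at h
    | cons R' P' =>
      simp at h
      rw [rowWord_cons, rowWord_cons] at h2
      obtain ⟨h3, h4⟩ := List.append_inj' h2 h.1
      rw [ih (by simpa using h.2) h3, h4]

theorem rowWordBoxes_cons (R : List ℕ) (P : List (List ℕ)) :
    rowWordBoxes (R :: P) = (rowWordBoxes P).map (fun rc => (rc.1 + 1, rc.2)) ++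
      (List.range R.length).map (fun c => (0, c)) := by
  unfold rowWordBoxes
  simp only [List.length_cons, List.range_succ_eq_map, List.reverse_cons, List.flatMap_append]
  congr 1
  · rw [← List.map_reverse, List.flatMap_map, List.map_flatMap]
    congr 1
    funext r
    simp
  · simp

theorem rowWord_length_boxes : ∀ P : List (List ℕ), (rowWordBoxes P).length = (rowWord P).length := by
  intro P
  induction P with
  | nil => rfl
  | cons R P ih => rw [rowWordBoxes_cons, rowWord_cons]; simp [ih]

theorem rowWord_set (x : ℕ) : ∀ (P : List (List ℕ)) (p : ℕ), p < (rowWord P).length →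
    rowWord (P.set ((rowWordBoxes P).getD p (0, 0)).1
      ((P.getD ((rowWordBoxes P).getD p (0, 0)).1 []).set ((rowWordBoxes P).getD p (0, 0)).2 x)) =
      (rowWord P).set p x ∧
    (P.set ((rowWordBoxes P).getD p (0, 0)).1
      ((P.getD ((rowWordBoxes P).getD p (0, 0)).1 []).set
        ((rowWordBoxes P).getD p (0, 0)).2 x)).map List.length = P.map List.length := by
  intro P
  induction P with
  | nil => intro p hp; simp [rowWord] at hp
  | cons R P ih =>
    intro p hp
    rcases Nat.lt_or_ge p (rowWord P).length with h | h
    · have hb : (rowWordBoxes (R :: P)).getD p (0, 0) =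
          (((rowWordBoxes P).getD p (0, 0)).1 + 1, ((rowWordBoxes P).getD p (0, 0)).2) := by
        rw [rowWordBoxes_cons]
        have hl : p < (rowWordBoxes P).length := by rw [rowWord_length_boxes]; exact h
        simp only [List.getD_eq_getElem?_getD]
        rw [List.getElem?_append_left (by simpa using hl)]
        simp [hl]
      rw [hb]
      obtain ⟨i1, i2⟩ := ih p h
      constructor
      · simp only [List.set_cons_succ, List.getD_cons_succ, rowWord_cons]
        rw [i1, List.set_append_left _ _ h]
      · simp only [List.set_cons_succ, List.getD_cons_succ, List.map_cons]
        rw [i2]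
    · have hp' : p - (rowWord P).length < R.length := by
        rw [rowWord_cons] at hp; simp at hp; omega
      have hb : (rowWordBoxes (R :: P)).getD p (0, 0) = (0, p - (rowWord P).length) := by
        rw [rowWordBoxes_cons]
        simp only [List.getD_eq_getElem?_getD]
        rw [List.getElem?_append_right (by simpa [rowWord_length_boxes] using h)]
        simp [rowWord_length_boxes, hp']
      rw [hb]
      constructor
      · simp only [List.set_cons_zero, List.getD_cons_zero, rowWord_cons]
        rw [List.set_append_right _ _ h]
      · simp

theorem fLower_none {i : ℕ} {P : List (List ℕ)} (h : fw i 0 (rowWord P) = none) :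
    fLower i P = none := by
  rw [(fw_eq_rightUnmatched _ i).1] at h
  simp at h
  simp [fLower, h]

theorem fLower_some {i : ℕ} {P P' : List (List ℕ)} (h : fw i 0 (rowWord P) = some (rowWord P'))
    (hs : P'.map List.length = P.map List.length) : fLower i P = some P' := by
  have hh := fw_eq_rightUnmatched (rowWord P) i
  rw [hh.1] at h
  cases hr : rightUnmatched (rowWord P) i with
  | none => rw [hr] at h; simp at h
  | some p =>
    rw [hr] at h
    simp at h
    obtain ⟨hp, -⟩ := hh.2 p hr
    obtain ⟨h1, h2⟩ := rowWord_set (i + 1) P p hp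
    simp only [fLower, hr]
    congr 1
    apply rowWord_inj
    · rw [h2, hs]
    · rw [h1, h]

end Crys


namespace Crys

theorem countP_le_zero {y : List ℕ} {q t : ℕ} (h : ∀ b ∈ y, q < b) (ht : t ≤ q) :
    y.countP (fun b => decide (b ≤ t)) = 0 := by
  rw [List.countP_eq_zero]
  intro b hb
  have := h b hb
  simp; omega

theorem countP_ge_zero {y : List ℕ} {q t : ℕ} (h : ∀ b ∈ y, b < q) (ht : q ≤ t) :
    y.countP (fun b => decide (t ≤ b)) = 0 := by
  rw [List.countP_eq_zero]
  intro b hb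
  have := h b hb
  simp; omega

/-- Claim A: a small letter commutes with a column to the right of a dominating column. -/
theorem claimA (N : ℕ) : ∀ (x y : List ℕ) (c : ℕ), y.length ≤ N →
    x.Pairwise (· > ·) → y.Pairwise (· > ·) → (∀ a ∈ x, c < a) → (∀ a ∈ y, c < a) →
    (∀ t, y.countP (fun b => decide (b ≤ t)) ≤ x.countP (fun b => decide (b ≤ t))) →
    Keq (x ++ [c] ++ y) (x ++ y ++ [c]) := by
  induction N with
  | zero =>
    intro x y c hN _ _ _ _ _
    have : y = [] := List.length_eq_zero_iff.mp (by omega)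
    subst this
    simpa using Keq.refl _
  | succ N ih =>
    intro x y c hN hx hy hcx hcy hcount
    rcases List.eq_nil_or_concat y with rfl | ⟨y', q, rfl⟩
    · simpa using Keq.refl _
    rcases List.eq_nil_or_concat x with rfl | ⟨x', p, rfl⟩
    · have := hcount q
      simp at this
    simp only [List.concat_eq_append] at *
    rw [List.pairwise_append] at hx hy
    have hxp : ∀ a ∈ x', p < a := fun a ha => hx.2.2 a ha p (by simp)
    have hyq : ∀ a ∈ y', q < a := fun a ha => hy.2.2 a ha q (by simp)
    have hpq : p ≤ q := by
      by_contra hlt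
      have h1 := hcount q
      rw [List.countP_append, List.countP_append,
        countP_le_zero (q := q) hyq le_rfl,
        countP_le_zero (q := q) (fun b hb => lt_trans (by omega) (hxp b hb)) le_rfl] at h1
      simp [hlt] at h1
    have hcp : c < p := hcx p (by simp)
    have hl : y'.length ≤ N := by simpa using hN
    have hcnt : ∀ t, y'.countP (fun b => decide (b ≤ t)) ≤ x'.countP (fun b => decide (b ≤ t)) := by
      intro t
      by_cases htq : t ≤ q
      · rw [countP_le_zero hyq htq]; omega
      · have := hcount t
        simp only [List.countP_append, List.countP_singleton] at this
        rw [if_pos (by simp; omega), if_pos (by simp; omega)] at this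
        omega
    have s1 : Keq ((x' ++ [p]) ++ [c] ++ y') ((x' ++ [p]) ++ y' ++ [c]) := by
      apply ih _ _ _ hl
      · rw [List.pairwise_append]; exact hx
      · exact hy.1
      · exact hcx
      · exact fun a ha => hcy a (by simp [ha])
      · intro t
        have := hcnt t
        rw [List.countP_append]; omega
    have s2 : Keq (x' ++ [p] ++ y') (x' ++ y' ++ [p]) :=
      ih _ _ _ hl hx.1 hy.1 hxp (fun a ha => lt_of_le_of_lt hpq (hyq a ha)) hcnt
    have s3 : Keq [p, c, q] [p, q, c] := (K3.a hcp hpq).keq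
    have t1 := s1.right [q]
    have t2 := s2.right [c, q]
    have t3 := s3.left (x' ++ y')
    have t4 := s2.symm.right [q, c]
    simp only [List.append_assoc, List.cons_append, List.nil_append] at *
    exact t1.trans (t2.trans (t3.trans t4))

/-- Claim B -/
theorem claimB (N : ℕ) : ∀ (x y : List ℕ) (c : ℕ), x.length ≤ N →
    x.Pairwise (· > ·) → y.Pairwise (· > ·) → (∀ a ∈ x, a < c) → (∀ a ∈ y, a < c) →
    (∀ t, x.countP (fun b => decide (t ≤ b)) ≤ y.countP (fun b => decide (t ≤ b))) →
    Keq (c :: (x ++ y)) (x ++ c :: y) := by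
  induction N with
  | zero =>
    intro x y c hN _ _ _ _ _
    have : x = [] := List.length_eq_zero_iff.mp (by omega)
    subst this
    simpa using Keq.refl _
  | succ N ih =>
    intro x y c hN hx hy hcx hcy hcount
    cases x with
    | nil => simpa using Keq.refl _
    | cons p x' =>
    cases y with
    | nil => have := hcount p; simp at this
    | cons q y' =>
    have hx0 := hx
    have hy0 := hy
    rw [List.pairwise_cons] at hx hy
    have hpq : p ≤ q := by
      by_contra hlt
      have h1 := hcount p
      rw [List.countP_cons, List.countP_cons,
        countP_ge_zero (q := p) hx.1 le_rfl,
        countP_ge_zero (q := q) hy.1 (by omega)] at h1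
      simp [hlt] at h1
    have hqc : q < c := hcy q (by simp)
    have hl : x'.length ≤ N := by simpa using hN
    have hcnt : ∀ t, x'.countP (fun b => decide (t ≤ b)) ≤ y'.countP (fun b => decide (t ≤ b)) := by
      intro t
      by_cases htq : p ≤ t
      · rw [countP_ge_zero hx.1 htq]; omega
      · have := hcount t
        simp only [List.countP_cons] at this
        rw [if_pos (by simp; omega), if_pos (by simp; omega)] at this
        omega
    have s1 : Keq (c :: (x' ++ q :: y')) (x' ++ c :: q :: y') := by
      apply ih _ _ _ hl hx.2 hy0 (fun a ha => hcx a (by simp [ha])) hcy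
      intro t
      have := hcnt t
      rw [List.countP_cons]; omega
    have s2 : Keq (q :: (x' ++ y')) (x' ++ q :: y') :=
      ih _ _ _ hl hx.2 hy.2 (fun a ha => lt_of_lt_of_le (hx.1 a ha) hpq) hy.1 hcnt
    have s3 : Keq [p, c, q] [c, p, q] := (K3.b hpq hqc).keq
    have t1 := s2.symm.left [c, p]
    have t2 := s3.symm.right (x' ++ y')
    have t3 := s2.left [p, c]
    have t4 := s1.left [p]
    simp only [List.append_assoc, List.cons_append, List.nil_append] at *
    exact t1.trans (t2.trans (t3.trans t4))

theorem claimA' (x y z : List ℕ) (hxz : (x ++ z).Pairwise (· > ·)) (hy : y.Pairwise (· > ·))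
    (hzy : ∀ a ∈ z, ∀ b ∈ y, a < b)
    (hc : ∀ t, y.countP (fun b => decide (b ≤ t)) ≤ x.countP (fun b => decide (b ≤ t))) :
    Keq (x ++ z ++ y) (x ++ y ++ z) := by
  induction z using List.reverseRecOn with
  | nil => simpa using Keq.refl _
  | append_singleton z d ih =>
    have hxz' := hxz
    rw [← List.append_assoc, List.pairwise_append] at hxz
    have s1 : Keq ((x ++ z) ++ [d] ++ y) ((x ++ z) ++ y ++ [d]) := by
      apply claimA _ _ _ _ le_rfl hxz.1 hy
      · exact fun a ha => hxz.2.2 a ha d (by simp)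
      · exact fun a ha => hzy d (by simp) a ha
      · intro t
        have := hc t
        rw [List.countP_append]; omega
    have s2 := (ih hxz.1 (fun a ha b hb => hzy a (by simp [ha]) b hb)).right [d]
    simp only [List.append_assoc] at *
    exact s1.trans s2

theorem two_col (x1 x2 y1 y2 : List ℕ) (c : ℕ)
    (hx : (x1 ++ c :: x2).Pairwise (· > ·)) (hy : (y1 ++ c :: y2).Pairwise (· > ·))
    (hA : ∀ t, y1.countP (fun b => decide (b ≤ t)) ≤ x1.countP (fun b => decide (b ≤ t)))
    (hB : ∀ t, x2.countP (fun b => decide (t ≤ b)) ≤ y2.countP (fun b => decide (t ≤ b))) :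
    Keq (x1 ++ c :: x2 ++ (y1 ++ y2)) (x1 ++ x2 ++ (y1 ++ c :: y2)) := by
  have hx' := hx
  have hy' := hy
  rw [List.pairwise_append, List.pairwise_cons] at hx hy
  have hcy1 : ∀ b ∈ y1, c < b := fun b hb => hy.2.2 b hb c (by simp)
  have hxc : ∀ b ∈ x2, b < c := fun b hb => hx.2.1.1 b hb
  have hyc : ∀ b ∈ y2, b < c := fun b hb => hy.2.1.1 b hb
  have s1 := (claimA' x1 y1 (c :: x2) hx' hy.1 (by
    intro a ha b hb
    have := hcy1 b hb
    rcases List.mem_cons.mp ha with rfl | ha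
    · exact this
    · have := hxc a ha; omega) hA).right y2
  have s2 := (claimB _ x2 y2 c le_rfl hx.2.1.2 hy.2.1.2 hxc hyc hB).left (x1 ++ y1)
  have s3 := (claimA' x1 y1 x2 (hx'.sublist (by simp)) hy.1 (by
    intro a ha b hb
    have := hcy1 b hb
    have := hxc a ha; omega) hA).symm.right (c :: y2)
  simp only [List.append_assoc, List.cons_append] at *
  exact s1.trans (s2.trans s3)

theorem col_comm (C D : List ℕ) (h : (C ++ D).Pairwise (· > ·)) :
    Keq (C ++ (C ++ D)) ((C ++ D) ++ C) := by
  have h' := h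
  rw [List.pairwise_append] at h
  have := claimA' C C D h' h.1 (fun a ha b hb => h.2.2 b hb a ha) (fun t => le_rfl)
  simpa using this.symm

end Crys


namespace Crys

/-- the column `M, M-1, …, M-d+1` -/
def topcol (M : ℕ) : ℕ → List ℕ
  | 0 => []
  | d + 1 => topcol M d ++ [M - d]

theorem wins_topcol (M : ℕ) (R : List ℕ) : ∀ d, d + 1 ≤ M → (∀ x ∈ R, x ≤ M - d) →
    wins R (topcol M (d + 1)) = (R ++ [M - d], topcol M d) := by
  intro d
  induction d with
  | zero =>
    intro _ h
    simp [topcol, wins, rins_append_le (by simpa using h)]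
  | succ d ih =>
    intro hd h
    have h1 := ih (by omega) (fun x hx => by have := h x hx; omega)
    have e : topcol M (d + 1 + 1) = topcol M (d + 1) ++ [M - (d + 1)] := rfl
    rw [e, wins_append, h1]
    have := rins_bump_form (A := R) (B := []) (r := M - d) (v := M - (d + 1)) h (by omega)
    simp [wins, this, topcol]

theorem wins_topcols (M : ℕ) : ∀ (ds : List ℕ) (R : List ℕ), ds.Pairwise (· ≥ ·) →
    (∀ d ∈ ds, d ≤ M) → (∀ d ∈ ds, ∀ x ∈ R, x ≤ M + 1 - d) →
    (wins R (ds.flatMap (topcol M))).1.length = R.length + ds.countP (fun d => decide (0 < d)) ∧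
    (wins R (ds.flatMap (topcol M))).2 = (ds.map (· - 1)).flatMap (topcol M) := by
  intro ds
  induction ds with
  | nil => intro R _ _ _; simp [wins]
  | cons d ds ih =>
    intro R hs hM hR
    rw [List.pairwise_cons] at hs
    rw [List.flatMap_cons, wins_append]
    cases d with
    | zero =>
      have := ih R hs.2 (fun d hd => hM d (by simp [hd])) (fun d hd => hR d (by simp [hd]))
      simp [topcol, wins, this.1, this.2]
    | succ d =>
      have hdM := hM (d + 1) (by simp)
      rw [wins_topcol M R d hdM (fun x hx => by have := hR (d + 1) (by simp) x hx; omega)]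
      have := ih (R ++ [M - d]) hs.2 (fun d hd => hM d (by simp [hd])) (by
        intro d' hd' x hx
        rcases List.mem_append.mp hx with hx | hx
        · exact hR d' (by simp [hd']) x hx
        · have := hs.1 d' hd'
          simp at hx; omega)
      simp [this.1, this.2]
      omega

theorem shape_top (M r : ℕ) : ∀ (ds : List ℕ), ds.Pairwise (· ≥ ·) → (∀ d ∈ ds, d ≤ M) →
    ((Pword (ds.flatMap (topcol M))).getD r []).length = ds.countP (fun d => decide (r < d)) := by
  induction r with
  | zero =>
    intro ds hs hM
    have h := wins_topcols M ds [] hs hM (by simp)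
    by_cases hw : ds.flatMap (topcol M) = []
    · rw [hw] at h ⊢
      simp [wins] at h
      simp [Pword_nil]
      exact h.1
    · rw [Pword_ne hw]
      simp [h.1]
  | succ r ih =>
    intro ds hs hM
    have h := wins_topcols M ds [] hs hM (by simp)
    have hs' : (ds.map (· - 1)).Pairwise (· ≥ ·) := by
      rw [List.pairwise_map]
      exact hs.imp (by intro a b; omega)
    have ih' := ih (ds.map (· - 1)) hs' (by
      intro d hd
      obtain ⟨e, he, rfl⟩ := List.mem_map.mp hd
      have := hM e he
      omega)
    have hc : (ds.map (· - 1)).countP (fun d => decide (r < d)) =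
        ds.countP (fun d => decide (r + 1 < d)) := by
      rw [List.countP_map]
      apply List.countP_congr
      intro x _
      simp; omega
    rw [hc, ← h.2] at ih'
    rw [← ih']
    by_cases hw : ds.flatMap (topcol M) = []
    · rw [hw]
      simp [wins, Pword_nil]
    · rw [Pword_ne hw]
      simp

theorem topcol_prefix (M d e : ℕ) : ∃ D, topcol M (d + e) = topcol M d ++ D := by
  induction e with
  | zero => exact ⟨[], by simp⟩
  | succ e ih =>
    obtain ⟨D, h⟩ := ih
    refine ⟨D ++ [M - (d + e)], ?_⟩
    rw [← add_assoc, topcol, h]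
    simp

theorem mem_topcol (M d x : ℕ) (hd : d ≤ M) : x ∈ topcol M d ↔ M < x + d ∧ x ≤ M := by
  induction d with
  | zero => simp [topcol]
  | succ d ih => simp [topcol, ih (by omega)]; omega

theorem topcol_sorted (M d : ℕ) (hd : d ≤ M) : (topcol M d).Pairwise (· > ·) := by
  induction d with
  | zero => simp [topcol]
  | succ d ih =>
    rw [topcol, List.pairwise_append]
    refine ⟨ih (by omega), by simp, ?_⟩
    intro a ha b hb
    rw [mem_topcol M d a (by omega)] at ha
    simp at hb
    omega

theorem topcol_comm' (M d e : ℕ) (hd : d ≤ e) (he : e ≤ M) :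
    Keq (topcol M d ++ topcol M e) (topcol M e ++ topcol M d) := by
  obtain ⟨k, rfl⟩ := Nat.exists_eq_add_of_le hd
  obtain ⟨D, hD⟩ := topcol_prefix M d k
  have := topcol_sorted M (d + k) he
  rw [hD] at this ⊢
  exact col_comm _ _ this

theorem topcol_comm (M d e : ℕ) (hd : d ≤ M) (he : e ≤ M) :
    Keq (topcol M d ++ topcol M e) (topcol M e ++ topcol M d) := by
  rcases le_total d e with h | h
  · exact topcol_comm' M d e h he
  · exact (topcol_comm' M e d h hd).symm

theorem topcols_perm (M : ℕ) {ds es : List ℕ} (h : ds.Perm es) (hM : ∀ d ∈ ds, d ≤ M) :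
    Keq (ds.flatMap (topcol M)) (es.flatMap (topcol M)) := by
  induction h with
  | nil => exact Keq.refl _
  | cons x h ih =>
    simp only [List.flatMap_cons]
    exact (ih (fun d hd => hM d (by simp [hd]))).left _
  | swap x y l =>
    simp only [List.flatMap_cons]
    have := (topcol_comm M y x (hM y (by simp)) (hM x (by simp))).right (l.flatMap (topcol M))
    simpa using this
  | trans h1 h2 ih1 ih2 =>
    exact (ih1 hM).trans (ih2 (fun d hd => hM d (h1.mem_iff.mpr hd)))

theorem shape_top' (M r : ℕ) (ds : List ℕ) (hM : ∀ d ∈ ds, d ≤ M) :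
    ((Pword (ds.flatMap (topcol M))).getD r []).length = ds.countP (fun d => decide (r < d)) := by
  have hp := List.perm_insertionSort (· ≥ ·) ds
  have hs := List.pairwise_insertionSort (· ≥ ·) ds
  rw [← Pword_Keq (topcols_perm M hp (fun d hd => hM d (hp.mem_iff.mp hd))),
    shape_top M r _ hs (fun d hd => hM d (hp.mem_iff.mp hd))]
  exact hp.countP_eq _

end Crys


namespace Crys

/-- `M, M-1, …, 1` -/
def dn : ℕ → List ℕ
  | 0 => []
  | M + 1 => (M + 1) :: dn M

/-- `1, 2, …, M` -/
def upl (M : ℕ) : List ℕ := (dn M).reverse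

/-- decreasing list of elements of `[M]` satisfying `p` -/
def desc (M : ℕ) (p : ℕ → Bool) : List ℕ := (dn M).filter p

theorem mem_dn {M x : ℕ} : x ∈ dn M ↔ 1 ≤ x ∧ x ≤ M := by
  induction M with
  | zero => simp [dn]; omega
  | succ M ih => simp [dn, ih]; omega

theorem dn_sorted (M : ℕ) : (dn M).Pairwise (· > ·) := by
  induction M with
  | zero => simp [dn]
  | succ M ih =>
    rw [dn, List.pairwise_cons]
    refine ⟨fun a ha => ?_, ih⟩
    have := mem_dn.mp ha
    omega

theorem dn_nodup (M : ℕ) : (dn M).Nodup := (dn_sorted M).imp (by intro a b h; omega)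

theorem upl_sorted (M : ℕ) : (upl M).Pairwise (· < ·) := by
  rw [upl, List.pairwise_reverse]; exact dn_sorted M

theorem upl_nodup (M : ℕ) : (upl M).Nodup := (upl_sorted M).imp (by intro a b h; omega)

theorem mem_upl {M x : ℕ} : x ∈ upl M ↔ 1 ≤ x ∧ x ≤ M := by simp [upl, mem_dn]

theorem mem_desc {M x : ℕ} {p : ℕ → Bool} : x ∈ desc M p ↔ (1 ≤ x ∧ x ≤ M) ∧ p x = true := by
  simp [desc, mem_dn]

theorem desc_sorted (M : ℕ) (p : ℕ → Bool) : (desc M p).Pairwise (· > ·) :=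
  (dn_sorted M).filter _

theorem sorted_unique {x y : List ℕ} (hx : x.Pairwise (· > ·)) (hy : y.Pairwise (· > ·))
    (h : ∀ a, a ∈ x ↔ a ∈ y) : x = y := by
  have hp : x.Perm y := (List.perm_ext_iff_of_nodup (hx.imp (by intro a b h; omega))
    (hy.imp (by intro a b h; omega))).mpr h
  exact hp.eq_of_pairwise (fun a b _ _ h1 h2 => by omega) hx hy

theorem desc_count {M i : ℕ} (h1 : 1 ≤ i) (h2 : i ≤ M) (p : ℕ → Bool) :
    (desc M p).count i = if p i = true then 1 else 0 := by
  have hn : (desc M p).Nodup := (desc_sorted M p).imp (by intro a b h; omega)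
  rw [hn.count]
  simp [mem_desc, h1, h2]

theorem flat_count {M i : ℕ} (h1 : 1 ≤ i) (h2 : i ≤ M) (T : ℕ → ℕ → Bool) (l : List ℕ) :
    (l.flatMap fun k => desc M (T k)).count i = l.countP (fun k => T k i) := by
  induction l with
  | nil => simp
  | cons k l ih =>
    rw [List.flatMap_cons, List.count_append, ih, desc_count h1 h2, List.countP_cons]
    omega

theorem flatMap_split (f : ℕ → List ℕ) (x : ℕ) : ∀ (l w1 w2 : List ℕ),
    l.flatMap f = w1 ++ x :: w2 → ∃ l1 k l2 g1 g2, l = l1 ++ k :: l2 ∧ f k = g1 ++ x :: g2 ∧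
      w1 = l1.flatMap f ++ g1 ∧ w2 = g2 ++ l2.flatMap f := by
  intro l
  induction l with
  | nil => intro w1 w2 h; simp at h
  | cons k l ih =>
    intro w1 w2 h
    rw [List.flatMap_cons, List.append_eq_append_iff] at h
    rcases h with ⟨a, rfl, h2⟩ | ⟨c, h1, h2⟩
    · obtain ⟨l1, k', l2, g1, g2, rfl, e2, rfl, rfl⟩ := ih _ _ h2
      exact ⟨k :: l1, k', l2, g1, g2, by simp, e2, by simp, rfl⟩
    · cases c with
      | nil =>
        simp only [List.nil_append] at h2
        obtain ⟨l1, k', l2, g1, g2, rfl, e2, e3, rfl⟩ := ih [] w2 (by simp [h2])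
        refine ⟨k :: l1, k', l2, g1, g2, by simp, e2, ?_, rfl⟩
        simp only [List.append_nil] at h1
        rw [List.flatMap_cons, List.append_assoc, ← e3, h1]; simp
      | cons y c =>
        simp only [List.cons_append, List.cons.injEq] at h2
        obtain ⟨rfl, rfl⟩ := h2
        exact ⟨[], k, l, w1, c, by simp, h1, by simp, rfl⟩

/-- replace `i` by `i+1` in row `k` -/
def mv (T : ℕ → ℕ → Bool) (k i : ℕ) : ℕ → ℕ → Bool := fun x y =>
  if x = k ∧ y = i then false else if x = k ∧ y = i + 1 then true else T x y

theorem grp_fw {M i : ℕ} (h1 : 1 ≤ i) (h2 : i + 1 ≤ M) (T : ℕ → ℕ → Bool) (l : List ℕ)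
    (hl : l.Nodup) {w' : List ℕ}
    (h : fw i 0 (l.flatMap fun k => desc M (T k)) = some w') :
    ∃ k l1 l2, l = l1 ++ k :: l2 ∧ T k i = true ∧ T k (i + 1) = false ∧
      (w' = l.flatMap fun k' => desc M (mv T k i k')) ∧
      (∀ u1 u2, l1 = u1 ++ u2 → u2.countP (fun k => T k (i + 1)) ≤ u2.countP (fun k => T k i)) ∧
      (∀ v1 v2, l2 = v1 ++ v2 → v1.countP (fun k => T k i) ≤ v1.countP (fun k => T k (i + 1))) ∧
      (∃ q1 q2, (l.flatMap fun k => desc M (T k)) = q1 ++ i :: q2 ∧ st i 0 q1 = 0 ∧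
        fw i 0 q2 = none ∧ ∃ g1 g2, q1 = (l1.flatMap fun k => desc M (T k)) ++ g1 ∧
        desc M (T k) = g1 ++ i :: g2) := by
  obtain ⟨w1, w2, e1, e2, e3, e4⟩ := fw_decomp h
  obtain ⟨l1, k, l2, g1, g2, rfl, f2, rfl, rfl⟩ := flatMap_split _ i l w1 w2 e1
  have hs := desc_sorted M (T k)
  rw [f2, List.pairwise_append, List.pairwise_cons] at hs
  obtain ⟨hs1, ⟨hs2, hs3⟩, hs4⟩ := hs
  have hg1 : ∀ x ∈ g1, i < x := fun x hx => hs4 x hx i (by simp)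
  have hg2 : ∀ x ∈ g2, x < i := hs2
  have hki : T k i = true := by
    have : i ∈ desc M (T k) := by rw [f2]; simp
    exact (mem_desc.mp this).2
  have hg1i : g1.count i = 0 := List.count_eq_zero.mpr (fun hx => by have := hg1 i hx; omega)
  have hg2i : g2.count i = 0 := List.count_eq_zero.mpr (fun hx => by have := hg2 i hx; omega)
  have hg2i' : g2.count (i + 1) = 0 := List.count_eq_zero.mpr (fun hx => by have := hg2 _ hx; omega)
  have hg1i' : g1.count (i + 1) = 0 := by
    have := st_zero_suffix e3
    omega
  have hki' : T k (i + 1) = false := by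
    by_contra hT
    have : i + 1 ∈ desc M (T k) := mem_desc.mpr ⟨⟨by omega, h2⟩, by simpa using hT⟩
    rw [f2] at this
    simp only [List.mem_append, List.mem_cons] at this
    rcases this with h | h | h
    · exact List.count_eq_zero.mp hg1i' h
    · omega
    · have := hg2 _ h; omega
  refine ⟨k, l1, l2, rfl, hki, hki', ?_, ?_, ?_, ?_⟩
  · rw [e2]
    rw [List.nodup_append, List.nodup_cons] at hl
    obtain ⟨-, ⟨hk2, -⟩, hk1⟩ := hl
    have c1 : l1.flatMap (fun k' => desc M (mv T k i k')) = l1.flatMap (fun k => desc M (T k)) := by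
      apply List.flatMap_congr
      intro x hx
      have hxk : x ≠ k := hk1 x hx k (by simp)
      congr 1; funext y
      simp [mv, hxk]
    have c2 : l2.flatMap (fun k' => desc M (mv T k i k')) = l2.flatMap (fun k => desc M (T k)) := by
      apply List.flatMap_congr
      intro x hx
      have hxk : x ≠ k := fun h => hk2 (h ▸ hx)
      congr 1; funext y
      simp [mv, hxk]
    have c3 : desc M (mv T k i k) = g1 ++ (i + 1) :: g2 := by
      apply sorted_unique (desc_sorted _ _)
      · rw [List.pairwise_append, List.pairwise_cons]
        refine ⟨hs1, ⟨fun a ha => ?_, hs3⟩, fun a ha b hb => ?_⟩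
        · have := hg2 a ha; omega
        · have h1 := hg1 a ha
          rcases List.mem_cons.mp hb with rfl | hb
          · have : a ≠ i + 1 := fun h => List.count_eq_zero.mp hg1i' (h ▸ ha)
            omega
          · have := hg2 b hb; omega
      · intro x
        have hx : x ∈ desc M (T k) ↔ x ∈ g1 ++ i :: g2 := by rw [f2]
        have hg1x := hg1 x
        have hg2x := hg2 x
        rw [mem_desc] at hx ⊢
        simp only [List.mem_append, List.mem_cons, mv, true_and] at hx ⊢
        by_cases hxi : x = i
        · subst hxi
          simp
          constructor
          · intro h; have := hg1 _ h; omega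
          · intro h; have := hg2 _ h; omega
        · by_cases hxi' : x = i + 1
          · subst hxi'
            simp; omega
          · simp only [hxi, hxi', if_false, false_or] at hx ⊢
            exact hx
    rw [List.flatMap_append, List.flatMap_cons, c1, c2, c3]
    simp
  · rintro u1 u2 rfl
    have e3' := e3
    rw [List.flatMap_append, List.append_assoc] at e3'
    have := st_zero_suffix e3'
    rw [List.count_append, List.count_append, flat_count (by omega) h2,
      flat_count h1 (by omega)] at this
    omega
  · rintro v1 v2 rfl
    have e4' := e4
    rw [List.flatMap_append, ← List.append_assoc] at e4'
    have := fw_none_prefix e4'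
    rw [List.count_append, List.count_append, flat_count (by omega) h2,
      flat_count h1 (by omega)] at this
    omega
  · exact ⟨_, _, e1, e3, e4, g1, g2, rfl, f2⟩

theorem grp_none {M i : ℕ} (h1 : 1 ≤ i) (h2 : i + 1 ≤ M) (T : ℕ → ℕ → Bool) (v1 v2 : List ℕ)
    (h : fw i 0 ((v1 ++ v2).flatMap fun k => desc M (T k)) = none) :
    v1.countP (fun k => T k i) ≤ v1.countP (fun k => T k (i + 1)) := by
  rw [List.flatMap_append] at h
  have := fw_none_prefix h
  rwa [flat_count (by omega) h2, flat_count h1 (by omega)] at this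

theorem two_desc {M a : ℕ} (ha1 : 1 ≤ a) (haM : a ≤ M) {p q p' q' : ℕ → Bool}
    (hp : p a = true) (hp' : p' a = false) (hq : q a = false) (hq' : q' a = true)
    (hpp : ∀ x, x ≠ a → p' x = p x) (hqq : ∀ x, x ≠ a → q' x = q x)
    (hA : ∀ t, (dn M).countP (fun x => decide (a < x) && decide (x ≤ t) && q x) ≤
      (dn M).countP (fun x => decide (a < x) && decide (x ≤ t) && p x))
    (hB : ∀ t, (dn M).countP (fun x => decide (x < a) && decide (t ≤ x) && p x) ≤
      (dn M).countP (fun x => decide (x < a) && decide (t ≤ x) && q x)) :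
    Keq (desc M p ++ desc M q) (desc M p' ++ desc M q') := by
  have key : ∀ {p p' : ℕ → Bool}, p a = true → p' a = false → (∀ x, x ≠ a → p' x = p x) →
      desc M p = (dn M).filter (fun x => decide (a < x) && p x) ++ a ::
        (dn M).filter (fun x => decide (x < a) && p x) ∧
      desc M p' = (dn M).filter (fun x => decide (a < x) && p x) ++
        (dn M).filter (fun x => decide (x < a) && p x) := by
    intro p p' hp hp' hpp
    have hs : ((dn M).filter (fun x => decide (a < x) && p x) ++ a ::
        (dn M).filter (fun x => decide (x < a) && p x)).Pairwise (· > ·) := by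
      rw [List.pairwise_append, List.pairwise_cons]
      refine ⟨(dn_sorted M).filter _, ⟨?_, (dn_sorted M).filter _⟩, ?_⟩
      · intro x hx; simp at hx; omega
      · intro x hx y hy; simp at hx hy; omega
    constructor
    · apply sorted_unique (desc_sorted _ _) hs
      intro x
      rw [mem_desc]
      simp only [List.mem_append, List.mem_cons, List.mem_filter, mem_dn, Bool.and_eq_true,
        decide_eq_true_eq]
      rcases lt_trichotomy x a with h | h | h
      · have : ¬ a < x := by omega
        have : x ≠ a := by omega
        simp_all
      · subst h; simp_all
      · have : ¬ x < a := by omega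
        have : x ≠ a := by omega
        simp_all
    · apply sorted_unique (desc_sorted _ _) (hs.sublist (by simp))
      intro x
      rw [mem_desc]
      simp only [List.mem_append, List.mem_filter, mem_dn, Bool.and_eq_true,
        decide_eq_true_eq]
      rcases lt_trichotomy x a with h | h | h
      · have : ¬ a < x := by omega
        rw [hpp x (by omega)]
        simp_all
      · subst h; simp_all
      · have : ¬ x < a := by omega
        rw [hpp x (by omega)]
        simp_all
  obtain ⟨k1, k2⟩ := key hp hp' hpp
  obtain ⟨k3, k4⟩ := key hq' hq (fun x hx => (hqq x hx).symm)
  have k1s := desc_sorted M p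
  have k3s := desc_sorted M q'
  rw [k1] at k1s
  rw [k3] at k3s
  rw [k1, k2, k3, k4]
  apply two_col _ _ _ _ _ k1s k3s
  · intro t
    rw [List.countP_filter, List.countP_filter]
    have := hA t
    refine le_trans (le_of_eq ?_) (le_trans this (le_of_eq ?_))
    · apply List.countP_congr
      intro x _
      by_cases hx : x = a
      · subst hx; simp
      · simp [hqq x hx]; tauto
    · apply List.countP_congr
      intro x _
      simp; tauto
  · intro t
    rw [List.countP_filter, List.countP_filter]
    have := hB t
    refine le_trans (le_of_eq ?_) (le_trans this (le_of_eq ?_))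
    · apply List.countP_congr
      intro x _
      simp; tauto
    · apply List.countP_congr
      intro x _
      by_cases hx : x = a
      · subst hx; simp
      · simp [hqq x hx]; tauto

end Crys


namespace Crys

theorem pre_split (q : ℕ → Bool) : ∀ l : List ℕ, l.Pairwise (fun x y => q y = true → q x = true) →
    l = l.filter q ++ l.filter (fun x => !q x) := by
  intro l
  induction l with
  | nil => simp
  | cons a l ih =>
    intro h
    rw [List.pairwise_cons] at h
    by_cases hq : q a = true
    · simp only [List.filter_cons, hq, if_true, Bool.not_true]
      rw [List.cons_append]
      simpa using ih h.2
    · have : l.filter q = [] := by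
        rw [List.filter_eq_nil_iff]
        intro x hx hqx
        exact hq (h.1 x hx hqx)
      have h2 : l.filter (fun x => !q x) = l := by
        rw [List.filter_eq_self]
        intro x hx
        have := List.filter_eq_nil_iff.mp this x hx
        simpa using this
      simp [List.filter_cons, hq, this, h2]

theorem suf_split (q : ℕ → Bool) (l : List ℕ) (h : l.Pairwise (fun x y => q x = true → q y = true)) :
    l = l.filter (fun x => !q x) ++ l.filter q := by
  have := pre_split (fun x => !q x) l (h.imp (by
    intro a b hab hb
    cases ha : q a
    · rfl
    · rw [hab ha] at hb; simp at hb))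
  simpa using this

theorem countP_split_right {l l1 l2 : List ℕ} {k : ℕ} (hl : l = l1 ++ k :: l2) (q p : ℕ → Bool)
    (h1 : ∀ x ∈ l1, q x = false) (hk : q k = false) :
    (l2.filter q).countP p = l.countP (fun x => q x && p x) := by
  subst hl
  rw [List.countP_append, List.countP_cons, List.countP_filter]
  have : l1.countP (fun x => q x && p x) = 0 := by
    rw [List.countP_eq_zero]; intro x hx; simp [h1 x hx]
  rw [this]
  simp only [hk, Bool.false_and, Bool.false_eq_true, if_false, add_zero, zero_add]
  apply List.countP_congr
  intro x _; simp; tauto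

theorem countP_split_left {l l1 l2 : List ℕ} {k : ℕ} (hl : l = l1 ++ k :: l2) (q p : ℕ → Bool)
    (h1 : ∀ x ∈ l2, q x = false) (hk : q k = false) :
    (l1.filter q).countP p = l.countP (fun x => q x && p x) := by
  subst hl
  rw [List.countP_append, List.countP_cons, List.countP_filter]
  have : l2.countP (fun x => q x && p x) = 0 := by
    rw [List.countP_eq_zero]; intro x hx; simp [h1 x hx]
  rw [this]
  simp only [hk, Bool.false_and, Bool.false_eq_true, if_false, add_zero, zero_add]
  apply List.countP_congr
  intro x _; simp; tauto

theorem upl_countP (M : ℕ) (p : ℕ → Bool) : (upl M).countP p = (dn M).countP p := by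
  rw [upl, List.countP_reverse]

/-- the word `w` -/
def Wd (n m : ℕ) (S : ℕ → ℕ → Bool) : List ℕ := (upl n).flatMap fun a => desc m (S a)

/-- the word `u'` -/
def Ud (n m : ℕ) (S : ℕ → ℕ → Bool) : List ℕ := (dn m).flatMap fun b => desc n (fun a => S a b)

theorem dn_split {m i : ℕ} (h1 : 1 ≤ i) (h2 : i + 1 ≤ m) : ∃ A B, dn m = A ++ (i + 1) :: i :: B ∧
    (∀ x ∈ A, i + 1 < x) ∧ ∀ x ∈ B, x < i := by
  induction m with
  | zero => omega
  | succ m ih =>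
    by_cases h : i + 1 = m + 1
    · have : i = m := by omega
      subst this
      obtain ⟨j, rfl⟩ : ∃ j, i = j + 1 := ⟨i - 1, by omega⟩
      refine ⟨[], dn j, by simp [dn], by simp, ?_⟩
      intro x hx; have := mem_dn.mp hx; omega
    · obtain ⟨A, B, e, hA, hB⟩ := ih (by omega)
      refine ⟨(m + 1) :: A, B, by simp [dn, e], ?_, hB⟩
      intro x hx
      rcases List.mem_cons.mp hx with rfl | hx
      · omega
      · exact hA x hx

theorem pos_eq {i p : ℕ} {w q1 q2 : List ℕ} (hw : w = q1 ++ i :: q2) (h1 : st i 0 q1 = 0)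
    (h2 : fw i 0 q2 = none) (hp : rightUnmatched w i = some p) : p = q1.length := by
  obtain ⟨e1, e2⟩ := fw_eq_rightUnmatched w i
  obtain ⟨f1, f2, f3, f4⟩ := e2 p hp
  have := fw_comp h1 h2
  rw [← hw, e1, hp] at this
  simp only [Option.map_some, Option.some.injEq] at this
  by_contra hne
  have h := congrArg (fun z => z[q1.length]?) this
  simp [List.getElem?_set, hne, hw] at h

theorem biword_pos {M i p : ℕ} (T : ℕ → ℕ → Bool) {l l1 l2 : List ℕ} {k : ℕ} (hl : l = l1 ++ k :: l2)
    (hw : ∃ q1 q2, (l.flatMap fun k => desc M (T k)) = q1 ++ i :: q2 ∧ st i 0 q1 = 0 ∧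
        fw i 0 q2 = none ∧ ∃ g1 g2, q1 = (l1.flatMap fun k => desc M (T k)) ++ g1 ∧
        desc M (T k) = g1 ++ i :: g2)
    (hp : rightUnmatched (l.flatMap fun k => desc M (T k)) i = some p) :
    (l.flatMap fun k => (desc M (T k)).map (fun b => (k, b)))[p]? = some (k, i) := by
  obtain ⟨q1, q2, e1, e2, e3, g1, g2, rfl, e5⟩ := hw
  have := pos_eq e1 e2 e3 hp
  subst this hl
  rw [List.flatMap_append, List.flatMap_cons, e5]
  have hlen : (l1.flatMap fun k => (desc M (T k)).map (fun b => (k, b))).length =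
      (l1.flatMap fun k => desc M (T k)).length := by
    simp [List.length_flatMap]
  rw [List.getElem?_append_right (by rw [hlen]; simp), hlen]
  simp

theorem W_move {n m i : ℕ} (h1 : 1 ≤ i) (h2 : i + 1 ≤ m) (S : ℕ → ℕ → Bool) {w' : List ℕ}
    (h : fw i 0 (Wd n m S) = some w') :
    ∃ a, (1 ≤ a ∧ a ≤ n) ∧ S a i = true ∧ S a (i + 1) = false ∧ w' = Wd n m (mv S a i) ∧
      Keq (Ud n m S) (Ud n m (mv S a i)) ∧
      ∀ p, rightUnmatched (Wd n m S) i = some p →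
        ((upl n).flatMap fun k => (desc m (S k)).map (fun b => (k, b)))[p]? = some (a, i) := by
  obtain ⟨a, l1, l2, hl, hS, hS', hw, hu, hv, hq⟩ := grp_fw h1 h2 S (upl n) (upl_nodup n) h
  have ha : 1 ≤ a ∧ a ≤ n := by rw [← mem_upl, hl]; simp
  have hs := upl_sorted n
  rw [hl, List.pairwise_append, List.pairwise_cons] at hs
  obtain ⟨s1, ⟨s2, s3⟩, s4⟩ := hs
  have hl1 : ∀ x ∈ l1, x < a := fun x hx => s4 x hx a (by simp)
  refine ⟨a, ha, hS, hS', hw, ?_, fun p hp => biword_pos S hl hq hp⟩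
  obtain ⟨A, B, e, hA, hB⟩ := dn_split h1 h2
  have cA : A.flatMap (fun b => desc n (fun x => mv S a i x b)) =
      A.flatMap (fun b => desc n (fun x => S x b)) := by
    apply List.flatMap_congr
    intro x hx
    have := hA x hx
    congr 1; funext y
    have h1 : x ≠ i := by omega
    have h2 : x ≠ i + 1 := by omega
    simp [mv, h1, h2]
  have cB : B.flatMap (fun b => desc n (fun x => mv S a i x b)) =
      B.flatMap (fun b => desc n (fun x => S x b)) := by
    apply List.flatMap_congr
    intro x hx
    have := hB x hx
    congr 1; funext y
    have h1 : x ≠ i := by omega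
    have h2 : x ≠ i + 1 := by omega
    simp [mv, h1, h2]
  unfold Ud
  rw [e]
  simp only [List.flatMap_append, List.flatMap_cons, cA, cB]
  rw [← List.append_assoc (desc n _) (desc n _), ← List.append_assoc (desc n _) (desc n _)]
  apply Keq.left
  apply Keq.right
  apply Keq.symm
  apply two_desc ha.1 ha.2
  · simp [mv]
  · exact hS'
  · simp [mv]
  · exact hS
  · intro x hx; simp [mv, hx]
  · intro x hx; simp [mv, hx]
  · intro t
    have hsp := pre_split (fun x => decide (a < x) && decide (x ≤ t)) l2 (by
      rw [List.pairwise_iff_forall_sublist] at s3 ⊢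
      intro x y hxy hq
      have := s3 hxy
      have hx := s2 x (hxy.subset (by simp))
      simp at hq ⊢; omega)
    have := hv _ _ hsp
    rw [countP_split_right hl, countP_split_right hl, upl_countP, upl_countP] at this
    · refine le_trans (le_of_eq ?_) (le_trans this (le_of_eq ?_)) <;>
      · apply List.countP_congr
        intro x _
        by_cases hx : x = a <;> simp [mv, hx]
    · intro x hx; have := hl1 x hx; simp; omega
    · simp
    · intro x hx; have := hl1 x hx; simp; omega
    · simp
  · intro t
    have hsp := suf_split (fun x => decide (x < a) && decide (t ≤ x)) l1 (by
      rw [List.pairwise_iff_forall_sublist] at s1 ⊢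
      intro x y hxy hq
      have := s1 hxy
      have hx := hl1 y (hxy.subset (by simp))
      simp at hq ⊢; omega)
    have := hu _ _ hsp
    rw [countP_split_left hl, countP_split_left hl, upl_countP, upl_countP] at this
    · refine le_trans (le_of_eq ?_) (le_trans this (le_of_eq ?_)) <;>
      · apply List.countP_congr
        intro x _
        by_cases hx : x = a <;> simp [mv, hx]
    · intro x hx; have := s2 x hx; simp; omega
    · simp
    · intro x hx; have := s2 x hx; simp; omega
    · simp

/-- move in the first coordinate -/
def mvt (S : ℕ → ℕ → Bool) (b j : ℕ) : ℕ → ℕ → Bool := fun x y => mv (fun y x => S x y) b j y x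

theorem U_move {n m j : ℕ} (h1 : 1 ≤ j) (h2 : j + 1 ≤ n) (S : ℕ → ℕ → Bool) {w' : List ℕ}
    (h : fw j 0 (Ud n m S) = some w') :
    ∃ b, (1 ≤ b ∧ b ≤ m) ∧ S j b = true ∧ S (j + 1) b = false ∧ w' = Ud n m (mvt S b j) ∧
      Keq (Wd n m S) (Wd n m (mvt S b j)) ∧
      ∀ p, rightUnmatched (Ud n m S) j = some p →
        ((dn m).flatMap fun k => (desc n (fun a => S a k)).map (fun b => (k, b)))[p]? =
          some (b, j) := by
  obtain ⟨a, l1, l2, hl, hS, hS', hw, hu, hv, hq⟩ :=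
    grp_fw h1 h2 (fun y x => S x y) (dn m) (dn_nodup m) h
  have ha : 1 ≤ a ∧ a ≤ m := by rw [← mem_dn, hl]; simp
  have hs := dn_sorted m
  rw [hl, List.pairwise_append, List.pairwise_cons] at hs
  obtain ⟨s1, ⟨s2, s3⟩, s4⟩ := hs
  have hl1 : ∀ x ∈ l1, x > a := fun x hx => s4 x hx a (by simp)
  refine ⟨a, ha, hS, hS', hw, ?_, fun p hp => biword_pos (fun y x => S x y) hl hq hp⟩
  obtain ⟨A, B, e, hA, hB⟩ := dn_split h1 h2
  have cA : A.reverse.flatMap (fun b => desc m (mvt S a j b)) =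
      A.reverse.flatMap (fun b => desc m (S b)) := by
    apply List.flatMap_congr
    intro x hx
    have := hA x (by simpa using hx)
    congr 1; funext y
    have h1 : x ≠ j := by omega
    have h2 : x ≠ j + 1 := by omega
    simp [mvt, mv, h1, h2]
  have cB : B.reverse.flatMap (fun b => desc m (mvt S a j b)) =
      B.reverse.flatMap (fun b => desc m (S b)) := by
    apply List.flatMap_congr
    intro x hx
    have := hB x (by simpa using hx)
    congr 1; funext y
    have h1 : x ≠ j := by omega
    have h2 : x ≠ j + 1 := by omega
    simp [mvt, mv, h1, h2]
  have e' : upl n = B.reverse ++ j :: (j + 1) :: A.reverse := by rw [upl, e]; simp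
  unfold Wd
  rw [e']
  simp only [List.flatMap_append, List.flatMap_cons, cA, cB]
  rw [← List.append_assoc (desc m _) (desc m _), ← List.append_assoc (desc m _) (desc m _)]
  apply Keq.left
  apply Keq.right
  apply two_desc ha.1 ha.2
  · exact hS
  · simp [mvt, mv]
  · exact hS'
  · simp [mvt, mv]
  · intro x hx; simp [mvt, mv, hx]
  · intro x hx; simp [mvt, mv, hx]
  · intro t
    have hsp := suf_split (fun x => decide (a < x) && decide (x ≤ t)) l1 (by
      rw [List.pairwise_iff_forall_sublist] at s1 ⊢
      intro x y hxy hq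
      have := s1 hxy
      have hx := hl1 y (hxy.subset (by simp))
      simp at hq ⊢; omega)
    have := hu _ _ hsp
    rw [countP_split_left hl, countP_split_left hl] at this
    · exact this
    · intro x hx; have := s2 x hx; simp; omega
    · simp
    · intro x hx; have := s2 x hx; simp; omega
    · simp
  · intro t
    have hsp := pre_split (fun x => decide (x < a) && decide (t ≤ x)) l2 (by
      rw [List.pairwise_iff_forall_sublist] at s3 ⊢
      intro x y hxy hq
      have := s3 hxy
      have hx := s2 x (hxy.subset (by simp))
      simp at hq ⊢; omega)
    have := hv _ _ hsp
    rw [countP_split_right hl, countP_split_right hl] at this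
    · exact this
    · intro x hx; have := hl1 x hx; simp; omega
    · simp
    · intro x hx; have := hl1 x hx; simp; omega
    · simp

end Crys


namespace Crys

theorem K3.perm {a b : List ℕ} (h : K3 a b) : a.Perm b := by
  cases h with
  | a _ _ => exact List.Perm.cons _ (List.Perm.swap _ _ _)
  | b _ _ => exact List.Perm.swap _ _ _

theorem Keq.perm {a b : List ℕ} (h : Keq a b) : a.Perm b := by
  induction h with
  | rel a b h =>
    cases h with
    | mk u v h => exact (h.perm.append_left u).append_right v
  | refl a => exact List.Perm.refl _
  | symm a b _ ih => exact ih.symm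
  | trans a b c _ _ ih1 ih2 => exact ih1.trans ih2

theorem up_closed {M : ℕ} {p : ℕ → Bool}
    (h : ∀ x, 1 ≤ x → x + 1 ≤ M → p x = true → p (x + 1) = true) :
    ∃ d, d ≤ M ∧ desc M p = topcol M d ∧ (dn M).countP p = d ∧
      ∀ r, r < d ↔ (r < M ∧ p (M - r) = true) := by
  have key : ∃ d, d ≤ M ∧ ∀ x, 1 ≤ x → x ≤ M → (p x = true ↔ M < x + d) := by
    by_cases hx : ∃ x, 1 ≤ x ∧ x ≤ M ∧ p x = true
    · classical
      have hs := Nat.find_spec hx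
      have hm := fun y => Nat.find_min hx (m := y)
      generalize Nat.find hx = x0 at hs hm
      refine ⟨M + 1 - x0, by omega, ?_⟩
      have up : ∀ k, x0 + k ≤ M → p (x0 + k) = true := by
        intro k
        induction k with
        | zero => intro _; exact hs.2.2
        | succ k ih =>
          intro hk
          exact h (x0 + k) (by omega) (by omega) (ih (by omega))
      intro x hx1 hxM
      constructor
      · intro hp
        by_contra hlt
        exact hm x (by omega) ⟨hx1, hxM, hp⟩
      · intro hlt
        have := up (x - x0) (by omega)
        rwa [show x0 + (x - x0) = x by omega] at this
    · refine ⟨0, by omega, ?_⟩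
      intro x hx1 hxM
      constructor
      · intro hp; exact absurd ⟨x, hx1, hxM, hp⟩ hx
      · intro; omega
  obtain ⟨d, hd, hp⟩ := key
  have e : desc M p = topcol M d := by
    apply sorted_unique (desc_sorted _ _) (topcol_sorted _ _ hd)
    intro x
    rw [mem_desc, mem_topcol M d x hd]
    constructor
    · rintro ⟨⟨h1, h2⟩, h3⟩
      exact ⟨(hp x h1 h2).mp h3, h2⟩
    · rintro ⟨h1, h2⟩
      have : 1 ≤ x := by omega
      exact ⟨⟨this, h2⟩, (hp x this h2).mpr h1⟩
  have hlen : ∀ d, (topcol M d).length = d := by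
    intro d
    induction d with
    | zero => rfl
    | succ d ih => simp [topcol, ih]
  refine ⟨d, hd, e, ?_, ?_⟩
  · rw [List.countP_eq_length_filter]
    have := congrArg List.length e
    rw [hlen] at this
    exact this
  · intro r
    constructor
    · intro hr
      exact ⟨by omega, (hp (M - r) (by omega) (by omega)).mpr (by omega)⟩
    · rintro ⟨h1, h2⟩
      have := (hp (M - r) (by omega) (by omega)).mp h2
      omega

theorem shape_low {M N : ℕ} (T : ℕ → ℕ → Bool) (l : List ℕ) (hl : ∀ x ∈ l, 1 ≤ x ∧ x ≤ N)
    (hlc : ∀ p : ℕ → Bool, l.countP p = (dn N).countP p)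
    (h1 : ∀ a, 1 ≤ a → a ≤ N → ∀ b, 1 ≤ b → b + 1 ≤ M → T a b = true → T a (b + 1) = true)
    (h2 : ∀ b, 1 ≤ b → b ≤ M → ∀ a, 1 ≤ a → a + 1 ≤ N → T a b = true → T (a + 1) b = true)
    (r c : ℕ) :
    c < ((Pword (l.flatMap fun k => desc M (T k))).getD r []).length ↔
      c < N ∧ r < M ∧ T (N - c) (M - r) = true := by
  have hd : ∀ k, ∃ d, (1 ≤ k ∧ k ≤ N) → d ≤ M ∧ desc M (T k) = topcol M d ∧
      ∀ r, r < d ↔ (r < M ∧ T k (M - r) = true) := by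
    intro k
    by_cases hk : 1 ≤ k ∧ k ≤ N
    · obtain ⟨d, e1, e2, _, e4⟩ := up_closed (h1 k hk.1 hk.2)
      exact ⟨d, fun _ => ⟨e1, e2, e4⟩⟩
    · exact ⟨0, fun h => absurd h hk⟩
  choose d hd using hd
  have e : (l.flatMap fun k => desc M (T k)) = (l.map d).flatMap (topcol M) := by
    rw [List.flatMap_map]
    apply List.flatMap_congr
    intro x hx
    exact (hd x (hl x hx)).2.1
  rw [e, shape_top' M r _ (by
    intro x hx
    obtain ⟨k, hk, rfl⟩ := List.mem_map.mp hx
    exact (hd k (hl k hk)).1), List.countP_map]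
  by_cases hr : r < M
  · have : l.countP ((fun d => decide (r < d)) ∘ d) = l.countP (fun k => T k (M - r)) := by
      apply List.countP_congr
      intro x hx
      have := (hd x (hl x hx)).2.2 r
      simp [this, hr]
    rw [this, hlc]
    obtain ⟨e, _, _, e3, e4⟩ := up_closed (h2 (M - r) (by omega) (by omega))
    rw [e3, e4 c]
    simp [hr]
  · have : l.countP ((fun d => decide (r < d)) ∘ d) = 0 := by
      rw [List.countP_eq_zero]
      intro x hx
      have := (hd x (hl x hx)).1
      simp; omega
    rw [this]
    simp [hr]

theorem low_closed {n m : ℕ} (S : ℕ → ℕ → Bool)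
    (hW : ∀ i, 1 ≤ i → i + 1 ≤ m → fw i 0 (Wd n m S) = none)
    (hU : ∀ j, 1 ≤ j → j + 1 ≤ n → fw j 0 (Ud n m S) = none) :
    ∀ a, a + 1 ≤ n → (∀ b, 1 ≤ b → b + 1 ≤ m → S (a + 1) b = true → S (a + 1) (b + 1) = true) ∧
      (∀ a', 1 ≤ a' → a' ≤ a → ∀ b, 1 ≤ b → b ≤ m → S a' b = true → S (a + 1) b = true) := by
  intro a
  induction a with
  | zero =>
    intro hn
    refine ⟨?_, fun a' h1 h2 => by omega⟩
    intro b hb hbm hS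
    have e := pre_split (fun x => decide (x ≤ 1)) (upl n) ((upl_sorted n).imp (by
      intro x y h; simp; omega))
    have := grp_none hb hbm S _ _ (by rw [← e]; exact hW b hb hbm)
    have hpos : 0 < ((upl n).filter (fun x => decide (x ≤ 1))).countP (fun k => S k b) := by
      rw [List.countP_pos_iff]
      exact ⟨1, by simp [mem_upl]; omega, by simpa using hS⟩
    obtain ⟨k, hk, hk'⟩ := List.countP_pos_iff.mp (lt_of_lt_of_le hpos this)
    simp [mem_upl] at hk
    have : k = 1 := by omega
    subst this
    simpa using hk'
  | succ a ih =>
    intro hn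
    obtain ⟨i1, i2⟩ := ih (by omega)
    have sub : ∀ b, 1 ≤ b → b ≤ m → S (a + 1) b = true → S (a + 1 + 1) b = true := by
      intro b hb hbm hS
      have e := pre_split (fun x => decide (b ≤ x)) (dn m) ((dn_sorted m).imp (by
        intro x y h; simp; omega))
      have := grp_none (by omega) hn (fun y x => S x y) _ _ (by rw [← e]; exact hU (a + 1) (by omega) hn)
      have up : ∀ k, b + k ≤ m → S (a + 1) (b + k) = true := by
        intro k
        induction k with
        | zero => intro _; exact hS
        | succ k ih => intro hk; exact i1 (b + k) (by omega) (by omega) (ih (by omega))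
      have hfull : ((dn m).filter (fun x => decide (b ≤ x))).countP (fun k => S (a + 1) k) =
          ((dn m).filter (fun x => decide (b ≤ x))).length := by
        rw [List.countP_eq_length]
        intro x hx
        simp [mem_dn] at hx
        have := up (x - b) (by omega)
        rwa [show b + (x - b) = x by omega] at this
      have hfull2 := le_antisymm List.countP_le_length (hfull ▸ this)
      rw [List.countP_eq_length] at hfull2
      exact hfull2 b (by simp [mem_dn]; omega)
    have sub' : ∀ a', 1 ≤ a' → a' ≤ a + 1 → ∀ b, 1 ≤ b → b ≤ m → S a' b = true →
        S (a + 1 + 1) b = true := by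
      intro a' h1 h2 b hb hbm hS
      apply sub b hb hbm
      by_cases h : a' = a + 1
      · exact h ▸ hS
      · exact i2 a' h1 (by omega) b hb hbm hS
    refine ⟨?_, sub'⟩
    intro b hb hbm hS
    by_cases hSa : S (a + 1) b = true
    · exact sub (b + 1) (by omega) hbm (i1 b hb hbm hSa)
    have e := pre_split (fun x => decide (x ≤ a + 1 + 1)) (upl n) ((upl_sorted n).imp (by
      intro x y h; simp; omega))
    have := grp_none hb hbm S _ _ (by rw [← e]; exact hW b hb hbm)
    have hpos : 0 < ((upl n).filter (fun x => decide (x ≤ a + 1 + 1))).countP (fun k => S k b) := by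
      rw [List.countP_pos_iff]
      exact ⟨a + 1 + 1, by simp [mem_upl]; omega, by simpa using hS⟩
    obtain ⟨k, hk, hk'⟩ := List.countP_pos_iff.mp (lt_of_lt_of_le hpos this)
    simp [mem_upl] at hk
    by_cases hka : k = a + 1 + 1
    · exact hka ▸ hk'
    · exact sub' k (by omega) (by omega) (b + 1) (by omega) hbm hk'

theorem getD_length_congr {P Q : List (List ℕ)} (h : P.map List.length = Q.map List.length)
    (r : ℕ) : (P.getD r []).length = (Q.getD r []).length := by
  have := congrArg (fun z => z.getD r 0) h
  simp only [List.getD_eq_getElem?_getD, List.getElem?_map] at this ⊢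
  cases h1 : P[r]? <;> cases h2 : Q[r]? <;> simp_all

theorem fw_sum {i e : ℕ} {w w' : List ℕ} (h : fw i e w = some w') : w'.sum = w.sum + 1 := by
  obtain ⟨w1, w2, rfl, rfl, -⟩ := fw_decomp h
  simp; omega

theorem flat_le {M : ℕ} (T : ℕ → ℕ → Bool) (l : List ℕ) :
    (l.flatMap fun k => desc M (T k)).sum ≤ (l.flatMap fun k => desc M (T k)).length * M := by
  have := List.sum_le_card_nsmul (l.flatMap fun k => desc M (T k)) M (by
    intro x hx
    obtain ⟨k, _, hk⟩ := List.mem_flatMap.mp hx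
    exact (mem_desc.mp hk).1.2)
  simpa using this

/-- the shapes of `P(w)` and `P(u')` are transposes of each other -/
theorem shape_transpose (n m N : ℕ) : ∀ (S : ℕ → ℕ → Bool),
    (Wd n m S).length * m + (Ud n m S).length * n ≤ (Wd n m S).sum + (Ud n m S).sum + N →
    ∀ r c, c < ((Pword (Wd n m S)).getD r []).length ↔ r < ((Pword (Ud n m S)).getD c []).length := by
  induction N using Nat.strong_induction_on with
  | _ N ih =>
  intro S hN r c
  by_cases hW : ∃ i, 1 ≤ i ∧ i + 1 ≤ m ∧ fw i 0 (Wd n m S) ≠ none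
  · obtain ⟨i, h1, h2, h3⟩ := hW
    obtain ⟨w', hw'⟩ := Option.ne_none_iff_exists'.mp h3
    obtain ⟨a, -, -, -, e, hK, -⟩ := W_move h1 h2 S hw'
    subst e
    have s1 := fw_sum hw'
    have s2 := fw_length hw'
    have s3 := hK.perm.sum_eq
    have s4 := hK.perm.length_eq
    have hle1 : (Wd n m (mv S a i)).sum ≤ (Wd n m (mv S a i)).length * m := flat_le _ _
    have hle2 : (Ud n m (mv S a i)).sum ≤ (Ud n m (mv S a i)).length * n :=
      flat_le (fun y x => mv S a i x y) _
    rw [s2] at hle1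
    rw [← s4] at hle2
    have := ih (N - 1) (by omega) (mv S a i) (by rw [s2, ← s4]; omega) r c
    rw [getD_length_congr (Pword_fw_some hw').2, ← Pword_Keq hK] at this
    exact this
  by_cases hU : ∃ i, 1 ≤ i ∧ i + 1 ≤ n ∧ fw i 0 (Ud n m S) ≠ none
  · obtain ⟨i, h1, h2, h3⟩ := hU
    obtain ⟨w', hw'⟩ := Option.ne_none_iff_exists'.mp h3
    obtain ⟨a, -, -, -, e, hK, -⟩ := U_move h1 h2 S hw'
    subst e
    have s1 := fw_sum hw'
    have s2 := fw_length hw'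
    have s3 := hK.perm.sum_eq
    have s4 := hK.perm.length_eq
    have hle1 : (Wd n m (mvt S a i)).sum ≤ (Wd n m (mvt S a i)).length * m := flat_le _ _
    have hle2 : (Ud n m (mvt S a i)).sum ≤ (Ud n m (mvt S a i)).length * n :=
      flat_le (fun y x => mvt S a i x y) _
    rw [s2] at hle2
    rw [← s4] at hle1
    have := ih (N - 1) (by omega) (mvt S a i) (by rw [s2, ← s4]; omega) r c
    rw [getD_length_congr (Pword_fw_some hw').2, ← Pword_Keq hK] at this
    exact this
  push Not at hW hU
  have hc := low_closed S hW hU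
  have c1 : ∀ a, 1 ≤ a → a ≤ n → ∀ b, 1 ≤ b → b + 1 ≤ m → S a b = true → S a (b + 1) = true := by
    intro a ha han
    have := (hc (a - 1) (by omega)).1
    rwa [show a - 1 + 1 = a by omega] at this
  have c2 : ∀ b, 1 ≤ b → b ≤ m → ∀ a, 1 ≤ a → a + 1 ≤ n → S a b = true → S (a + 1) b = true := by
    intro b hb hbm a ha han
    exact (hc a han).2 a ha le_rfl b hb hbm
  have e1 := shape_low S (upl n) (fun x hx => mem_upl.mp hx) (upl_countP n) c1 c2 r c
  have e2 := shape_low (fun y x => S x y) (dn m) (fun x hx => mem_dn.mp hx) (fun _ => rfl) c2 c1 c r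
  unfold Wd Ud
  rw [e1, e2]
  tauto

theorem shape_tr (n m : ℕ) (S : ℕ → ℕ → Bool) (r c : ℕ) :
    c < ((Pword (Wd n m S)).getD r []).length ↔ r < ((Pword (Ud n m S)).getD c []).length :=
  shape_transpose n m _ S (Nat.le_add_left _ _) r c

end Crys


namespace Crys

theorem Pword_getD_zero (w : List ℕ) : (Pword w).getD 0 [] = (wins [] w).1 := by
  by_cases h : w = []
  · subst h; simp [Pword_nil, wins]
  · rw [Pword_ne h]; simp

theorem Pword_getD_succ (w : List ℕ) (r : ℕ) :
    (Pword w).getD (r + 1) [] = (Pword (wins [] w).2).getD r [] := by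
  by_cases h : w = []
  · subst h; simp [Pword_nil, wins]
  · rw [Pword_ne h]; simp

theorem Pword_row_sorted (r : ℕ) : ∀ w, ((Pword w).getD r []).Pairwise (· ≤ ·) := by
  induction r with
  | zero => intro w; rw [Pword_getD_zero]; exact wins_sorted List.Pairwise.nil
  | succ r ih => intro w; rw [Pword_getD_succ]; exact ih _

theorem Pword_rows_ne (N : ℕ) : ∀ w : List ℕ, w.length ≤ N → ∀ R ∈ Pword w, R ≠ [] := by
  induction N with
  | zero =>
    intro w hw
    have : w = [] := List.length_eq_zero_iff.mp (by omega)
    subst this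
    simp [Pword_nil]
  | succ N ih =>
    intro w hw
    by_cases h : w = []
    · subst h; simp [Pword_nil]
    · rw [Pword_ne h]
      intro R hR
      have := wins_lt h
      rcases List.mem_cons.mp hR with rfl | hR
      · intro h0
        have hl := wins_length w []
        rw [h0] at hl
        simp at hl
        omega
      · exact ih _ (by omega) R hR

theorem Pword_lt_length (w : List ℕ) (c : ℕ) :
    c < (Pword w).length ↔ 0 < ((Pword w).getD c []).length := by
  constructor
  · intro h
    rw [List.getD_eq_getElem _ _ h]
    exact List.length_pos_iff.mpr (Pword_rows_ne _ w le_rfl _ (List.getElem_mem h))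
  · intro h
    by_contra hc
    rw [List.getD_eq_default _ _ (by omega)] at h
    simp at h

theorem rins_filter (k : ℕ) : ∀ (R : List ℕ) (v : ℕ), R.Pairwise (· ≤ ·) →
    (v ≤ k → rins (R.filter (fun x => decide (x ≤ k))) v =
      ((rins R v).1.filter (fun x => decide (x ≤ k)), (rins R v).2.filter (fun x => decide (x ≤ k)))) ∧
    (k < v → (rins R v).1.filter (fun x => decide (x ≤ k)) = R.filter (fun x => decide (x ≤ k)) ∧
      (rins R v).2.filter (fun x => decide (x ≤ k)) = []) := by
  intro R
  induction R with
  | nil =>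
    intro v _
    constructor
    · intro h; simp [rins, h]
    · intro h; simp [rins]; omega
  | cons a R ih =>
    intro v hs
    rw [List.pairwise_cons] at hs
    obtain ⟨i1, i2⟩ := ih v hs.2
    constructor
    · intro h
      by_cases hak : a ≤ k
      · by_cases hva : v < a
        · simp [rins, hva, hak, h]
        · simp [rins, hva, hak, i1 h]
      · have hva : v < a := by omega
        have : R.filter (fun x => decide (x ≤ k)) = [] := by
          rw [List.filter_eq_nil_iff]
          intro x hx
          have := hs.1 x hx
          simp; omega
        simp [rins, hva, hak, h, this]
    · intro h
      by_cases hva : v < a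
      · have : ¬ a ≤ k := by omega
        have : ¬ v ≤ k := by omega
        simp [rins, *]
      · have := i2 h
        by_cases hak : a ≤ k
        · simp [rins, hva, hak, this.1, this.2]
        · simp [rins, hva, hak, this.1, this.2]

theorem wins_filter (k : ℕ) : ∀ (w R : List ℕ), R.Pairwise (· ≤ ·) →
    wins (R.filter (fun x => decide (x ≤ k))) (w.filter (fun x => decide (x ≤ k))) =
      ((wins R w).1.filter (fun x => decide (x ≤ k)),
        (wins R w).2.filter (fun x => decide (x ≤ k))) := by
  intro w
  induction w with
  | nil => intro R _; simp [wins]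
  | cons v w ih =>
    intro R hR
    obtain ⟨h1, h2⟩ := rins_filter k R v hR
    have := ih _ (rins_sorted hR v)
    by_cases hv : v ≤ k
    · simp [hv, wins, h1 hv, this]
    · obtain ⟨h3, h4⟩ := h2 (by omega)
      rw [h3] at this
      simp [hv, wins, h4, this]

theorem Pword_filter (k r : ℕ) : ∀ w : List ℕ,
    (Pword (w.filter (fun x => decide (x ≤ k)))).getD r [] =
      ((Pword w).getD r []).filter (fun x => decide (x ≤ k)) := by
  induction r with
  | zero =>
    intro w
    have := wins_filter k w [] List.Pairwise.nil
    rw [Pword_getD_zero, Pword_getD_zero]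
    rw [List.filter_nil] at this
    rw [this]
  | succ r ih =>
    intro w
    have := wins_filter k w [] List.Pairwise.nil
    rw [Pword_getD_succ, Pword_getD_succ]
    rw [List.filter_nil] at this
    rw [this]
    exact ih _

theorem sorted_filter_idx {R : List ℕ} (h : R.Pairwise (· ≤ ·)) (k r : ℕ) :
    r < (R.filter (fun x => decide (x ≤ k))).length ↔ ∃ x, R[r]? = some x ∧ x ≤ k := by
  have e := pre_split (fun x => decide (x ≤ k)) R (h.imp (by intro a b h; simp; omega))
  generalize hA : R.filter (fun x => decide (x ≤ k)) = A at e
  generalize hB : R.filter (fun x => !decide (x ≤ k)) = B at e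
  have hA' : ∀ x ∈ A, x ≤ k := by intro x hx; rw [← hA] at hx; simp at hx; exact hx.2
  have hB' : ∀ x ∈ B, k < x := by intro x hx; rw [← hB] at hx; simp at hx; exact hx.2
  rw [e]
  constructor
  · intro hr
    refine ⟨A[r], ?_, hA' _ (List.getElem_mem hr)⟩
    rw [List.getElem?_append_left hr, List.getElem?_eq_getElem hr]
  · rintro ⟨x, hx, hxk⟩
    by_contra hr
    rw [List.getElem?_append_right (by omega)] at hx
    have := hB' x (List.mem_of_getElem? hx)
    omega

theorem filter_dn_le {n k : ℕ} (hk : k ≤ n) (p : ℕ → Bool) :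
    (desc n p).filter (fun x => decide (x ≤ k)) = desc k p := by
  apply sorted_unique ((desc_sorted n p).filter _) (desc_sorted k p)
  intro x
  simp only [List.mem_filter, mem_desc, decide_eq_true_eq]
  constructor
  · rintro ⟨⟨h1, h2⟩, h3⟩; exact ⟨⟨h1.1, h3⟩, h2⟩
  · rintro ⟨h1, h2⟩; exact ⟨⟨⟨h1.1, by omega⟩, h2⟩, h1.2⟩

theorem Ud_filter {n m k : ℕ} (hk : k ≤ n) (S : ℕ → ℕ → Bool) :
    (Ud n m S).filter (fun x => decide (x ≤ k)) = Ud k m S := by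
  unfold Ud
  rw [List.filter_flatMap]
  apply List.flatMap_congr
  intro x _
  exact filter_dn_le hk _

theorem V_th {n m k : ℕ} (hk : k ≤ n) (S : ℕ → ℕ → Bool) (r c : ℕ) :
    r < ((Pword (Ud k m S)).getD c []).length ↔
      ∃ x, ((Pword (Ud n m S)).getD c [])[r]? = some x ∧ x ≤ k := by
  rw [← Ud_filter hk, Pword_filter]
  exact sorted_filter_idx (Pword_row_sorted c _) k r

/-! recording tableau -/

theorem insRow_grow : ∀ (P : List (List ℕ)) (v : ℕ), ∃ r, r ≤ P.length ∧
    (insRow v P).length = max P.length (r + 1) ∧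
    ∀ s, ((insRow v P).getD s []).length = (P.getD s []).length + if s = r then 1 else 0 := by
  intro P
  induction P with
  | nil =>
    intro v
    refine ⟨0, by simp, by simp [insRow], ?_⟩
    intro s
    cases s <;> simp [insRow]
  | cons R P ih =>
    intro v
    unfold insRow
    split
    · refine ⟨0, by simp, by simp, ?_⟩
      intro s
      cases s <;> simp
    · rename_i idx _
      obtain ⟨r, h1, h2, h3⟩ := ih (R.getD idx 0)
      refine ⟨r + 1, by simp; omega, by rw [List.length_cons, h2, List.length_cons]; omega, ?_⟩
      intro s
      cases s with
      | zero => simp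
      | succ s => simpa using h3 s

theorem growIdx_eq {P P' : List (List ℕ)} {r : ℕ} (h1 : r < P'.length)
    (h2 : ∀ s, (P'.getD s []).length = (P.getD s []).length + if s = r then 1 else 0) :
    growIdx P P' = r := by
  unfold growIdx
  rw [List.findIdx_eq (by simpa using h1)]
  constructor
  · have := h2 r
    simp at this ⊢; omega
  · intro j hj
    have := h2 j
    have hne : j ≠ r := by omega
    simp [hne] at this ⊢; omega

/-- invariant for RSK pairs -/
def Inv (PQ : List (List ℕ) × List (List ℕ)) : Prop :=
  PQ.1.length = PQ.2.length ∧ ∀ s, (PQ.1.getD s []).length = (PQ.2.getD s []).length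

/-- one RSK step -/
def stepR (PQ : List (List ℕ) × List (List ℕ)) (ab : ℕ × ℕ) : List (List ℕ) × List (List ℕ) :=
  (insRow ab.2 PQ.1, addBox PQ.2 (growIdx PQ.1 (insRow ab.2 PQ.1)) ab.1)

theorem rsk_eq (w : List (ℕ × ℕ)) : rsk w = w.foldl stepR ([], []) := rfl

theorem step_inv {PQ : List (List ℕ) × List (List ℕ)} (h : Inv PQ) (ab : ℕ × ℕ) :
    Inv (stepR PQ ab) ∧ ∀ s, ∃ z, (stepR PQ ab).2.getD s [] = PQ.2.getD s [] ++ z ∧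
      ∀ x ∈ z, x = ab.1 := by
  obtain ⟨P, Q⟩ := PQ
  obtain ⟨a, b⟩ := ab
  obtain ⟨h1, h2⟩ := h
  obtain ⟨r, r1, r2, r3⟩ := insRow_grow P b
  have hg := growIdx_eq (by omega) r3
  simp only [stepR, hg, Inv] at *
  have hq : (addBox Q r a).length = max Q.length (r + 1) ∧
      ∀ s, (addBox Q r a).getD s [] = Q.getD s [] ++ if s = r then [a] else [] := by
    unfold addBox
    split
    · rename_i hr
      refine ⟨by simp; omega, ?_⟩
      intro s
      by_cases hs : s = r
      · subst hs; simp [List.getD_eq_getElem?_getD, hr]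
      · have : r ≠ s := fun h => hs h.symm
        simp [List.getD_eq_getElem?_getD, hs, this]
    · rename_i hr
      have hr' : r = Q.length := by omega
      subst hr'
      refine ⟨by simp, ?_⟩
      intro s
      rcases lt_trichotomy s Q.length with hs | hs | hs
      · have : s ≠ Q.length := by omega
        simp [List.getD_eq_getElem?_getD, this, List.getElem?_append_left hs]
      · subst hs; simp [List.getD_eq_getElem?_getD]
      · have : s ≠ Q.length := by omega
        rw [List.getD_eq_default _ _ (by simp; omega), List.getD_eq_default _ _ (by omega)]
        simp [this]
  refine ⟨⟨by rw [r2, hq.1, h1], ?_⟩, ?_⟩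
  · intro s
    rw [r3, hq.2, h2]
    split <;> simp
  · intro s
    refine ⟨_, hq.2 s, ?_⟩
    intro x hx
    split at hx <;> simp at hx
    exact hx

theorem foldl_inv (v : List (ℕ × ℕ)) : ∀ {PQ : List (List ℕ) × List (List ℕ)}, Inv PQ →
    Inv (v.foldl stepR PQ) ∧ ∀ s, ∃ z, (v.foldl stepR PQ).2.getD s [] = PQ.2.getD s [] ++ z ∧
      ∀ x ∈ z, x ∈ v.map Prod.fst := by
  induction v with
  | nil => intro PQ h; exact ⟨h, fun s => ⟨[], by simp, by simp⟩⟩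
  | cons ab v ih =>
    intro PQ h
    obtain ⟨h1, h2⟩ := step_inv h ab
    obtain ⟨h3, h4⟩ := ih h1
    refine ⟨h3, fun s => ?_⟩
    obtain ⟨z1, e1, f1⟩ := h2 s
    obtain ⟨z2, e2, f2⟩ := h4 s
    refine ⟨z1 ++ z2, ?_, ?_⟩
    · rw [List.foldl_cons, e2, e1]; simp
    · intro x hx
      rcases List.mem_append.mp hx with hx | hx
      · rw [f1 x hx]; simp
      · have := f2 x hx; simp at this ⊢; right; exact this

theorem rsk_inv (w : List (ℕ × ℕ)) : Inv (rsk w) := (foldl_inv w ⟨rfl, by simp⟩).1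

theorem rsk_append (u v : List (ℕ × ℕ)) (s : ℕ) : ∃ z,
    (rsk (u ++ v)).2.getD s [] = (rsk u).2.getD s [] ++ z ∧ ∀ x ∈ z, x ∈ v.map Prod.fst := by
  have := (foldl_inv v (rsk_inv u)).2 s
  simp only [rsk_eq, List.foldl_append] at *
  exact this

theorem rsk_fst (w : List (ℕ × ℕ)) : (rsk w).1 = Pword (w.map Prod.snd) := by
  have : ∀ (w : List (ℕ × ℕ)) PQ, (w.foldl stepR PQ).1 =
      (w.map Prod.snd).foldl (fun t v => insRow v t) PQ.1 := by
    intro w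
    induction w with
    | nil => intro PQ; rfl
    | cons a w ih => intro PQ; simp only [List.foldl_cons, List.map_cons, ih]; rfl
  rw [rsk_eq, this]; rfl

/-- the biword of `S` -/
def Bd (n m : ℕ) (S : ℕ → ℕ → Bool) : List (ℕ × ℕ) :=
  (upl n).flatMap fun k => (desc m (S k)).map (fun b => (k, b))

theorem Bd_snd (n m : ℕ) (S : ℕ → ℕ → Bool) : (Bd n m S).map Prod.snd = Wd n m S := by
  simp [Bd, Wd, List.map_flatMap, Function.comp_def]

theorem Bd_split {n m k : ℕ} (hk : k ≤ n) (S : ℕ → ℕ → Bool) : ∃ v,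
    Bd n m S = Bd k m S ++ v ∧ (∀ x ∈ v.map Prod.fst, k < x) ∧
      ∀ x ∈ (Bd k m S).map Prod.fst, x ≤ k := by
  have : ∃ l, upl n = upl k ++ l ∧ ∀ x ∈ l, k < x := by
    obtain ⟨d, rfl⟩ := Nat.exists_eq_add_of_le hk
    clear hk
    induction d with
    | zero => exact ⟨[], by simp, by simp⟩
    | succ d ih =>
      obtain ⟨l, e, h⟩ := ih
      refine ⟨l ++ [k + d + 1], ?_, ?_⟩
      · rw [← List.append_assoc, ← e, ← add_assoc]; simp [upl, dn]
      · intro x hx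
        rcases List.mem_append.mp hx with hx | hx
        · exact h x hx
        · simp at hx; omega
  obtain ⟨l, e, hl⟩ := this
  refine ⟨l.flatMap fun k => (desc m (S k)).map (fun b => (k, b)), ?_, ?_, ?_⟩
  · rw [Bd, e, List.flatMap_append]; rfl
  · intro x hx
    obtain ⟨y, hy, rfl⟩ := List.mem_map.mp hx
    obtain ⟨k', hk', hy'⟩ := List.mem_flatMap.mp hy
    obtain ⟨b, _, rfl⟩ := List.mem_map.mp hy'
    exact hl _ hk'
  · intro x hx
    obtain ⟨y, hy, rfl⟩ := List.mem_map.mp hx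
    obtain ⟨k', hk', hy'⟩ := List.mem_flatMap.mp hy
    obtain ⟨b, _, rfl⟩ := List.mem_map.mp hy'
    exact (mem_upl.mp hk').2

theorem Q_th {n m k : ℕ} (hk : k ≤ n) (S : ℕ → ℕ → Bool) (r c : ℕ) :
    c < ((Pword (Wd k m S)).getD r []).length ↔
      ∃ x, ((rsk (Bd n m S)).2.getD r [])[c]? = some x ∧ x ≤ k := by
  obtain ⟨v, e, h1, h2⟩ := Bd_split (m := m) hk S
  obtain ⟨z, ez, hz⟩ := rsk_append (Bd k m S) v r
  obtain ⟨z', ez', hz'⟩ := rsk_append [] (Bd k m S) r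
  have hi := (rsk_inv (Bd k m S)).2 r
  rw [rsk_fst, Bd_snd] at hi
  rw [hi, e, ez]
  have hmem : ∀ x ∈ (rsk (Bd k m S)).2.getD r [], x ≤ k := by
    intro x hx
    rw [← List.nil_append (Bd k m S), ez'] at hx
    simp [rsk_eq] at hx
    exact h2 x (hz' x hx)
  generalize (rsk (Bd k m S)).2.getD r [] = A at hmem
  constructor
  · intro hc
    exact ⟨A[c], by rw [List.getElem?_append_left hc, List.getElem?_eq_getElem hc],
      hmem _ (List.getElem_mem hc)⟩
  · rintro ⟨x, hx, hxk⟩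
    by_contra hc
    rw [List.getElem?_append_right (by omega)] at hx
    have := h1 x (hz x (List.mem_of_getElem? hx))
    omega

theorem filterMap_col (c : ℕ) : ∀ (Q : List (List ℕ)) (h : ℕ),
    (∀ r, c < (Q.getD r []).length ↔ r < h) →
    ∀ r, (Q.filterMap fun row => row[c]?)[r]? = (Q.getD r [])[c]? := by
  intro Q
  induction Q with
  | nil => intro h _ r; simp
  | cons R Q ih =>
    intro h hh r
    cases h with
    | zero =>
      have hall : ∀ r, ((R :: Q).getD r [])[c]? = none := by
        intro r
        have := hh r
        rw [List.getElem?_eq_none_iff]; omega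
      rw [hall r]
      have : ((R :: Q).filterMap fun row => row[c]?) = [] := by
        rw [List.filterMap_eq_nil_iff]
        intro a ha
        obtain ⟨s, hs, rfl⟩ := List.getElem_of_mem ha
        have := hall s
        rwa [List.getD_eq_getElem _ _ hs] at this
      rw [this]; simp
    | succ h =>
      have h0 : c < R.length := by simpa using (hh 0)
      rw [List.filterMap_cons_some (f := fun row : List ℕ => row[c]?) (List.getElem?_eq_getElem h0)]
      cases r with
      | zero => simp [h0]
      | succ r =>
        have := ih h (fun r => by simpa using hh (r + 1)) r
        simpa using this

theorem transpose_rsk (n m : ℕ) (S : ℕ → ℕ → Bool) :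
    transposeT (rsk (Bd n m S)).2 = Pword (Ud n m S) := by
  have hlen : ∀ r c, c < ((rsk (Bd n m S)).2.getD r []).length ↔
      r < ((Pword (Ud n m S)).getD c []).length := by
    intro r c
    rw [← shape_tr, ← (rsk_inv (Bd n m S)).2 r, rsk_fst, Bd_snd]
  have hent : ∀ r c, ((rsk (Bd n m S)).2.getD r [])[c]? = ((Pword (Ud n m S)).getD c [])[r]? := by
    intro r c
    have hk : ∀ k, k ≤ n → ((∃ x, ((rsk (Bd n m S)).2.getD r [])[c]? = some x ∧ x ≤ k) ↔
        ∃ x, ((Pword (Ud n m S)).getD c [])[r]? = some x ∧ x ≤ k) := by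
      intro k hk
      rw [← Q_th hk, ← V_th hk, shape_tr]
    have hl := hlen r c
    have q1 := V_th (le_refl n) (m := m) S r c
    have hn := hk n le_rfl
    generalize (rsk (Bd n m S)).2.getD r [] = A at *
    generalize (Pword (Ud n m S)).getD c [] = B at *
    cases hB : B[r]? with
    | none =>
      rw [List.getElem?_eq_none_iff] at hB ⊢
      omega
    | some y =>
      have hr : r < B.length := by
        by_contra h
        rw [List.getElem?_eq_none (by omega)] at hB
        simp at hB
      have hc := hl.mpr hr
      have e1 := q1.mp hr
      rw [hB] at hk hn e1
      rw [List.getElem?_eq_getElem hc] at hk hn ⊢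
      simp only [Option.some.injEq, exists_eq_left'] at *
      have hx := hn.mpr e1
      have k1 := hk _ hx
      have k2 := hk _ e1
      have := k1.mp le_rfl
      have := k2.mpr le_rfl
      omega
  have hL : ((rsk (Bd n m S)).2.getD 0 []).length = (Pword (Ud n m S)).length := by
    have : ∀ c, c < ((rsk (Bd n m S)).2.getD 0 []).length ↔ c < (Pword (Ud n m S)).length := by
      intro c
      rw [hlen, Pword_lt_length]
    have a1 := this ((rsk (Bd n m S)).2.getD 0 []).length
    have a2 := this (Pword (Ud n m S)).length
    omega
  unfold transposeT
  apply List.ext_getElem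
  · rw [List.length_map, List.length_range, hL]
  · intro c h1 h2
    simp only [List.getElem_map, List.getElem_range]
    apply List.ext_getElem?
    intro r
    rw [filterMap_col c _ _ (fun r => hlen r c), hent, List.getD_eq_getElem _ _ h2]

end Crys


namespace Crys

theorem lexLt_trans {p q s : ℕ × ℕ} (h1 : lexLt p q) (h2 : lexLt q s) : lexLt p s := by
  unfold lexLt at *; omega

instance instTransLt : IsTrans (ℕ × ℕ) lexLt := ⟨fun _ _ _ => lexLt_trans⟩

instance instTransLe : IsTrans (ℕ × ℕ) lexLe := ⟨fun p q s h1 h2 => by unfold lexLe at *; omega⟩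

instance instTotalLe : Std.Total lexLe := ⟨fun p q => by unfold lexLe; omega⟩

theorem col_pairwise {n m r : ℕ} {L : List (ℕ × ℕ)} (h : IsColBitab n m r L) :
    L.Pairwise lexLt := List.isChain_iff_pairwise.mp h.2.2

theorem lexLt_nodup {L : List (ℕ × ℕ)} (h : L.Pairwise lexLt) : L.Nodup :=
  h.imp (by rintro a b hab rfl; unfold lexLt at hab; omega)

/-- indicator of a list of boxes -/
def ind (L : List (ℕ × ℕ)) : ℕ → ℕ → Bool := fun a b => decide ((a, b) ∈ L)

theorem range_upl (n : ℕ) : upl n = (List.range n).map (· + 1) := by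
  induction n with
  | zero => rfl
  | succ n ih => rw [List.range_succ, List.map_append, ← ih]; simp [upl, dn]

theorem range_dn (n : ℕ) : dn n = (List.range n).reverse.map (· + 1) := by
  rw [List.map_reverse, ← range_upl, upl, List.reverse_reverse]

theorem row_group {n m r : ℕ} {L : List (ℕ × ℕ)} (h : IsColBitab n m r L) (k : ℕ) :
    ((L.filter fun p => decide (p.1 = k)).reverse).map Prod.snd = desc m (ind L k) := by
  apply sorted_unique _ (desc_sorted _ _)
  · intro b
    rw [mem_desc]
    simp only [List.mem_map, List.mem_reverse, List.mem_filter, decide_eq_true_eq, ind]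
    constructor
    · rintro ⟨⟨x, y⟩, ⟨h1, rfl⟩, rfl⟩
      exact ⟨(h.2.1 _ h1).2, h1⟩
    · rintro ⟨h1, h2⟩
      exact ⟨(k, b), ⟨h2, rfl⟩, rfl⟩
  · rw [List.pairwise_map, List.pairwise_reverse, List.pairwise_filter]
    refine (col_pairwise h).imp ?_
    intro p q hpq h1 h2
    simp only [decide_eq_true_eq] at h1 h2
    unfold lexLt at hpq; omega

theorem row_group' {n m r : ℕ} {L : List (ℕ × ℕ)} (h : IsColBitab n m r L) (k : ℕ) :
    (L.filter fun p => decide (p.1 = k)).reverse = (desc m (ind L k)).map (fun b => (k, b)) := by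
  rw [← row_group h, List.map_map]
  symm
  refine (List.map_congr_left (g := id) ?_).trans (List.map_id _)
  intro x hx
  simp at hx
  ext <;> simp [hx.2]

theorem col_group {n m r : ℕ} {L : List (ℕ × ℕ)} (h : IsColBitab n m r L) (k : ℕ) :
    ((L.filter fun p => decide (p.2 = k)).reverse).map Prod.fst = desc n (fun a => ind L a k) := by
  apply sorted_unique _ (desc_sorted _ _)
  · intro b
    rw [mem_desc]
    simp only [List.mem_map, List.mem_reverse, List.mem_filter, decide_eq_true_eq, ind]
    constructor
    · rintro ⟨⟨x, y⟩, ⟨h1, rfl⟩, rfl⟩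
      exact ⟨(h.2.1 _ h1).1, h1⟩
    · rintro ⟨h1, h2⟩
      exact ⟨(b, k), ⟨h2, rfl⟩, rfl⟩
  · rw [List.pairwise_map, List.pairwise_reverse, List.pairwise_filter]
    refine (col_pairwise h).imp ?_
    intro p q hpq h1 h2
    simp only [decide_eq_true_eq] at h1 h2
    unfold lexLt at hpq; omega

theorem col_group' {n m r : ℕ} {L : List (ℕ × ℕ)} (h : IsColBitab n m r L) (k : ℕ) :
    (L.filter fun p => decide (p.2 = k)).reverse =
      (desc n (fun a => ind L a k)).map (fun a => (a, k)) := by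
  rw [← col_group h, List.map_map]
  symm
  refine (List.map_congr_left (g := id) ?_).trans (List.map_id _)
  intro x hx
  simp at hx
  ext <;> simp [hx.2]

theorem burge_eq {n m r : ℕ} {L : List (ℕ × ℕ)} (h : IsColBitab n m r L) :
    burge n L = Bd n m (ind L) := by
  rw [burge, Bd, range_upl, List.flatMap_map]
  exact List.flatMap_congr (fun k _ => row_group' h (k + 1))

theorem wCol_eq {n m r : ℕ} {L : List (ℕ × ℕ)} (h : IsColBitab n m r L) :
    wCol n L = Wd n m (ind L) := by
  rw [wCol, Wd, range_upl, List.flatMap_map]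
  exact List.flatMap_congr (fun k _ => row_group h (k + 1))

theorem uCol_eq {n m r : ℕ} {L : List (ℕ × ℕ)} (h : IsColBitab n m r L) :
    uCol' m L = Ud n m (ind L) := by
  rw [uCol', Ud, range_dn, List.flatMap_map]
  exact List.flatMap_congr (fun k _ => col_group h (k + 1))

theorem bRSK_eq {n m r : ℕ} {L : List (ℕ × ℕ)} (h : IsColBitab n m r L) :
    bRSK n L = (Pword (Wd n m (ind L)), Pword (Ud n m (ind L))) := by
  rw [bRSK, burge_eq h, transpose_rsk, rsk_fst, Bd_snd]

theorem idx_group (L : List (ℕ × ℕ)) (q : ℕ × ℕ → Bool) :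
    (((List.range L.length).filter fun t => q (L.getD t (0, 0))).reverse).map
      (fun t => L.getD t (0, 0)) = (L.filter q).reverse := by
  have e : (List.range L.length).map (fun t => L.getD t (0, 0)) = L := by
    apply List.ext_getElem
    · simp
    · intro i h1 h2
      simp [h2]
  rw [List.map_reverse]
  congr 1
  conv_rhs => rw [← e, List.filter_map]
  rfl

theorem wIdx_eq {n m r : ℕ} {L : List (ℕ × ℕ)} (h : IsColBitab n m r L) :
    (wColIdx n L).map (fun t => L.getD t (0, 0)) = Bd n m (ind L) := by
  rw [← burge_eq h, wColIdx, burge, List.map_flatMap]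
  exact List.flatMap_congr (fun k _ => idx_group L (fun p => decide (p.1 = k + 1)))

theorem uIdx_eq {n m r : ℕ} {L : List (ℕ × ℕ)} (h : IsColBitab n m r L) :
    (uColIdx' m L).map (fun t => L.getD t (0, 0)) =
      (dn m).flatMap fun k => (desc n (fun a => ind L a k)).map (fun a => (a, k)) := by
  rw [uColIdx', range_dn, List.flatMap_map, List.map_flatMap]
  refine List.flatMap_congr (fun k _ => ?_)
  rw [← col_group' h]
  exact idx_group L (fun p => decide (p.2 = k + 1))

theorem set_col {n m r : ℕ} {L : List (ℕ × ℕ)} (h : IsColBitab n m r L) {t : ℕ} {p q : ℕ × ℕ}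
    (ht : L.getD t (0, 0) = p) (hp : p ≠ (0, 0)) (hq : q ∉ L)
    (hqr : (1 ≤ q.1 ∧ q.1 ≤ n) ∧ (1 ≤ q.2 ∧ q.2 ≤ m)) :
    IsColBitab n m r (sortLex (L.set t q)) ∧
      ∀ x, x ∈ sortLex (L.set t q) ↔ x = q ∨ (x ∈ L ∧ x ≠ p) := by
  have htl : t < L.length := by
    by_contra hh
    rw [List.getD_eq_default _ _ (by omega)] at ht
    exact hp ht.symm
  rw [List.getD_eq_getElem _ _ htl] at ht
  have hnd := lexLt_nodup (col_pairwise h)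
  have hperm : (sortLex (L.set t q)).Perm (L.set t q) := List.perm_insertionSort _ _
  have hLs : L = L.take t ++ p :: L.drop (t + 1) := by
    rw [← ht]; simp
  have hset : L.set t q = L.take t ++ q :: L.drop (t + 1) := by
    rw [List.set_eq_take_append_cons_drop, if_pos htl]
  generalize L.take t = A at hLs hset
  generalize L.drop (t + 1) = B at hLs hset
  have hnd' := hnd
  rw [hLs, List.nodup_middle, List.nodup_cons] at hnd'
  have hmem : ∀ x, x ∈ sortLex (L.set t q) ↔ x = q ∨ (x ∈ L ∧ x ≠ p) := by
    intro x
    rw [hperm.mem_iff, hset, hLs]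
    have := hnd'.1
    simp only [List.mem_append, List.mem_cons] at this ⊢
    by_cases hx : x = p
    · subst hx; tauto
    · tauto
  have hnd2 : (sortLex (L.set t q)).Nodup := by
    rw [hperm.nodup_iff, hset, List.nodup_middle, List.nodup_cons]
    refine ⟨?_, hnd'.2⟩
    intro hh
    apply hq
    rw [hLs]
    simp only [List.mem_append, List.mem_cons] at hh ⊢
    tauto
  refine ⟨⟨?_, ?_, ?_⟩, hmem⟩
  · rw [hperm.length_eq, List.length_set, h.1]
  · intro x hx
    rcases (hmem x).mp hx with rfl | hx
    · exact hqr
    · exact h.2.1 x hx.1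
  · apply List.isChain_iff_pairwise.mpr
    have hs : (sortLex (L.set t q)).Pairwise lexLe := List.pairwise_insertionSort _ _
    refine (List.pairwise_and_iff.mpr ⟨hs, hnd2⟩).imp ?_
    rintro ⟨a, b⟩ ⟨c, d⟩ ⟨h1, h2⟩
    simp only [lexLe, lexLt, ne_eq, Prod.mk.injEq] at *
    omega

theorem Fbot_none {n m r i : ℕ} {L : List (ℕ × ℕ)} (h : IsColBitab n m r L)
    (hf : FbotCol n i L = none) : fLower i (bRSK n L).1 = none := by
  rw [bRSK_eq h]
  apply fLower_none
  apply Pword_fw_none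
  rw [(fw_eq_rightUnmatched _ i).1, ← wCol_eq h]
  unfold FbotCol at hf
  split at hf
  · rename_i hh; simp [hh]
  · simp at hf

theorem Ftop_none {n m r i : ℕ} {L : List (ℕ × ℕ)} (h : IsColBitab n m r L)
    (hf : FtopCol m i L = none) : fLower i (bRSK n L).2 = none := by
  rw [bRSK_eq h]
  apply fLower_none
  apply Pword_fw_none
  rw [(fw_eq_rightUnmatched _ i).1, ← uCol_eq h]
  unfold FtopCol at hf
  split at hf
  · rename_i hh; simp [hh]
  · simp at hf

theorem Fbot_some {n m r i : ℕ} {L L' : List (ℕ × ℕ)} (h : IsColBitab n m r L)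
    (h1 : 1 ≤ i) (h2 : i + 1 ≤ m) (hf : FbotCol n i L = some L') :
    IsColBitab n m r L' ∧
      ∃ P', fLower i (bRSK n L).1 = some P' ∧ bRSK n L' = (P', (bRSK n L).2) := by
  unfold FbotCol at hf
  split at hf
  · simp at hf
  rename_i p hp
  simp only [Option.some.injEq] at hf
  rw [wCol_eq h] at hp
  have hfw := (fw_eq_rightUnmatched (Wd n m (ind L)) i).1
  rw [hp, Option.map_some] at hfw
  obtain ⟨a, ha, s1, s2, e, hK, hpos⟩ := W_move h1 h2 (ind L) hfw
  have hpos := hpos p hp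
  have hidx := wIdx_eq h
  unfold Bd at hidx
  rw [← hidx, List.getElem?_map, Option.map_eq_some_iff] at hpos
  obtain ⟨t, ht, hLt⟩ := hpos
  have ht' : (wColIdx n L).getD p 0 = t := by rw [List.getD_eq_getElem?_getD, ht]; rfl
  rw [ht', hLt] at hf
  simp only [ind, decide_eq_true_eq, decide_eq_false_iff_not] at s1 s2
  obtain ⟨c1, c2⟩ := set_col h hLt (by simp; omega) s2 ⟨ha, by simp only; omega⟩
  rw [hf] at c1 c2
  have hind : ind L' = mv (ind L) a i := by
    funext x y
    rw [Bool.eq_iff_iff]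
    simp only [ind, decide_eq_true_eq, c2, mv, Prod.mk.injEq, ne_eq]
    by_cases hx : x = a ∧ y = i
    · obtain ⟨rfl, rfl⟩ := hx; simp
    · by_cases hy : x = a ∧ y = i + 1
      · simp [hy]
      · simp [hx, hy]
  refine ⟨c1, Pword (Wd n m (mv (ind L) a i)), ?_, ?_⟩
  · rw [bRSK_eq h, ← e]
    obtain ⟨d1, d2⟩ := Pword_fw_some hfw
    exact fLower_some d1 d2
  · rw [bRSK_eq h, bRSK_eq c1, hind, Pword_Keq hK]

theorem Ftop_some {n m r j : ℕ} {L L' : List (ℕ × ℕ)} (h : IsColBitab n m r L)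
    (h1 : 1 ≤ j) (h2 : j + 1 ≤ n) (hf : FtopCol m j L = some L') :
    IsColBitab n m r L' ∧
      ∃ Q', fLower j (bRSK n L).2 = some Q' ∧ bRSK n L' = ((bRSK n L).1, Q') := by
  unfold FtopCol at hf
  split at hf
  · simp at hf
  rename_i p hp
  simp only [Option.some.injEq] at hf
  rw [uCol_eq h] at hp
  have hfw := (fw_eq_rightUnmatched (Ud n m (ind L)) j).1
  rw [hp, Option.map_some] at hfw
  obtain ⟨b, hb, s1, s2, e, hK, hpos⟩ := U_move h1 h2 (ind L) hfw
  have hpos := hpos p hp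
  have hidx := congrArg (List.map Prod.swap) (uIdx_eq h)
  have hsw : List.map Prod.swap
      ((dn m).flatMap fun k => (desc n (fun a => ind L a k)).map (fun a => (a, k))) =
      (dn m).flatMap fun k => (desc n (fun a => ind L a k)).map (fun a => (k, a)) := by
    rw [List.map_flatMap]
    refine List.flatMap_congr (fun k _ => ?_)
    rw [List.map_map]
    rfl
  rw [hsw] at hidx
  rw [← hidx, List.map_map, List.getElem?_map, Option.map_eq_some_iff] at hpos
  obtain ⟨t, ht, hLt⟩ := hpos
  have hLt : L.getD t (0, 0) = (j, b) := by
    have := congrArg Prod.swap hLt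
    simpa only [Function.comp, Prod.swap_swap, Prod.swap_prod_mk] using this
  have ht' : (uColIdx' m L).getD p 0 = t := by rw [List.getD_eq_getElem?_getD, ht]; rfl
  rw [ht', hLt] at hf
  simp only [ind, decide_eq_true_eq, decide_eq_false_iff_not] at s1 s2
  obtain ⟨c1, c2⟩ := set_col h hLt (by simp; omega) s2 ⟨by simp only; omega, hb⟩
  rw [hf] at c1 c2
  have hind : ind L' = mvt (ind L) b j := by
    funext x y
    rw [Bool.eq_iff_iff]
    simp only [ind, decide_eq_true_eq, c2, mvt, mv, Prod.mk.injEq, ne_eq]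
    by_cases hx : y = b ∧ x = j
    · obtain ⟨rfl, rfl⟩ := hx; simp
    · by_cases hy : y = b ∧ x = j + 1
      · simp [hy]
      · have hx' : ¬ (x = j ∧ y = b) := fun h => hx h.symm
        have hy' : ¬ (x = j + 1 ∧ y = b) := fun h => hy h.symm
        simp [hx, hy, hx', hy']
  refine ⟨c1, Pword (Ud n m (mvt (ind L) b j)), ?_, ?_⟩
  · rw [bRSK_eq h, ← e]
    obtain ⟨d1, d2⟩ := Pword_fw_some hfw
    exact fLower_some d1 d2
  · rw [bRSK_eq h, bRSK_eq c1, hind, Pword_Keq hK]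

end Crys

/-- Burge insertion intertwines the crystal lowering operators on
single-column bitableaux with the standard tableau lowering operators: with
`(P, Q') = bRSK(T)`, `F_i^b(T)` is defined iff `f_i(P)` is, in which case
`F_i^b(T) ∈ B_{(1^r)}(n,m)` and `bRSK(F_i^b(T)) = (f_i(P), Q')`; and `F_j^t(T)` is defined
iff `f_j(Q')` is, in which case `F_j^t(T) ∈ B_{(1^r)}(n,m)` and
`bRSK(F_j^t(T)) = (P, f_j(Q'))`. (Thus `bRSK` is an isomorphism of `gl_n × gl_m`-crystals on
single-column bitableaux.) -/
theorem stmt_11 (n m r : ℕ) (hn : 1 ≤ n) (hm : 1 ≤ m)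
    (L : List (ℕ × ℕ)) (hL : IsColBitab n m r L)
    (i : ℕ) (hi1 : 1 ≤ i) (hi2 : i ≤ m - 1)
    (j : ℕ) (hj1 : 1 ≤ j) (hj2 : j ≤ n - 1) :
    ((FbotCol n i L).isSome ↔ (fLower i (bRSK n L).1).isSome) ∧
    (∀ L', FbotCol n i L = some L' →
      IsColBitab n m r L' ∧
      ∃ P', fLower i (bRSK n L).1 = some P' ∧ bRSK n L' = (P', (bRSK n L).2)) ∧
    ((FtopCol m j L).isSome ↔ (fLower j (bRSK n L).2).isSome) ∧
    (∀ L', FtopCol m j L = some L' →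
      IsColBitab n m r L' ∧
      ∃ Q', fLower j (bRSK n L).2 = some Q' ∧ bRSK n L' = ((bRSK n L).1, Q')) := by
  refine ⟨?_, fun L' h => Crys.Fbot_some hL hi1 (by omega) h, ?_,
    fun L' h => Crys.Ftop_some hL hj1 (by omega) h⟩
  · cases hf : FbotCol n i L with
    | none => simp [Crys.Fbot_none hL hf]
    | some L' =>
      obtain ⟨_, P', e, _⟩ := Crys.Fbot_some hL hi1 (by omega) hf
      simp [e]
  · cases hf : FtopCol m j L with
    | none => simp [Crys.Ftop_none hL hf]
    | some L' =>
      obtain ⟨_, P', e, _⟩ := Crys.Ftop_some hL hj1 (by omega) hf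
      simp [e]
end

section
/- Let r, n, m ≥ 1 and let μ, ν be partitions of r. Then the number of single-column lexicographic bitableaux T ∈ B_{(1^r)}(n,m) with a(T) = μ, b(T) = ν, and such that both w(T) and u'(T) are Yamanouchi, equals 1 if μ is the conjugate partition ν' of ν (with ℓ(μ) ≤ n and ℓ(ν) ≤ m) and 0 otherwise. -/
open scoped Classical

/-- The `i`-th part (1-indexed) of a partition, `0` if `i` exceeds the number of parts. -/
def partAt {r : ℕ} (μ : Nat.Partition r) (i : ℕ) : ℕ :=
  (μ.parts.sort (· ≥ ·)).getD (i - 1) 0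

/-- `μ` is the conjugate partition `ν'` of `ν`: for every `i ≥ 1`, the `i`-th part of `μ` is
the number of parts of `ν` that are at least `i`. -/
def IsConjPart {r : ℕ} (μ ν : Nat.Partition r) : Prop :=
  ∀ i : ℕ, 1 ≤ i → partAt μ i = (ν.parts.filter fun y => i ≤ y).card

/-- The list of entries of a single-column bitableau encoded by `v : Fin r → Fin n × Fin m`
(the box `t`, counted from the top, has entry `((v t).1 + 1, (v t).2 + 1)`). -/
def colList {n m r : ℕ} (v : Fin r → Fin n × Fin m) : List (ℕ × ℕ) :=
  (List.ofFn v).map fun p => (((p.1 : ℕ) + 1, (p.2 : ℕ) + 1))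

theorem core_down (n m : ℕ) (D : ℕ → ℕ → Prop) (hD : ∀ i j, D i j → i < n ∧ j < m) :
    ((∀ k, ∀ j, ∑ a ∈ Finset.Ico k n, (if D a (j+1) then 1 else 0)
        ≤ ∑ a ∈ Finset.Ico k n, (if D a j then 1 else 0)) ∧
     (∀ k ≤ m, ∀ i, ∑ b ∈ Finset.range k, (if D (i+1) b then 1 else 0)
        ≤ ∑ b ∈ Finset.range k, (if D i b then 1 else 0))) ↔
    ((∀ i j, D i (j+1) → D i j) ∧ (∀ i j, D (i+1) j → D i j)) := by
  constructor
  · rintro ⟨hW, hU⟩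
    have key : ∀ t k, n ≤ k + t → ∀ i ≥ k, (∀ j, D i (j+1) → D i j) ∧ (∀ j, D (i+1) j → D i j) := by
      intro t
      induction t with
      | zero =>
        intro k hk i hi
        exact ⟨fun j h => by have := (hD _ _ h).1; omega, fun j h => by have := (hD _ _ h).1; omega⟩
      | succ t ih =>
        intro k hk i hi
        rcases Nat.lt_or_ge k i with h | h
        · exact ih (k+1) (by omega) i h
        have hik : i = k := le_antisymm h hi
        subst hik
        have ih' := ih (i+1) (by omega)
        have h2 : ∀ j, D (i+1) j → D i j := by
          intro j hj
          have hall : ∀ d b, b + d = j → D (i+1) b := by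
            intro d
            induction d with
            | zero => intro b hb; have : b = j := by omega
                      subst this; exact hj
            | succ d ihd => intro b hb; exact (ih' (i+1) le_rfl).1 b (ihd (b+1) (by omega))
          have hs := hU (j+1) (by have := (hD _ _ hj).2; omega) i
          rw [Finset.sum_congr rfl (g := fun _ => 1)] at hs
          · by_contra hc
            have : ∑ b ∈ Finset.range (j+1), (if D i b then 1 else 0) < ∑ b ∈ Finset.range (j+1), 1 := by
              apply Finset.sum_lt_sum
              · intro b _; split_ifs <;> omega
              · exact ⟨j, by simp, by simp [hc]⟩
            omega
          · intro b hb
            rw [if_pos (hall (j-b) b (by have := Finset.mem_range.1 hb; omega))]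
        refine ⟨?_, h2⟩
        intro j hj
        by_contra hc
        have hz : ∀ a, i ≤ a → ¬ D a j := by
          intro a ha
          induction a, ha using Nat.le_induction with
          | base => exact hc
          | succ a ha iha =>
            intro h
            rcases Nat.lt_or_ge i a with h' | h'
            · exact iha ((ih' a h').2 j h)
            · have : a = i := by omega
              rw [this] at h
              exact hc (h2 j h)
        have hs := hW i j
        have h0 : ∑ a ∈ Finset.Ico i n, (if D a j then 1 else 0) = 0 := by
          apply Finset.sum_eq_zero
          intro a ha
          rw [if_neg (hz a (Finset.mem_Ico.1 ha).1)]
        have h1 := Finset.single_le_sum (f := fun a => if D a (j+1) then 1 else 0)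
          (s := Finset.Ico i n) (fun _ _ => Nat.zero_le _)
          (Finset.mem_Ico.2 ⟨le_rfl, (hD _ _ hj).1⟩)
        simp only [hj, if_true] at h1
        omega
    exact ⟨fun i => (key n 0 (by omega) i (by omega)).1, fun i => (key n 0 (by omega) i (by omega)).2⟩
  · rintro ⟨h1, h2⟩
    refine ⟨fun k j => Finset.sum_le_sum fun a _ => ?_, fun k _ i => Finset.sum_le_sum fun b _ => ?_⟩
    · have := h1 a j
      split_ifs <;> simp_all
    · have := h2 i b
      split_ifs <;> simp_all

theorem yam_append (g w : List ℕ) (hg : g.Pairwise (· > ·)) :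
    Yamanouchi (g ++ w) ↔ Yamanouchi w ∧
      ∀ i, 1 ≤ i → (g ++ w).count (i+1) ≤ (g ++ w).count i := by
  constructor
  · intro h
    refine ⟨fun i hi s hs => h i hi s ?_, fun i hi => h i hi _ ?_⟩
    · rw [List.mem_tails] at *
      exact hs.trans (List.suffix_append _ _)
    · simp
  · rintro ⟨hw, h⟩ i hi s hs
    rw [List.mem_tails] at hs
    have hwi := hw i hi w (by simp)
    have hi' := h i hi
    obtain ⟨p, hp⟩ := hs
    rcases List.append_eq_append_iff.1 hp with ⟨t, ht, hs'⟩ | ⟨t, ht, hs'⟩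
    · subst hs'
      subst ht
      simp only [List.count_append] at hi' ⊢
      rw [List.pairwise_append] at hg
      by_cases hm : i + 1 ∈ t
      · have : p.count i = 0 := by
          rw [List.count_eq_zero]
          intro hip
          have := hg.2.2 i hip _ hm
          omega
        omega
      · have : t.count (i+1) = 0 := List.count_eq_zero.2 hm
        omega
    · exact hw i hi s (by rw [List.mem_tails, hs']; exact List.suffix_append _ _)

theorem yam_nil : Yamanouchi [] := by
  intro i hi s hs
  simp at hs
  simp [hs]

theorem yam_range' (g : ℕ → List ℕ) (hg : ∀ k, (g k).Pairwise (· > ·)) (n : ℕ) : ∀ s,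
    Yamanouchi ((List.range' s n).flatMap g) ↔ ∀ k ≥ s, ∀ i, 1 ≤ i →
      ∑ a ∈ Finset.Ico k (s+n), (g a).count (i+1) ≤ ∑ a ∈ Finset.Ico k (s+n), (g a).count i := by
  have hc : ∀ n s i, ((List.range' s n).flatMap g).count i = ∑ a ∈ Finset.Ico s (s+n), (g a).count i := by
    intro n
    induction n with
    | zero => intro s i; simp
    | succ n ih =>
      intro s i
      rw [List.range'_succ, List.flatMap_cons, List.count_append, ih,
        Finset.sum_eq_sum_Ico_succ_bot (by omega : s < s + (n+1))]
      congr 3; omega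
  induction n with
  | zero =>
    intro s
    simp only [List.range'_zero, List.flatMap_nil, yam_nil, true_iff]
    intro k hk i _
    rw [Finset.Ico_eq_empty (by omega)]
    simp
  | succ n ih =>
    intro s
    have hc' := hc (n+1) s
    rw [List.range'_succ, List.flatMap_cons] at hc' ⊢
    rw [yam_append _ _ (hg s), ih]
    simp only [hc']
    rw [show s + 1 + n = s + (n+1) by omega]
    constructor
    · rintro ⟨h1, h2⟩ k hk
      rcases Nat.lt_or_ge s k with h | h
      · exact h1 k h
      · have : k = s := by omega
        subst this; exact h2
    · intro h
      exact ⟨fun k hk => h k (by omega), h s le_rfl⟩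

theorem yam_rev (g : ℕ → List ℕ) (hg : ∀ k, (g k).Pairwise (· > ·)) (m : ℕ) :
    Yamanouchi ((List.range m).reverse.flatMap g) ↔ ∀ k ≤ m, ∀ i, 1 ≤ i →
      ∑ a ∈ Finset.range k, (g a).count (i+1) ≤ ∑ a ∈ Finset.range k, (g a).count i := by
  have hc : ∀ n i, ((List.range n).reverse.flatMap g).count i = ∑ a ∈ Finset.range n, (g a).count i := by
    intro n
    induction n with
    | zero => intro i; simp
    | succ n ih =>
      intro i
      rw [List.range_succ, List.reverse_append, List.reverse_singleton, List.singleton_append,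
        List.flatMap_cons, List.count_append, ih, Finset.sum_range_succ, add_comm]
  induction m with
  | zero =>
    simp only [List.range_zero, List.reverse_nil, List.flatMap_nil, yam_nil, true_iff]
    intro k hk i _
    have : k = 0 := by omega
    subst this
    simp
  | succ n ih =>
    have hc' := hc (n+1)
    rw [List.range_succ, List.reverse_append, List.reverse_singleton, List.singleton_append,
        List.flatMap_cons] at hc' ⊢
    refine (yam_append _ _ (hg n)).trans ((and_congr_left' ih).trans ?_)
    simp only [hc']
    constructor
    · rintro ⟨h1, h2⟩ k hk
      rcases Nat.lt_or_ge n k with h | h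
      · have : k = n+1 := by omega
        subst this; exact h2
      · exact h1 k h
    · intro h
      exact ⟨fun k hk => h k (by omega), h (n+1) le_rfl⟩

theorem fst_group_pw (L : List (ℕ × ℕ)) (hL : L.Pairwise lexLt) (k : ℕ) :
    (((L.filter fun p => decide (p.1 = k)).reverse).map Prod.snd).Pairwise (· > ·) := by
  rw [List.pairwise_map, List.pairwise_reverse]
  refine (hL.filter _).imp_of_mem ?_
  intro a b ha hb h
  simp only [List.mem_filter, decide_eq_true_eq] at ha hb
  rcases h with h | h <;> omega

theorem snd_group_pw (L : List (ℕ × ℕ)) (hL : L.Pairwise lexLt) (k : ℕ) :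
    (((L.filter fun p => decide (p.2 = k)).reverse).map Prod.fst).Pairwise (· > ·) := by
  rw [List.pairwise_map, List.pairwise_reverse]
  refine (hL.filter _).imp_of_mem ?_
  intro a b ha hb h
  simp only [List.mem_filter, decide_eq_true_eq] at ha hb
  rcases h with h | h <;> omega

theorem pw_count (l : List ℕ) (hl : l.Pairwise (· > ·)) (j : ℕ) :
    l.count j = if j ∈ l then 1 else 0 := by
  have : l.Nodup := hl.imp (fun h => by omega)
  split_ifs with h
  · exact List.count_eq_one_of_mem this h
  · exact List.count_eq_zero.2 h

theorem fst_count (L : List (ℕ × ℕ)) (hL : L.Pairwise lexLt) (k j : ℕ) :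
    (((L.filter fun p => decide (p.1 = k)).reverse).map Prod.snd).count j =
      if (k, j) ∈ L then 1 else 0 := by
  rw [pw_count _ (fst_group_pw L hL k)]
  have : j ∈ (((L.filter fun p => decide (p.1 = k)).reverse).map Prod.snd) ↔ (k, j) ∈ L := by
    simp
  simp only [this]

theorem snd_count (L : List (ℕ × ℕ)) (hL : L.Pairwise lexLt) (k j : ℕ) :
    (((L.filter fun p => decide (p.2 = k)).reverse).map Prod.fst).count j =
      if (j, k) ∈ L then 1 else 0 := by
  rw [pw_count _ (snd_group_pw L hL k)]
  have : j ∈ (((L.filter fun p => decide (p.2 = k)).reverse).map Prod.fst) ↔ (j, k) ∈ L := by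
    simp
  simp only [this]

/-- the two Yamanouchi conditions say the cell set is down-closed -/
theorem yam_iff (n m : ℕ) (L : List (ℕ × ℕ)) (hL : L.Pairwise lexLt)
    (hb : ∀ p ∈ L, (1 ≤ p.1 ∧ p.1 ≤ n) ∧ (1 ≤ p.2 ∧ p.2 ≤ m)) :
    (Yamanouchi (wCol n L) ∧ Yamanouchi (uCol' m L)) ↔
    ((∀ i j, (i+1, j+1+1) ∈ L → (i+1, j+1) ∈ L) ∧ (∀ i j, (i+1+1, j+1) ∈ L → (i+1, j+1) ∈ L)) := by
  have hc := core_down n m (fun i j => (i+1, j+1) ∈ L) (fun i j h => by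
    have := hb _ h; simp only at this; omega)
  rw [← hc]
  unfold wCol uCol'
  rw [List.range_eq_range', yam_range' _ (fun k => fst_group_pw L hL (k+1)),
    yam_rev _ (fun k => snd_group_pw L hL (k+1))]
  simp only [fst_count L hL, snd_count L hL, zero_add]
  refine and_congr ⟨fun h k j => ?_, fun h k _ i hi => ?_⟩
    ⟨fun h k hk j => ?_, fun h k hk i hi => ?_⟩
  · convert h k (Nat.zero_le _) (j+1) (by omega)
  · obtain ⟨j, rfl⟩ : ∃ j, i = j+1 := ⟨i-1, by omega⟩
    convert h k j
  · convert h k hk (j+1) (by omega)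
  · obtain ⟨j, rfl⟩ : ∃ j, i = j+1 := ⟨i-1, by omega⟩
    convert h k hk j

theorem row_len (n m : ℕ) (L : List (ℕ × ℕ)) (hL : L.Pairwise lexLt)
    (hb : ∀ p ∈ L, (1 ≤ p.1 ∧ p.1 ≤ n) ∧ (1 ≤ p.2 ∧ p.2 ≤ m)) (i : ℕ) :
    (L.filter fun p => decide (p.1 = i)).length =
      ((Finset.range m).filter fun j => (i, j+1) ∈ L).card := by
  have h1 : (((L.filter fun p => decide (p.1 = i)).reverse).map Prod.snd).toFinset =
      ((Finset.range m).filter fun j => (i, j+1) ∈ L).image (· + 1) := by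
    ext x
    simp only [List.mem_toFinset, List.mem_map, List.mem_reverse, List.mem_filter,
      decide_eq_true_eq, Finset.mem_image, Finset.mem_filter, Finset.mem_range]
    constructor
    · rintro ⟨⟨a, b⟩, ⟨h, rfl⟩, rfl⟩
      have := hb _ h
      simp only at this
      refine ⟨b-1, ⟨by omega, ?_⟩, by simp only; omega⟩
      rwa [show b - 1 + 1 = b by omega]
    · rintro ⟨b, ⟨_, h⟩, rfl⟩
      exact ⟨_, ⟨h, rfl⟩, rfl⟩
  have h2 := congrArg Finset.card h1
  rw [List.toFinset_card_of_nodup ((fst_group_pw L hL i).imp (fun h => by omega)),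
    Finset.card_image_of_injective _ (add_left_injective 1)] at h2
  simpa using h2

theorem col_len (n m : ℕ) (L : List (ℕ × ℕ)) (hL : L.Pairwise lexLt)
    (hb : ∀ p ∈ L, (1 ≤ p.1 ∧ p.1 ≤ n) ∧ (1 ≤ p.2 ∧ p.2 ≤ m)) (j : ℕ) :
    (L.filter fun p => decide (p.2 = j)).length =
      ((Finset.range n).filter fun i => (i+1, j) ∈ L).card := by
  have h1 : (((L.filter fun p => decide (p.2 = j)).reverse).map Prod.fst).toFinset =
      ((Finset.range n).filter fun i => (i+1, j) ∈ L).image (· + 1) := by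
    ext x
    simp only [List.mem_toFinset, List.mem_map, List.mem_reverse, List.mem_filter,
      decide_eq_true_eq, Finset.mem_image, Finset.mem_filter, Finset.mem_range]
    constructor
    · rintro ⟨⟨b, a⟩, ⟨h, rfl⟩, rfl⟩
      have := hb _ h
      simp only at this
      refine ⟨b-1, ⟨by omega, ?_⟩, by simp only; omega⟩
      rwa [show b - 1 + 1 = b by omega]
    · rintro ⟨b, ⟨_, h⟩, rfl⟩
      exact ⟨_, ⟨h, rfl⟩, rfl⟩
  have h2 := congrArg Finset.card h1
  rw [List.toFinset_card_of_nodup ((snd_group_pw L hL j).imp (fun h => by omega)),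
    Finset.card_image_of_injective _ (add_left_injective 1)] at h2
  simpa using h2

/-- an initial segment is determined by its size -/
theorem init_seg (N : ℕ) (P : ℕ → Prop) (hP : ∀ j, P (j+1) → P j) (hN : ∀ j, P j → j < N) (c : ℕ)
    (hc : ((Finset.range N).filter P).card = c) (j : ℕ) : P j ↔ j < c := by
  have hdown : ∀ d j, P (j+d) → P j := by
    intro d
    induction d with
    | zero => intro j h; exact h
    | succ d ih => intro j h; exact ih j (hP _ h)
  constructor
  · intro h
    have : Finset.range (j+1) ⊆ (Finset.range N).filter P := by
      intro x hx
      have hx := Finset.mem_range.1 hx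
      have : P x := hdown (j-x) x (by rwa [show x + (j-x) = j by omega])
      simp [this, hN x this]
    have := Finset.card_le_card this
    simp at this; omega
  · intro h
    by_contra hn
    have : (Finset.range N).filter P ⊆ Finset.range j := by
      intro x hx
      have hx := (Finset.mem_filter.1 hx).2
      rw [Finset.mem_range]
      by_contra hle
      exact hn (hdown (x-j) j (by rwa [show j + (x-j) = x by omega]))
    have := Finset.card_le_card this
    simp at this; omega

theorem sum_fst (n : ℕ) (L : List (ℕ × ℕ)) (hb : ∀ p ∈ L, 1 ≤ p.1 ∧ p.1 ≤ n) :
    ∑ i ∈ Finset.range n, (L.filter fun p => decide (p.1 = i+1)).length = L.length := by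
  induction L with
  | nil => simp
  | cons p L ih =>
    have ih := ih (fun q hq => hb q (by simp [hq]))
    have hp := hb p (by simp)
    have : ∀ i, ((p :: L).filter fun p => decide (p.1 = i+1)).length =
      (L.filter fun p => decide (p.1 = i+1)).length + if i = p.1 - 1 then 1 else 0 := by
      intro i
      rw [List.filter_cons]
      by_cases h : p.1 = i + 1
      · simp [h]
      · have : ¬ i = p.1 - 1 := by omega
        simp [h, this]
    simp only [this, Finset.sum_add_distrib, ih, Finset.sum_ite_eq']
    rw [if_pos (by simp; omega)]
    simp

theorem sum_snd (n : ℕ) (L : List (ℕ × ℕ)) (hb : ∀ p ∈ L, 1 ≤ p.2 ∧ p.2 ≤ n) :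
    ∑ i ∈ Finset.range n, (L.filter fun p => decide (p.2 = i+1)).length = L.length := by
  induction L with
  | nil => simp
  | cons p L ih =>
    have ih := ih (fun q hq => hb q (by simp [hq]))
    have hp := hb p (by simp)
    have : ∀ i, ((p :: L).filter fun p => decide (p.2 = i+1)).length =
      (L.filter fun p => decide (p.2 = i+1)).length + if i = p.2 - 1 then 1 else 0 := by
      intro i
      rw [List.filter_cons]
      by_cases h : p.2 = i + 1
      · simp [h]
      · have : ¬ i = p.2 - 1 := by omega
        simp [h, this]
    simp only [this, Finset.sum_add_distrib, ih, Finset.sum_ite_eq']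
    rw [if_pos (by simp; omega)]
    simp

theorem take_sum (l : List ℕ) (N : ℕ) : ∑ i ∈ Finset.range N, l.getD i 0 = (l.take N).sum := by
  induction N generalizing l with
  | zero => simp
  | succ N ih =>
    cases l with
    | nil => simp
    | cons a l => rw [Finset.sum_range_succ']; simp [← ih, add_comm]

theorem part_sum {r : ℕ} (μ : Nat.Partition r) (N : ℕ) :
    ∑ i ∈ Finset.range N, partAt μ (i+1) = r ↔ μ.parts.card ≤ N := by
  unfold partAt
  simp only [Nat.add_sub_cancel]
  rw [take_sum]
  set l := μ.parts.sort (· ≥ ·) with hl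
  have hcoe : (l : Multiset ℕ) = μ.parts := Multiset.sort_eq _ _
  have hlen : l.length = μ.parts.card := by rw [← hcoe]; simp
  have hsum : l.sum = r := by rw [← μ.parts_sum, ← hcoe]; simp
  have hpos : ∀ x ∈ l, 0 < x := fun x hx => μ.parts_pos (by rw [← hcoe]; simpa using hx)
  rw [← hlen]
  constructor
  · intro h
    by_contra hc
    have h1 : (l.take N).sum + (l.drop N).sum = l.sum := by
      rw [← List.sum_append, List.take_append_drop]
    have h2 : (l.drop N).sum = 0 := by omega
    rw [List.sum_eq_zero_iff] at h2
    have hm : l[N] ∈ l.drop N := by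
      exact List.mem_iff_getElem.2 ⟨0, by simp; omega, by simp⟩
    have h3 := h2 _ hm
    have := hpos _ (List.mem_of_mem_drop hm)
    omega
  · intro h
    rw [List.take_of_length_le h, hsum]

theorem part_zero {r : ℕ} (μ : Nat.Partition r) (i : ℕ) (h : μ.parts.card ≤ i) :
    partAt μ (i+1) = 0 := by
  unfold partAt
  rw [List.getD_eq_default]
  simpa using h

theorem sorted_filter (l : List ℕ) (hl : l.Pairwise (· ≥ ·)) (i j : ℕ) :
    j < (l.filter fun y => decide (i + 1 ≤ y)).length ↔ i < l.getD j 0 := by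
  induction l generalizing j with
  | nil => simp
  | cons a l ih =>
    rw [List.pairwise_cons] at hl
    have ih := ih hl.2
    by_cases h : i + 1 ≤ a
    · rw [List.filter_cons_of_pos (by simpa using h)]
      cases j with
      | zero => simp; omega
      | succ j => simpa using ih j
    · have h0 : l.filter (fun y => decide (i + 1 ≤ y)) = [] := by
        rw [List.filter_eq_nil_iff]
        intro x hx
        have := hl.1 x hx
        simp; omega
      rw [List.filter_cons_of_neg (by simpa using h)]
      have ih := ih (j-1)
      rw [h0] at ih ⊢
      cases j with
      | zero => simp; omega
      | succ j => simpa using ih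

theorem filter_card {r : ℕ} (ν : Nat.Partition r) (i j : ℕ) :
    j < (ν.parts.filter fun y => i + 1 ≤ y).card ↔ i < partAt ν (j+1) := by
  unfold partAt
  rw [Nat.add_sub_cancel, ← sorted_filter _ (Multiset.pairwise_sort _ _)]
  conv_lhs => rw [← Multiset.sort_eq ν.parts (· ≥ ·)]
  rw [Multiset.filter_coe, Multiset.coe_card]
  

theorem conj_iff {r : ℕ} (μ ν : Nat.Partition r) :
    IsConjPart μ ν ↔ ∀ i j, j < partAt μ (i+1) ↔ i < partAt ν (j+1) := by
  constructor
  · intro h i j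
    rw [h (i+1) (by omega), filter_card]
  · intro h i hi
    obtain ⟨i, rfl⟩ : ∃ k, i = k+1 := ⟨i-1, by omega⟩
    apply eq_of_forall_lt_iff
    intro j
    rw [h, filter_card]

theorem isCol_iff {n m r : ℕ} (v : Fin r → Fin n × Fin m) :
    IsColBitab n m r (colList v) ↔ StrictMono (fun t => toLex (v t)) := by
  have hlt : ∀ a b : Fin n × Fin m, lexLt ((a.1 : ℕ) + 1, (a.2 : ℕ) + 1) ((b.1 : ℕ) + 1, (b.2 : ℕ) + 1)
      ↔ toLex a < toLex b := by
    intro a b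
    rw [Prod.Lex.toLex_lt_toLex]
    simp [lexLt, Fin.ext_iff]
  have htr : IsTrans (ℕ × ℕ) lexLt := ⟨fun a b c h1 h2 => by
    unfold lexLt at *; omega⟩
  unfold IsColBitab
  constructor
  · rintro ⟨_, _, h⟩
    have h : (colList v).IsChain lexLt := h
    rw [List.isChain_iff_pairwise, colList, List.pairwise_map, List.pairwise_ofFn] at h
    intro i j hij
    exact (hlt _ _).1 (h hij)
  · intro h
    refine ⟨by simp [colList], ?_, ?_⟩
    · intro p hp
      simp only [colList, List.mem_map] at hp
      obtain ⟨a, _, rfl⟩ := hp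
      simp only
      omega
    · show (colList v).IsChain lexLt
      rw [List.isChain_iff_pairwise, colList, List.pairwise_map, List.pairwise_ofFn]
      intro i j hij
      exact (hlt _ _).2 (h hij)

theorem mem_colList {n m r : ℕ} (v : Fin r → Fin n × Fin m) (i j : ℕ) :
    (i+1, j+1) ∈ colList v ↔ ∃ t, ((v t).1 : ℕ) = i ∧ ((v t).2 : ℕ) = j := by
  simp only [colList, List.mem_map, List.mem_ofFn, Prod.mk.injEq]
  constructor
  · rintro ⟨a, ⟨t, rfl⟩, h1, h2⟩
    exact ⟨t, by omega, by omega⟩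
  · rintro ⟨t, h1, h2⟩
    exact ⟨v t, ⟨t, rfl⟩, by omega, by omega⟩

/-- The property being counted. -/
def Good {n m r : ℕ} (μ ν : Nat.Partition r) (v : Fin r → Fin n × Fin m) : Prop :=
  IsColBitab n m r (colList v) ∧
        (∀ i ∈ Finset.Icc 1 n, ((colList v).filter fun p => decide (p.1 = i)).length = partAt μ i) ∧
        (∀ j ∈ Finset.Icc 1 m, ((colList v).filter fun p => decide (p.2 = j)).length = partAt ν j) ∧
        Yamanouchi (wCol n (colList v)) ∧ Yamanouchi (uCol' m (colList v))

theorem pw_of_isCol {n m r : ℕ} {L : List (ℕ × ℕ)} (h : IsColBitab n m r L) :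
    L.Pairwise lexLt := by
  have htr : IsTrans (ℕ × ℕ) lexLt := ⟨fun a b c h1 h2 => by
    unfold lexLt at *; omega⟩
  have h2 : L.IsChain lexLt := h.2.2
  rwa [List.isChain_iff_pairwise] at h2

theorem good_imp {n m r : ℕ} (μ ν : Nat.Partition r) (v : Fin r → Fin n × Fin m)
    (h : Good μ ν v) :
    (IsConjPart μ ν ∧ μ.parts.card ≤ n ∧ ν.parts.card ≤ m) ∧
      StrictMono (fun t => toLex (v t)) ∧ ∀ i j, (i+1, j+1) ∈ colList v ↔ j < partAt μ (i+1) := by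
  obtain ⟨hcol, hr, hc, hy⟩ := h
  have hpw := pw_of_isCol hcol
  have hb := hcol.2.1
  rw [yam_iff n m _ hpw hb] at hy
  have hmu : μ.parts.card ≤ n := by
    rw [← part_sum, ← Finset.sum_congr rfl
      (fun i hi => hr (i+1) (by have := Finset.mem_range.1 hi; simp; omega)),
      sum_fst n _ (fun p hp => (hb p hp).1), hcol.1]
  have hnu : ν.parts.card ≤ m := by
    rw [← part_sum, ← Finset.sum_congr rfl
      (fun i hi => hc (i+1) (by have := Finset.mem_range.1 hi; simp; omega)),
      sum_snd m _ (fun p hp => (hb p hp).2), hcol.1]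
  have h1 : ∀ i j, (i+1, j+1) ∈ colList v ↔ j < partAt μ (i+1) := by
    intro i j
    by_cases hi : i < n
    · have := hr (i+1) (by simp; omega)
      rw [row_len n m _ hpw hb] at this
      exact init_seg m (fun j => (i+1, j+1) ∈ colList v) (hy.1 i)
        (fun j hj => by have := hb _ hj; simp only at this; omega) _ (by convert this) j
    · rw [part_zero μ i (by omega)]
      simp only [not_lt_zero, iff_false]
      intro hm
      have := hb _ hm
      simp only at this
      omega
  have h2 : ∀ i j, (i+1, j+1) ∈ colList v ↔ i < partAt ν (j+1) := by
    intro i j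
    by_cases hi : j < m
    · have := hc (j+1) (by simp; omega)
      rw [col_len n m _ hpw hb] at this
      exact init_seg n (fun i => (i+1, j+1) ∈ colList v) (fun i => hy.2 i j)
        (fun j hj => by have := hb _ hj; simp only at this; omega) _ (by convert this) i
    · rw [part_zero ν j (by omega)]
      simp only [not_lt_zero, iff_false]
      intro hm
      have := hb _ hm
      simp only at this
      omega
  refine ⟨⟨(conj_iff μ ν).2 fun i j => (h1 i j).symm.trans (h2 i j), hmu, hnu⟩,
    (isCol_iff v).1 hcol, h1⟩

theorem imp_good {n m r : ℕ} (μ ν : Nat.Partition r) (v : Fin r → Fin n × Fin m)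
    (hconj : IsConjPart μ ν) (hmu : μ.parts.card ≤ n) (hnu : ν.parts.card ≤ m)
    (hv : StrictMono (fun t => toLex (v t)))
    (h1 : ∀ i j, (i+1, j+1) ∈ colList v ↔ j < partAt μ (i+1)) : Good μ ν v := by
  have hcol := (isCol_iff v).2 hv
  have hpw := pw_of_isCol hcol
  have hb := hcol.2.1
  rw [conj_iff] at hconj
  have h2 : ∀ i j, (i+1, j+1) ∈ colList v ↔ i < partAt ν (j+1) :=
    fun i j => (h1 i j).trans (hconj i j)
  have e : ∀ N c : ℕ, c ≤ N → ((Finset.range N).filter fun j => j < c).card = c := by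
    intro N c h
    have : ((Finset.range N).filter fun j => j < c) = Finset.range c := by
      ext x; simp; omega
    rw [this, Finset.card_range]
  refine ⟨hcol, ?_, ?_, ?_⟩
  · intro i hi
    obtain ⟨i, rfl⟩ : ∃ k, i = k+1 := ⟨i-1, by have := Finset.mem_Icc.1 hi; omega⟩
    rw [row_len n m _ hpw hb]
    simp only [h1]
    apply e
    by_contra hlt
    have := (hconj i m).1 (by omega)
    rw [part_zero ν m hnu] at this
    omega
  · intro i hi
    obtain ⟨i, rfl⟩ : ∃ k, i = k+1 := ⟨i-1, by have := Finset.mem_Icc.1 hi; omega⟩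
    rw [col_len n m _ hpw hb]
    simp only [h2]
    apply e
    by_contra hlt
    have := (hconj n i).2 (by omega)
    rw [part_zero μ n hmu] at this
    omega
  · rw [yam_iff n m _ hpw hb]
    exact ⟨fun i j h => by rw [h1] at *; omega, fun i j h => by rw [h2] at *; omega⟩

theorem good_unique {n m r : ℕ} (μ ν : Nat.Partition r)
    (hconj : IsConjPart μ ν) (hmu : μ.parts.card ≤ n) (hnu : ν.parts.card ≤ m) :
    ∃ v₀ : Fin r → Fin n × Fin m, ∀ v, Good μ ν v ↔ v = v₀ := by
  have hle : ∀ i, partAt μ (i+1) ≤ m := by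
    intro i
    by_contra hlt
    have := ((conj_iff μ ν).1 hconj i m).1 (by omega)
    rw [part_zero ν m hnu] at this
    omega
  let S : Finset (Fin n ×ₗ Fin m) :=
    ((Finset.univ : Finset (Fin n × Fin m)).filter
      fun p => (p.2 : ℕ) < partAt μ ((p.1 : ℕ)+1)).map toLex.toEmbedding
  have hS : ∀ p : Fin n × Fin m, toLex p ∈ S ↔ (p.2 : ℕ) < partAt μ ((p.1 : ℕ)+1) := by
    intro p; simp [S]
  have hcard : S.card = r := by
    rw [Finset.card_map, Finset.card_filter, ← Finset.univ_product_univ, Finset.sum_product]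
    have : ∀ i : Fin n, ∑ j : Fin m, (if (j : ℕ) < partAt μ ((i : ℕ)+1) then 1 else 0)
        = partAt μ ((i : ℕ)+1) := by
      intro i
      rw [Fin.sum_univ_eq_sum_range (fun j => if j < partAt μ ((i : ℕ)+1) then 1 else 0) m,
        ← Finset.card_filter]
      have : ((Finset.range m).filter fun j => j < partAt μ ((i : ℕ)+1))
          = Finset.range (partAt μ ((i : ℕ)+1)) := by
        ext x; have := hle i; simp; omega
      rw [this, Finset.card_range]
    simp only [this]
    rw [Fin.sum_univ_eq_sum_range (fun i => partAt μ (i+1)) n]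
    exact (part_sum μ n).2 hmu
  refine ⟨fun t => ofLex (S.orderEmbOfFin hcard t), fun v => ⟨fun h => ?_, ?_⟩⟩
  · obtain ⟨-, hv, h1⟩ := good_imp μ ν v h
    have := Finset.orderEmbOfFin_unique hcard (f := fun t => toLex (v t)) (fun t => by
      rw [hS, ← h1, mem_colList]; exact ⟨t, rfl, rfl⟩) hv
    funext t
    rw [← this]
    rfl
  · rintro rfl
    apply imp_good μ ν _ hconj hmu hnu
    · exact (S.orderEmbOfFin hcard).strictMono
    · intro i j
      rw [mem_colList]
      constructor
      · rintro ⟨t, rfl, rfl⟩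
        rw [← hS]
        exact Finset.orderEmbOfFin_mem S hcard t
      · intro h
        have hi : i < n := by
          by_contra hc
          rw [part_zero μ i (by omega)] at h
          omega
        have hj : j < m := lt_of_lt_of_le h (hle i)
        have hm : toLex ((⟨i, hi⟩, ⟨j, hj⟩) : Fin n × Fin m) ∈ S := by rw [hS]; exact h
        have hr : toLex ((⟨i, hi⟩, ⟨j, hj⟩) : Fin n × Fin m) ∈ Set.range (S.orderEmbOfFin hcard) := by
          rw [Finset.range_orderEmbOfFin]; exact hm
        obtain ⟨t, ht⟩ := hr
        refine ⟨t, ?_, ?_⟩ <;> rw [ht] <;> rfl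

theorem card_gen_one {α : Type*} [Fintype α] (P : α → Prop) {dp : DecidablePred P} (a : α)
    (h : ∀ v, P v ↔ v = a) : (@Finset.filter α P dp Finset.univ).card = 1 := by
  rw [Finset.card_eq_one]
  refine ⟨a, ?_⟩
  ext v
  simp [h]

theorem card_gen_zero {α : Type*} [Fintype α] (P : α → Prop) {dp : DecidablePred P}
    (h : ∀ v, ¬ P v) : (@Finset.filter α P dp Finset.univ).card = 0 := by
  simp [h]

/-- For partitions `μ, ν ⊢ r`, the number of single-column lexicographic
bitableaux `T ∈ B_{(1^r)}(n,m)` with `a(T) = μ`, `b(T) = ν`, and both `w(T)` and `u'(T)`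
Yamanouchi is `1` if `μ` is the conjugate partition `ν'` of `ν` (with `ℓ(μ) ≤ n` and
`ℓ(ν) ≤ m`), and `0` otherwise. -/
theorem stmt_12 (r n m : ℕ) (hn : 1 ≤ n) (hm : 1 ≤ m) (μ ν : Nat.Partition r) :
    ((Finset.univ : Finset (Fin r → Fin n × Fin m)).filter fun v =>
        IsColBitab n m r (colList v) ∧
        (∀ i ∈ Finset.Icc 1 n, ((colList v).filter fun p => decide (p.1 = i)).length = partAt μ i) ∧
        (∀ j ∈ Finset.Icc 1 m, ((colList v).filter fun p => decide (p.2 = j)).length = partAt ν j) ∧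
        Yamanouchi (wCol n (colList v)) ∧ Yamanouchi (uCol' m (colList v))).card =
      if IsConjPart μ ν ∧ μ.parts.card ≤ n ∧ ν.parts.card ≤ m then 1 else 0 := by

  split_ifs with h
  · obtain ⟨v₀, hv⟩ := good_unique (n := n) (m := m) μ ν h.1 h.2.1 h.2.2
    exact card_gen_one _ v₀ hv
  · exact card_gen_zero _ fun v hv => h (good_imp μ ν v hv).1
end
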